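/- arXiv:1102.1902 — 2 statements merged into one kernel-verified Lean document; each statement's English description precedes it below -/
import Mathlib

section
/- Let z₀ = (z₀,₁, z₀,₂) be a curve with z₀,₁(α) − α and z₀,₂(α) real-analytic and 2π-periodic, satisfying the arc-chord condition, odd, with ∂_α z₀,₁(α) > 0 for α ∉ 2πℤ, ∂_α z₀,₁(0) = 0, ∂_α z₀,₂(0) > 0, and with (∂_α v₁)(0) < 0, where v₁(α) = ∫_{−π}^{π} [sin(z₀,₁(α) − z₀,₁(β)) (∂_α z₀,₁(α) − ∂_β z₀,₁(β))] / [cosh(z₀,₂(α) − z₀,₂(β)) − cos(z₀,₁(α) − z₀,₁(β))] dβ. Then for all small enough T > 0 there exists a real-analytic solution z(α,t) of the periodic Muskat contour equation on [−T, T], satisfying the arc-chord condition, with z(·,0) = z₀, such that: (1) ∂_α z₁(α, −t) > 0 for all α and all t ∈ (0,T]; (2) ∂_α z₁(0, t) < 0 for all t ∈ (0,T]; and in addition ∂_α z₂(0,t) > 0 for all t ∈ [−T,T]. (The interface passes from the stable regime, through a vertical tangent, into the unstable regime.) -/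
open Real MeasureTheory Set

noncomputable section

/-- Distance from `β` to `2πℤ`. -/
def distTZ (β : ℝ) : ℝ := |β - 2 * π * ((round (β / (2 * π)) : ℤ) : ℝ)|

/-- `z(α) - (α, 0)` is `2π`-periodic. -/
def PerCurve (z : ℝ → ℝ × ℝ) : Prop := ∀ α, z (α + 2 * π) = z α + (2 * π, 0)

/-- The denominator `cosh(z₂(α) - z₂(α-β)) - cos(z₁(α) - z₁(α-β))`. -/
def Qden (z : ℝ → ℝ × ℝ) (α β : ℝ) : ℝ :=
  Real.cosh ((z α).2 - (z (α - β)).2) - Real.cos ((z α).1 - (z (α - β)).1)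

/-- Arc-chord condition. -/
def ArcChord (z : ℝ → ℝ × ℝ) : Prop :=
  ∃ C > 0, ∀ α β : ℝ, distTZ β ^ 2 ≤ C * (2 * Qden z α β)

/-- Right-hand side of the periodic Muskat contour equation (ρ² - ρ¹ = 4π). -/
def muskatRHS (z : ℝ → ℝ × ℝ) (α : ℝ) : ℝ × ℝ :=
  ∫ β in (-π)..π,
    (Real.sin ((z α).1 - (z (α - β)).1) / Qden z α β) • (deriv z α - deriv z (α - β))

/-- `z` solves the periodic Muskat contour equation on the time set `I`. -/
def IsMuskatSol (z : ℝ → ℝ → ℝ × ℝ) (I : Set ℝ) : Prop :=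
  ∀ t ∈ I, ∀ α : ℝ, HasDerivWithinAt (fun s => z s α) (muskatRHS (z t) α) I t

/-- The horizontal component of the Muskat velocity (ρ² - ρ¹ = 4π). -/
def v1 (z : ℝ → ℝ × ℝ) (α : ℝ) : ℝ :=
  ∫ β in (-π)..π,
    Real.sin ((z α).1 - (z β).1)
      * (deriv (fun a => (z a).1) α - deriv (fun a => (z a).1) β)
      / (Real.cosh ((z α).2 - (z β).2) - Real.cos ((z α).1 - (z β).1))

set_option linter.unusedSectionVars false

section Generic
variable {E : Type*} [NormedAddCommGroup E] [NormedSpace ℂ E] [CompleteSpace E]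

theorem contOn_deriv {G : ℝ → ℂ → E} {W : Set (ℝ × ℂ)} (hW : IsOpen W)
    (hc : ContinuousOn (fun p : ℝ × ℂ => G p.1 p.2) W)
    (hd : ∀ p ∈ W, DifferentiableAt ℂ (G p.1) p.2) :
    ContinuousOn (fun p : ℝ × ℂ => deriv (G p.1) p.2) W := by
  rintro ⟨x₀, ζ₀⟩ hp
  apply ContinuousAt.continuousWithinAt
  obtain ⟨r, hr, hrW⟩ := Metric.nhds_basis_closedBall.mem_iff.1 (hW.mem_nhds hp)
  have hmem : ∀ x ζ, |x - x₀| ≤ r → ‖ζ - ζ₀‖ ≤ r → (x, ζ) ∈ Metric.closedBall (x₀, ζ₀) r := by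
    intro x ζ h1 h2
    rw [Metric.mem_closedBall, Prod.dist_eq, max_le_iff]
    exact ⟨by simpa [Real.dist_eq] using h1, by simpa [dist_eq_norm] using h2⟩
  have huc := (isCompact_closedBall (x₀, ζ₀) r).uniformContinuousOn_of_continuous (hc.mono hrW)
  rw [Metric.uniformContinuousOn_iff] at huc
  have hcd : ContinuousAt (deriv (G x₀)) ζ₀ := by
    have : DifferentiableOn ℂ (G x₀) (Metric.ball ζ₀ r) := by
      intro ζ hζ
      apply DifferentiableAt.differentiableWithinAt
      exact hd (x₀, ζ) (hrW (hmem _ _ (by simpa using hr.le)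
        (by rw [← dist_eq_norm]; exact (Metric.mem_ball.1 hζ).le)))
    exact ((this.deriv Metric.isOpen_ball).differentiableAt
      (Metric.isOpen_ball.mem_nhds (Metric.mem_ball_self hr))).continuousAt
  rw [Metric.continuousAt_iff] at hcd ⊢
  intro e he
  obtain ⟨δ, hδ, h1⟩ := huc (e / 2 * (r / 2) / 2) (by positivity)
  obtain ⟨δ2, hδ2, h2⟩ := hcd (e / 2) (by positivity)
  refine ⟨min (min δ δ2) (r / 2), by positivity, ?_⟩
  rintro ⟨x, ζ⟩ hx
  rw [Prod.dist_eq, max_lt_iff] at hx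
  obtain ⟨hx1, hx2⟩ := hx
  simp only [lt_min_iff] at hx1 hx2
  rw [Real.dist_eq] at hx1
  rw [dist_eq_norm] at hx2
  have hball : ∀ w ∈ Metric.closedBall ζ (r / 2), ‖w - ζ₀‖ ≤ r := by
    intro w hw
    rw [Metric.mem_closedBall, dist_eq_norm] at hw
    calc ‖w - ζ₀‖ = ‖(w - ζ) + (ζ - ζ₀)‖ := by congr 1; ring
      _ ≤ r / 2 + r / 2 := (norm_add_le _ _).trans (add_le_add hw hx2.2.le)
      _ = r := by ring
  have hdx : ∀ w ∈ Metric.closedBall ζ (r / 2), DifferentiableAt ℂ (G x) w := fun w hw =>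
    hd (x, w) (hrW (hmem _ _ (by linarith [hx1.2]) (hball w hw)))
  have hdx0 : ∀ w ∈ Metric.closedBall ζ (r / 2), DifferentiableAt ℂ (G x₀) w := fun w hw =>
    hd (x₀, w) (hrW (hmem _ _ (by simpa using hr.le) (hball w hw)))
  have hζ : ζ ∈ Metric.closedBall ζ (r / 2) := Metric.mem_closedBall_self (by positivity)
  have key : ‖deriv (fun w => G x w - G x₀ w) ζ‖ ≤ (e / 2 * (r / 2) / 2) / (r / 2) := by
    apply Complex.norm_deriv_le_of_forall_mem_sphere_norm_le (by positivity)
    · apply DifferentiableOn.diffContOnCl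
      rw [closure_ball _ (by positivity)]
      exact fun w hw => ((hdx w hw).sub (hdx0 w hw)).differentiableWithinAt
    · intro w hw
      have hw' := Metric.sphere_subset_closedBall hw
      rw [← dist_eq_norm]
      refine (h1 (x, w) (hmem _ _ (by linarith [hx1.2]) (hball w hw')) (x₀, w)
        (hmem _ _ (by simpa using hr.le) (hball w hw')) ?_).le
      rw [Prod.dist_eq, Real.dist_eq, dist_self]
      exact max_lt hx1.1.1 hδ
  rw [deriv_fun_sub (hdx ζ hζ) (hdx0 ζ hζ)] at key
  have h3 := h2 (x := ζ) (by rw [dist_eq_norm]; exact hx2.1.2)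
  have h4 : (e / 2 * (r / 2) / 2) / (r / 2) = e / 4 := by field_simp; ring
  rw [h4, ← dist_eq_norm] at key
  calc dist (deriv (G x) ζ) (deriv (G x₀) ζ₀) ≤ _ := dist_triangle _ (deriv (G x₀) ζ) _
    _ < e := by linarith

theorem hasDerivAt_param {G : ℝ → ℂ → E} {W : Set (ℝ × ℂ)} (hW : IsOpen W)
    (hc : ContinuousOn (fun p : ℝ × ℂ => G p.1 p.2) W)
    (hd : ∀ p ∈ W, DifferentiableAt ℂ (G p.1) p.2) {a b : ℝ} {ζ₀ : ℂ}
    (hab : ∀ x ∈ uIcc a b, (x, ζ₀) ∈ W) :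
    HasDerivAt (fun ζ => ∫ x in a..b, G x ζ) (∫ x in a..b, deriv (G x) ζ₀) ζ₀ := by
  have hcd := contOn_deriv hW hc hd
  obtain ⟨u, v, hu, hv, hau, hbv, huv⟩ := generalized_tube_lemma (s := uIcc a b) isCompact_uIcc
    (t := {ζ₀}) isCompact_singleton hW (by rintro ⟨x, ζ⟩ ⟨h1, h2⟩; rw [mem_singleton_iff] at h2; simp only at h1 h2; subst h2; exact hab x h1)
  obtain ⟨r, hr, hrv⟩ := Metric.nhds_basis_closedBall.mem_iff.1 (hv.mem_nhds (hbv rfl))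
  have hsub : uIcc a b ×ˢ Metric.closedBall ζ₀ r ⊆ W := by
    rintro ⟨x, ζ⟩ ⟨h1, h2⟩; exact huv ⟨hau h1, hrv h2⟩
  have hK : IsCompact (uIcc a b ×ˢ Metric.closedBall ζ₀ r) :=
    isCompact_uIcc.prod (isCompact_closedBall _ _)
  obtain ⟨C, hC⟩ := hK.exists_bound_of_continuousOn (hcd.mono hsub)
  have slice : ∀ {f : ℝ × ℂ → E} (_ : ContinuousOn f W) (ζ : ℂ), ζ ∈ Metric.closedBall ζ₀ r →
      ContinuousOn (fun x => f (x, ζ)) (uIcc a b) := by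
    intro f hf ζ hζ
    exact hf.comp (by fun_prop) (fun x hx => hsub ⟨hx, hζ⟩)
  have hζ₀ : ζ₀ ∈ Metric.closedBall ζ₀ r := Metric.mem_closedBall_self hr.le
  refine (intervalIntegral.hasDerivAt_integral_of_dominated_loc_of_deriv_le
    (F := fun ζ x => G x ζ) (F' := fun ζ x => deriv (G x) ζ) (s := Metric.closedBall ζ₀ r)
    (bound := fun _ => C) (Metric.closedBall_mem_nhds _ hr) ?_ ?_ ?_ ?_ ?_ ?_).2
  · filter_upwards [Metric.closedBall_mem_nhds _ hr] with ζ hζ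
    exact ((slice hc ζ hζ).mono uIoc_subset_uIcc).aestronglyMeasurable measurableSet_uIoc
  · exact (slice hc ζ₀ hζ₀).intervalIntegrable
  · exact ((slice hcd ζ₀ hζ₀).mono uIoc_subset_uIcc).aestronglyMeasurable measurableSet_uIoc
  · exact Filter.Eventually.of_forall fun x hx ζ hζ => hC (x, ζ) ⟨uIoc_subset_uIcc hx, hζ⟩
  · simp
  · exact Filter.Eventually.of_forall fun x hx ζ hζ =>
      (hd (x, ζ) (hsub ⟨uIoc_subset_uIcc hx, hζ⟩)).hasDerivAt

theorem contOn_param {X : Type*} [TopologicalSpace X] [FirstCountableTopology X] [LocallyCompactSpace X]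
    {f : X → ℝ → E} {U : Set X} (hU : IsOpen U)
    (hf : ContinuousOn (fun p : X × ℝ => f p.1 p.2) (U ×ˢ univ)) (a b : ℝ) :
    ContinuousOn (fun x => ∫ t in a..b, f x t) U := by
  rw [continuousOn_iff_continuous_domRestrict]
  have : LocallyCompactSpace U := hU.locallyCompactSpace
  have : Continuous (Function.uncurry (fun (x : U) (t : ℝ) => f x t)) := by
    have h2 : Continuous (fun p : U × ℝ => ((p.1 : X), p.2)) := by fun_prop
    exact hf.comp_continuous h2 (fun p => ⟨p.1.2, trivial⟩)
  exact intervalIntegral.continuous_parametric_intervalIntegral_of_continuous' this a b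

/-- Nagumo's lemma with exponent 1/2. -/
theorem nagumo {f : ℂ → E} {ρ A : ℝ} (hf : ∀ ζ : ℂ, |ζ.im| < ρ → DifferentiableAt ℂ f ζ)
    (hb : ∀ ζ : ℂ, |ζ.im| < ρ → ‖f ζ‖ ≤ A / √(ρ - |ζ.im|)) {ζ : ℂ} (hζ : |ζ.im| < ρ) :
    ‖deriv f ζ‖ ≤ 3 * A / (√(ρ - |ζ.im|)) ^ 3 := by
  set d := ρ - |ζ.im| with hd
  have hdpos : 0 < d := by linarith
  have hA : 0 ≤ A := by
    have h := (norm_nonneg _).trans (hb ζ hζ)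
    have h2 : 0 < √d := Real.sqrt_pos.2 hdpos
    rw [← hd] at h
    by_contra hneg
    push Not at hneg
    linarith [div_neg_of_neg_of_pos hneg h2]
  have him : ∀ w ∈ Metric.closedBall ζ (d / 2), |w.im| ≤ |ζ.im| + d / 2 := by
    intro w hw
    rw [Metric.mem_closedBall, dist_eq_norm] at hw
    have h1 := (Complex.abs_im_le_norm (w - ζ)).trans hw
    rw [Complex.sub_im] at h1
    have := abs_sub_abs_le_abs_sub w.im ζ.im
    linarith
  have key : ‖deriv f ζ‖ ≤ (A / √(d / 2)) / (d / 2) := by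
    apply Complex.norm_deriv_le_of_forall_mem_sphere_norm_le (by positivity)
    · apply DifferentiableOn.diffContOnCl
      rw [closure_ball _ (by positivity)]
      exact fun w hw => (hf w (by linarith [him w hw])).differentiableWithinAt
    · intro w hw
      have := him w (Metric.sphere_subset_closedBall hw)
      refine (hb w (by linarith)).trans ?_
      have h2 : 0 < √(d / 2) := Real.sqrt_pos.2 (by positivity)
      exact div_le_div_of_nonneg_left hA h2 (Real.sqrt_le_sqrt (by linarith))
  refine key.trans ?_
  have hs : √d = √2 * √(d / 2) := by
    rw [← Real.sqrt_mul (by norm_num)]; congr 1; ring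
  have hs1 : 0 < √(d / 2) := Real.sqrt_pos.2 (by positivity)
  have hs2 : √(d / 2) ^ 2 = d / 2 := Real.sq_sqrt (by positivity)
  have h22 : √2 ^ 2 = (2 : ℝ) := Real.sq_sqrt (by norm_num)
  have h23 : √2 ≤ 3 / 2 := by rw [Real.sqrt_le_left (by norm_num)]; norm_num
  have h24 : 0 < √2 := by positivity
  have hs3 : A / √(d / 2) / (d / 2) = A / √(d / 2) / √(d / 2) ^ 2 := by rw [hs2]
  rw [hs3, hs, div_div, div_le_div_iff₀ (by positivity) (by positivity)]
  have : (√2 * √(d / 2)) ^ 3 = 2 * √2 * (√(d / 2) * √(d / 2) ^ 2) := by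
    calc _ = √2 ^ 2 * √2 * (√(d / 2) * √(d / 2) ^ 2) := by ring
      _ = _ := by rw [h22]
  rw [this]
  have h5 : 0 ≤ A * (√(d / 2) * √(d / 2) ^ 2) := by positivity
  nlinarith

end Generic

section TimeInt
variable {E : Type*} [NormedAddCommGroup E] [NormedSpace ℝ E]

/-- comparison for integrals from `0` to `t`, dominated by a derivative in `|s|`. -/
theorem norm_integral_le_abs {g : ℝ → E} {Φ φ : ℝ → ℝ} {t : ℝ}
    (hb : ∀ s, |s| ≤ |t| → ‖g s‖ ≤ φ |s|)
    (hΦ : ∀ s, 0 ≤ s → s ≤ |t| → HasDerivAt Φ (φ s) s)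
    (hφ : ContinuousOn φ (Icc 0 |t|)) :
    ‖∫ s in (0 : ℝ)..t, g s‖ ≤ Φ |t| - Φ 0 := by
  have hφi : IntervalIntegrable φ volume 0 |t| :=
    ContinuousOn.intervalIntegrable (by rwa [uIcc_of_le (abs_nonneg t)])
  have main : ∀ g : ℝ → E, (∀ s, |s| ≤ |t| → ‖g s‖ ≤ φ |s|) →
      ‖∫ s in (0 : ℝ)..|t|, g s‖ ≤ Φ |t| - Φ 0 := by
    intro g hb
    have h1 : ‖∫ s in (0 : ℝ)..|t|, g s‖ ≤ ∫ s in (0 : ℝ)..|t|, φ s := by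
      apply intervalIntegral.norm_integral_le_of_norm_le (abs_nonneg t) _ hφi
      refine Filter.Eventually.of_forall fun s hs => ?_
      have h := hb s (by rw [abs_of_pos hs.1]; exact hs.2)
      rwa [abs_of_pos hs.1] at h
    rwa [intervalIntegral.integral_eq_sub_of_hasDerivAt _ hφi] at h1
    intro s hs
    rw [uIcc_of_le (abs_nonneg t)] at hs
    exact hΦ s hs.1 hs.2
  rcases le_total 0 t with h | h
  · have := main g hb
    rwa [abs_of_nonneg h] at this ⊢
  · have := main (fun s => g (-s)) (fun s hs => by
      have := hb (-s) (by rwa [abs_neg]); rwa [abs_neg] at this)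
    rw [intervalIntegral.integral_comp_neg (fun s => g s)] at this
    rw [abs_of_nonpos h] at this ⊢
    rw [neg_neg, neg_zero, intervalIntegral.integral_symm, norm_neg] at this
    exact this

theorem time_int_three {g : ℝ → E} {t κ c K : ℝ} (hκ : 0 < κ) (hK : 0 ≤ K) (hc : κ * |t| < c)
    (hb : ∀ s, |s| ≤ |t| → ‖g s‖ ≤ K / (√(c - κ * |s|)) ^ 3) :
    ‖∫ s in (0 : ℝ)..t, g s‖ ≤ 2 * K / κ / √(c - κ * |t|) := by
  have hpos : ∀ s, s ≤ |t| → 0 < c - κ * s := fun s hs => by nlinarith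
  have h := norm_integral_le_abs (g := g) (Φ := fun s => 2 * K / κ * (√(c - κ * s))⁻¹)
    (φ := fun s => K / (√(c - κ * s)) ^ 3) (t := t) hb ?_ ?_
  · refine h.trans ?_
    rw [div_eq_mul_inv _ (√_)]
    have : 0 ≤ 2 * K / κ * (√(c - κ * 0))⁻¹ := by positivity
    linarith
  · intro s _ hs
    have hp := hpos s hs
    have hsq : 0 < √(c - κ * s) := Real.sqrt_pos.2 hp
    have h1 : HasDerivAt (fun s => c - κ * s) (-κ) s := by
      simpa using ((hasDerivAt_id s).const_mul κ).const_sub c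
    have h2 := ((h1.sqrt hp.ne').inv hsq.ne').const_mul (2 * K / κ)
    exact h2.congr_deriv (by field_simp)
  · refine ContinuousOn.div continuousOn_const (by fun_prop) ?_
    intro s hs
    have := Real.sqrt_pos.2 (hpos s hs.2)
    positivity

theorem time_int_one {g : ℝ → E} {t κ c K : ℝ} (hκ : 0 < κ) (hK : 0 ≤ K) (hc : κ * |t| < c)
    (hb : ∀ s, |s| ≤ |t| → ‖g s‖ ≤ K / (√(c - κ * |s|))) :
    ‖∫ s in (0 : ℝ)..t, g s‖ ≤ 2 * K / κ * √c := by
  have hpos : ∀ s, s ≤ |t| → 0 < c - κ * s := fun s hs => by nlinarith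
  have h := norm_integral_le_abs (g := g) (Φ := fun s => -(2 * K / κ) * (√(c - κ * s)))
    (φ := fun s => K / (√(c - κ * s))) (t := t) hb ?_ ?_
  · refine h.trans ?_
    have : 0 ≤ 2 * K / κ * (√(c - κ * |t|)) := by positivity
    simp only [mul_zero, sub_zero]
    linarith
  · intro s _ hs
    have hp := hpos s hs
    have hsq : 0 < √(c - κ * s) := Real.sqrt_pos.2 hp
    have h1 : HasDerivAt (fun s => c - κ * s) (-κ) s := by
      simpa using ((hasDerivAt_id s).const_mul κ).const_sub c
    have h2 := ((h1.sqrt hp.ne')).const_mul (-(2 * K / κ))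
    exact h2.congr_deriv (by field_simp)
  · refine ContinuousOn.div continuousOn_const (by fun_prop) ?_
    intro s hs
    have := Real.sqrt_pos.2 (hpos s hs.2)
    positivity

end TimeInt

/-- complexified denominator -/
def Dk (p : ℂ × ℂ) : ℂ := Complex.cosh p.2 - Complex.cos p.1

/-- complexified kernel -/
def kk (p : ℂ × ℂ) : ℂ := Complex.sin p.1 / Dk p

theorem norm_cosh_le (z : ℂ) : ‖Complex.cosh z‖ ≤ Real.exp |z.re| := by
  rw [Complex.cosh, norm_div, Complex.norm_ofNat]
  have h1 := norm_add_le (Complex.exp z) (Complex.exp (-z))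
  rw [Complex.norm_exp, Complex.norm_exp, Complex.neg_re] at h1
  have h2 : Real.exp z.re ≤ Real.exp |z.re| := Real.exp_le_exp.2 (le_abs_self _)
  have h3 : Real.exp (-z.re) ≤ Real.exp |z.re| := Real.exp_le_exp.2 (neg_le_abs _)
  rw [div_le_iff₀ (by norm_num)]
  linarith

theorem norm_sinh_le (z : ℂ) : ‖Complex.sinh z‖ ≤ Real.exp |z.re| := by
  rw [Complex.sinh, norm_div, Complex.norm_ofNat]
  have h1 := norm_sub_le (Complex.exp z) (Complex.exp (-z))
  rw [Complex.norm_exp, Complex.norm_exp, Complex.neg_re] at h1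
  have h2 : Real.exp z.re ≤ Real.exp |z.re| := Real.exp_le_exp.2 (le_abs_self _)
  have h3 : Real.exp (-z.re) ≤ Real.exp |z.re| := Real.exp_le_exp.2 (neg_le_abs _)
  rw [div_le_iff₀ (by norm_num)]
  linarith

theorem norm_cos_le (z : ℂ) : ‖Complex.cos z‖ ≤ Real.exp |z.im| := by
  have := norm_cosh_le (z * Complex.I)
  rw [Complex.cosh_mul_I] at this
  simpa using this

theorem norm_sin_le (z : ℂ) : ‖Complex.sin z‖ ≤ Real.exp |z.im| := by
  have := norm_sinh_le (z * Complex.I)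
  rw [Complex.sinh_mul_I] at this
  simpa using this

theorem convex_im_strip (M : ℝ) : Convex ℝ {z : ℂ | |z.im| ≤ M} := by
  have : {z : ℂ | |z.im| ≤ M} = Complex.imCLM ⁻¹' (Icc (-M) M) := by
    ext z; simp [abs_le]
  rw [this]
  exact (convex_Icc _ _).linear_preimage Complex.imCLM.toLinearMap

theorem convex_re_strip (M : ℝ) : Convex ℝ {z : ℂ | |z.re| ≤ M} := by
  have : {z : ℂ | |z.re| ≤ M} = Complex.reCLM ⁻¹' (Icc (-M) M) := by
    ext z; simp [abs_le]
  rw [this]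
  exact (convex_Icc _ _).linear_preimage Complex.reCLM.toLinearMap

theorem sin_lip {M : ℝ} {a b : ℂ} (ha : |a.im| ≤ M) (hb : |b.im| ≤ M) :
    ‖Complex.sin a - Complex.sin b‖ ≤ Real.exp M * ‖a - b‖ := by
  refine (convex_im_strip M).norm_image_sub_le_of_norm_deriv_le (𝕜 := ℂ)
    (fun x _ => Complex.differentiable_sin x) (fun x hx => ?_) hb ha
  rw [Complex.deriv_sin]
  exact (norm_cos_le x).trans (Real.exp_le_exp.2 hx)

theorem cos_lip {M : ℝ} {a b : ℂ} (ha : |a.im| ≤ M) (hb : |b.im| ≤ M) :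
    ‖Complex.cos a - Complex.cos b‖ ≤ Real.exp M * ‖a - b‖ := by
  refine (convex_im_strip M).norm_image_sub_le_of_norm_deriv_le (𝕜 := ℂ)
    (fun x _ => Complex.differentiable_cos x) (fun x hx => ?_) hb ha
  rw [Complex.deriv_cos, norm_neg]
  exact (norm_sin_le x).trans (Real.exp_le_exp.2 hx)

theorem cosh_lip {M : ℝ} {a b : ℂ} (ha : |a.re| ≤ M) (hb : |b.re| ≤ M) :
    ‖Complex.cosh a - Complex.cosh b‖ ≤ Real.exp M * ‖a - b‖ := by
  refine (convex_re_strip M).norm_image_sub_le_of_norm_deriv_le (𝕜 := ℂ)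
    (fun x _ => Complex.differentiable_cosh x) (fun x hx => ?_) hb ha
  rw [Complex.deriv_cosh]
  exact (norm_sinh_le x).trans (Real.exp_le_exp.2 hx)

theorem Dk_lip {M : ℝ} {p q : ℂ × ℂ} (hp1 : |p.1.im| ≤ M) (hp2 : |p.2.re| ≤ M)
    (hq1 : |q.1.im| ≤ M) (hq2 : |q.2.re| ≤ M) :
    ‖Dk p - Dk q‖ ≤ 2 * Real.exp M * ‖p - q‖ := by
  have h1 := cos_lip hp1 hq1
  have h2 := cosh_lip hp2 hq2
  have h3 : ‖p.1 - q.1‖ ≤ ‖p - q‖ := norm_fst_le (p - q)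
  have h4 : ‖p.2 - q.2‖ ≤ ‖p - q‖ := norm_snd_le (p - q)
  have e : Dk p - Dk q = (Complex.cosh p.2 - Complex.cosh q.2) - (Complex.cos p.1 - Complex.cos q.1) := by
    simp only [Dk]; ring
  rw [e]
  have h5 := norm_sub_le (Complex.cosh p.2 - Complex.cosh q.2) (Complex.cos p.1 - Complex.cos q.1)
  have := Real.exp_pos M
  nlinarith

theorem kk_bound {M c : ℝ} (hc : 0 < c) {p : ℂ × ℂ} (hp1 : |p.1.im| ≤ M) (hD : c ≤ ‖Dk p‖) :
    ‖kk p‖ ≤ Real.exp M / c := by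
  rw [kk, norm_div]
  exact div_le_div₀ (Real.exp_pos M).le ((norm_sin_le _).trans (Real.exp_le_exp.2 hp1)) hc hD

theorem kk_lip {M c : ℝ} (hc : 0 < c) {p q : ℂ × ℂ} (hp1 : |p.1.im| ≤ M) (hp2 : |p.2.re| ≤ M)
    (hq1 : |q.1.im| ≤ M) (hq2 : |q.2.re| ≤ M) (hDp : c ≤ ‖Dk p‖) (hDq : c ≤ ‖Dk q‖) :
    ‖kk p - kk q‖ ≤ (Real.exp M / c + 2 * Real.exp M ^ 2 / c ^ 2) * ‖p - q‖ := by
  have hp0 : Dk p ≠ 0 := by intro h; rw [h, norm_zero] at hDp; linarith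
  have hq0 : Dk q ≠ 0 := by intro h; rw [h, norm_zero] at hDq; linarith
  have e : kk p - kk q = (Complex.sin p.1 - Complex.sin q.1) / Dk p
      - Complex.sin q.1 * (Dk p - Dk q) / (Dk p * Dk q) := by
    simp only [kk]; field_simp; ring
  have hE := Real.exp_pos M
  have h1 : ‖(Complex.sin p.1 - Complex.sin q.1) / Dk p‖ ≤ Real.exp M * ‖p - q‖ / c := by
    rw [norm_div]
    refine div_le_div₀ (by positivity) ((sin_lip hp1 hq1).trans ?_) hc hDp
    gcongr
    exact norm_fst_le (p - q)
  have h2 : ‖Complex.sin q.1 * (Dk p - Dk q) / (Dk p * Dk q)‖ ≤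
      Real.exp M * (2 * Real.exp M * ‖p - q‖) / (c * c) := by
    rw [norm_div, norm_mul, norm_mul]
    refine div_le_div₀ (by positivity) ?_ (by positivity) ?_
    · exact mul_le_mul ((norm_sin_le _).trans (Real.exp_le_exp.2 hq1)) (Dk_lip hp1 hp2 hq1 hq2)
        (norm_nonneg _) hE.le
    · exact mul_le_mul hDp hDq hc.le (norm_nonneg _)
  rw [e]
  refine (norm_sub_le _ _).trans ((add_le_add h1 h2).trans (le_of_eq ?_))
  field_simp

theorem Dk_add_int (p : ℂ × ℂ) (k : ℤ) : Dk (p + (((2 * π * k : ℝ) : ℂ), (0 : ℂ))) = Dk p := by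
  simp only [Dk, Prod.fst_add, Prod.snd_add, add_zero]
  congr 1
  have := Complex.cos_add_int_mul_two_pi p.1 k
  rw [← this]; congr 1; push_cast; ring

theorem sin_add_int (a : ℂ) (k : ℤ) : Complex.sin (a + ((2 * π * k : ℝ) : ℂ)) = Complex.sin a := by
  have := Complex.sin_add_int_mul_two_pi a k
  rw [← this]; congr 1; push_cast; ring

theorem kk_add_int (p : ℂ × ℂ) (k : ℤ) : kk (p + (((2 * π * k : ℝ) : ℂ), (0 : ℂ))) = kk p := by
  rw [kk, Dk_add_int, kk, Prod.fst_add, sin_add_int]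

theorem Dk_differentiable : Differentiable ℂ Dk := by
  unfold Dk
  exact (Complex.differentiable_cosh.comp differentiable_snd).sub
    (Complex.differentiable_cos.comp differentiable_fst)

theorem Dk_continuous : Continuous Dk := Dk_differentiable.continuous

theorem kk_differentiableAt {p : ℂ × ℂ} (h : Dk p ≠ 0) : DifferentiableAt ℂ kk p := by
  have e : kk = fun p : ℂ × ℂ => Complex.sin p.1 * (Dk p)⁻¹ := by
    funext p; rw [kk, div_eq_mul_inv]
  rw [e]
  exact ((Complex.differentiable_sin.comp differentiable_fst) p).mul ((Dk_differentiable p).inv h)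

/-- Quadratic-type Lipschitz estimate. -/
theorem Dk_quad {N : ℝ} {p q : ℂ × ℂ} (hp : ‖p‖ ≤ N) (hq : ‖q‖ ≤ N) :
    ‖Dk p - Dk q‖ ≤ 2 * Real.exp N * (‖p‖ + ‖q‖) * ‖p - q‖ := by
  set r := ‖p‖ + ‖q‖ with hr
  have hN : 0 ≤ N := (norm_nonneg p).trans hp
  have cv : Convex ℝ (Metric.closedBall (0 : ℂ) (min r N)) := convex_closedBall _ _
  have zmem : (0 : ℂ) ∈ Metric.closedBall (0 : ℂ) (min r N) := by
    apply Metric.mem_closedBall_self; positivity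
  have hpm : ∀ x : ℂ, x ∈ Metric.closedBall (0 : ℂ) (min r N) → ‖x‖ ≤ r ∧ ‖x‖ ≤ N := by
    intro x hx; simpa using hx
  have sh : ∀ x ∈ Metric.closedBall (0 : ℂ) (min r N), ‖Complex.sinh x‖ ≤ Real.exp N * r := by
    intro x hx
    have := cv.norm_image_sub_le_of_norm_deriv_le (𝕜 := ℂ) (f := Complex.sinh) (C := Real.exp N)
      (fun x _ => Complex.differentiable_sinh x) (fun x hx => by
        rw [Complex.deriv_sinh]
        exact (norm_cosh_le x).trans (Real.exp_le_exp.2 ((Complex.abs_re_le_norm x).trans (hpm x hx).2)))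
      zmem hx
    simp only [Complex.sinh_zero, sub_zero] at this
    refine this.trans ?_
    gcongr
    exact (hpm x hx).1
  have sn : ∀ x ∈ Metric.closedBall (0 : ℂ) (min r N), ‖Complex.sin x‖ ≤ Real.exp N * r := by
    intro x hx
    have := sh (x * Complex.I) (by simpa using hx)
    rw [Complex.sinh_mul_I] at this
    simpa using this
  have key1 : ∀ a b, a ∈ Metric.closedBall (0 : ℂ) (min r N) → b ∈ Metric.closedBall (0 : ℂ) (min r N) →
      ‖Complex.cosh a - Complex.cosh b‖ ≤ Real.exp N * r * ‖a - b‖ := fun a b ha hb =>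
    cv.norm_image_sub_le_of_norm_deriv_le (𝕜 := ℂ)
      (fun x _ => Complex.differentiable_cosh x) (fun x hx => by
        rw [Complex.deriv_cosh]; exact sh x hx) hb ha
  have key2 : ∀ a b, a ∈ Metric.closedBall (0 : ℂ) (min r N) → b ∈ Metric.closedBall (0 : ℂ) (min r N) →
      ‖Complex.cos a - Complex.cos b‖ ≤ Real.exp N * r * ‖a - b‖ := fun a b ha hb =>
    cv.norm_image_sub_le_of_norm_deriv_le (𝕜 := ℂ)
      (fun x _ => Complex.differentiable_cos x) (fun x hx => by
        rw [Complex.deriv_cos, norm_neg]; exact sn x hx) hb ha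
  have mem : ∀ x : ℂ, ‖x‖ ≤ ‖p‖ ∨ ‖x‖ ≤ ‖q‖ → x ∈ Metric.closedBall (0 : ℂ) (min r N) := by
    intro x hx
    rw [mem_closedBall_zero_iff, le_min_iff]
    have := norm_nonneg p
    have := norm_nonneg q
    rcases hx with h | h <;> constructor <;> linarith
  have h1 := key1 p.2 q.2 (mem _ (Or.inl (norm_snd_le p))) (mem _ (Or.inr (norm_snd_le q)))
  have h2 := key2 p.1 q.1 (mem _ (Or.inl (norm_fst_le p))) (mem _ (Or.inr (norm_fst_le q)))
  have h3 : ‖p.1 - q.1‖ ≤ ‖p - q‖ := norm_fst_le (p - q)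
  have h4 : ‖p.2 - q.2‖ ≤ ‖p - q‖ := norm_snd_le (p - q)
  have e : Dk p - Dk q = (Complex.cosh p.2 - Complex.cosh q.2) - (Complex.cos p.1 - Complex.cos q.1) := by
    simp only [Dk]; ring
  rw [e]
  have h5 := norm_sub_le (Complex.cosh p.2 - Complex.cosh q.2) (Complex.cos p.1 - Complex.cos q.1)
  have h6 : 0 ≤ Real.exp N * r := by positivity
  nlinarith

theorem cosh_taylor (x : ℂ) : ‖Complex.cosh x - (1 + x ^ 2 / 2)‖ ≤ ‖x‖ ^ 3 * Real.exp ‖x‖ := by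
  have h1 := Complex.norm_exp_sub_sum_le_norm_mul_exp x 3
  have h2 := Complex.norm_exp_sub_sum_le_norm_mul_exp (-x) 3
  rw [norm_neg] at h2
  have e : Complex.cosh x - (1 + x ^ 2 / 2) =
      ((Complex.exp x - ∑ m ∈ Finset.range 3, x ^ m / (m.factorial : ℂ)) +
       (Complex.exp (-x) - ∑ m ∈ Finset.range 3, (-x) ^ m / (m.factorial : ℂ))) / 2 := by
    simp only [Complex.cosh, Finset.sum_range_succ, Finset.sum_range_zero, Nat.factorial]
    push_cast
    ring
  rw [e, norm_div, Complex.norm_ofNat, div_le_iff₀ (by norm_num)]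
  refine (norm_add_le _ _).trans ?_
  linarith

theorem Dk_taylor {N : ℝ} {p : ℂ × ℂ} (hp : ‖p‖ ≤ N) :
    ‖Dk p - (p.1 ^ 2 + p.2 ^ 2) / 2‖ ≤ 2 * Real.exp N * ‖p‖ ^ 3 := by
  have h1 := cosh_taylor p.2
  have h2 := cosh_taylor (p.1 * Complex.I)
  rw [Complex.cosh_mul_I, norm_mul, Complex.norm_I, mul_one] at h2
  have e : Dk p - (p.1 ^ 2 + p.2 ^ 2) / 2 = (Complex.cosh p.2 - (1 + p.2 ^ 2 / 2)) -
      (Complex.cos p.1 - (1 + (p.1 * Complex.I) ^ 2 / 2)) := by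
    simp only [Dk, mul_pow, Complex.I_sq]; ring
  have h3 : ‖p.1‖ ^ 3 * Real.exp ‖p.1‖ ≤ ‖p‖ ^ 3 * Real.exp N := by
    have := norm_fst_le p
    gcongr; linarith
  have h4 : ‖p.2‖ ^ 3 * Real.exp ‖p.2‖ ≤ ‖p‖ ^ 3 * Real.exp N := by
    have := norm_snd_le p
    gcongr; linarith
  rw [e]
  refine (norm_sub_le _ _).trans ?_
  linarith

/-- Complexified initial curve with its quantitative arc-chord property. -/
structure Base (Z : ℂ → ℂ × ℂ) (R η c M ε : ℝ) : Prop where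
  Rpos : 0 < R
  ηpos : 0 < η
  cpos : 0 < c
  Mnn : 0 ≤ M
  εpos : 0 < ε
  ε1 : 8 * ε ≤ η * R
  ε2 : ε ≤ η * √(R / 4)
  ε3 : ε ≤ 1
  diff : ∀ ζ : ℂ, |ζ.im| < R → DifferentiableAt ℂ Z ζ
  per : ∀ ζ : ℂ, |ζ.im| < R → Z (ζ + ((2 * π : ℝ) : ℂ)) = Z ζ + (((2 * π : ℝ) : ℂ), 0)
  real : ∀ x : ℝ, (Z x).1.im = 0 ∧ (Z x).2.im = 0
  bd1 : ∀ ζ : ℂ, |ζ.im| < R → |(Z ζ).1.im| ≤ M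
  bd2 : ∀ ζ : ℂ, |ζ.im| < R → |(Z ζ).2.re| ≤ M
  bd' : ∀ ζ : ℂ, |ζ.im| < R → ‖deriv Z ζ‖ ≤ M
  cac : ∀ (α γ : ℂ) (e : ℂ × ℂ), |α.im| < R → |γ.im| < R → |α.re - γ.re| ≤ π →
    ‖e‖ ≤ η * ‖α - γ‖ → c * ‖α - γ‖ ^ 2 ≤ ‖Dk (Z α - Z γ + e)‖

/-- A curve on the strip of half-width `ρ` which is close to the initial one. -/
structure Good (Z : ℂ → ℂ × ℂ) (R ε ρ : ℝ) (z : ℂ → ℂ × ℂ) : Prop where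
  ρ1 : 3 * R / 4 < ρ
  ρ2 : ρ ≤ R
  diff : ∀ ζ : ℂ, |ζ.im| < ρ → DifferentiableAt ℂ z ζ
  per : ∀ ζ : ℂ, |ζ.im| < ρ → z (ζ + ((2 * π : ℝ) : ℂ)) = z ζ + (((2 * π : ℝ) : ℂ), 0)
  real : ∀ x : ℝ, (z x).1.im = 0 ∧ (z x).2.im = 0
  near : ∀ ζ : ℂ, |ζ.im| < ρ → ‖z ζ - Z ζ‖ ≤ ε
  near' : ∀ ζ : ℂ, |ζ.im| < ρ → ‖deriv z ζ - deriv Z ζ‖ ≤ ε / √(ρ - |ζ.im|)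

/-- integrand -/
def ig (z : ℂ → ℂ × ℂ) (α γ : ℂ) : ℂ × ℂ := kk (z α - z γ) • (deriv z α - deriv z γ)

/-- contour integral along the horizontal line of height `σ` -/
def JJ (z : ℂ → ℂ × ℂ) (σ : ℝ) (α : ℂ) : ℂ × ℂ :=
  ∫ x in (-π)..π, ig z α ((x : ℂ) + σ * Complex.I)

/-- complexified right-hand side -/
def FF (R : ℝ) (z : ℂ → ℂ × ℂ) (α : ℂ) : ℂ × ℂ :=
  if 0 ≤ α.im then JJ z (-(R / 2)) α else JJ z (R / 2) α

theorem line_im (x σ : ℝ) : ((x : ℂ) + σ * Complex.I).im = σ := by simp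
theorem line_re (x σ : ℝ) : ((x : ℂ) + σ * Complex.I).re = x := by simp

theorem per_int {z : ℂ → ℂ × ℂ} {ρ : ℝ}
    (h : ∀ ζ : ℂ, |ζ.im| < ρ → z (ζ + ((2 * π : ℝ) : ℂ)) = z ζ + (((2 * π : ℝ) : ℂ), 0))
    (k : ℤ) (ζ : ℂ) (hζ : |ζ.im| < ρ) :
    z (ζ + ((2 * π * k : ℝ) : ℂ)) = z ζ + (((2 * π * k : ℝ) : ℂ), 0) := by
  induction k using Int.induction_on with
  | zero => simp [Prod.mk_zero_zero]
  | succ i ih =>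
    have h1 := h (ζ + ((2 * π * (i : ℤ) : ℝ) : ℂ)) (by simpa using hζ)
    rw [ih] at h1
    have e : ζ + ((2 * π * ((i : ℤ) + 1 : ℤ) : ℝ) : ℂ) = ζ + ((2 * π * (i : ℤ) : ℝ) : ℂ) + ((2 * π : ℝ) : ℂ) := by
      push_cast; ring
    rw [e, h1]
    ext <;> simp
    ring
  | pred i ih =>
    have h1 := h (ζ + ((2 * π * ((-i - 1 : ℤ)) : ℝ) : ℂ)) (by simpa using hζ)
    have e : ζ + ((2 * π * ((-i - 1 : ℤ)) : ℝ) : ℂ) + ((2 * π : ℝ) : ℂ) = ζ + ((2 * π * ((-i : ℤ)) : ℝ) : ℂ) := by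
      push_cast; ring
    rw [e, ih] at h1
    rw [eq_comm, ← sub_eq_iff_eq_add] at h1
    rw [← h1]
    ext <;> simp
    ring

theorem exists_int_close (a : ℝ) : ∃ k : ℤ, |a - 2 * π * k| ≤ π := by
  refine ⟨round (a / (2 * π)), ?_⟩
  have h := abs_sub_round (a / (2 * π))
  have hp := Real.pi_pos
  have e : a - 2 * π * (round (a / (2 * π)) : ℝ) = 2 * π * (a / (2 * π) - (round (a / (2 * π)) : ℝ)) := by
    field_simp
  rw [e, abs_mul, abs_of_pos (by positivity)]
  nlinarith

section
variable {Z : ℂ → ℂ × ℂ} {R η c M ε : ℝ}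

theorem Base.sep (B : Base Z R η c M ε) {α γ : ℂ} {e : ℂ × ℂ} (hα : |α.im| < R) (hγ : |γ.im| < R)
    (h : R / 4 ≤ |α.im - γ.im|) (he : ‖e‖ ≤ 2 * ε) :
    c * (R / 4) ^ 2 ≤ ‖Dk (Z α - Z γ + e)‖ := by
  obtain ⟨k, hk⟩ := exists_int_close (α.re - γ.re)
  have hγ' : |(γ + ((2 * π * k : ℝ) : ℂ)).im| < R := by simpa using hγ
  have hn : R / 4 ≤ ‖α - (γ + ((2 * π * k : ℝ) : ℂ))‖ := by
    refine h.trans ((le_of_eq ?_).trans (Complex.abs_im_le_norm _))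
    simp
  have hR := B.Rpos
  have := B.cac α (γ + ((2 * π * k : ℝ) : ℂ)) e hα hγ' (by
      have e : α.re - (γ + ((2 * π * k : ℝ) : ℂ)).re = α.re - γ.re - 2 * π * k := by
        rw [Complex.add_re, Complex.ofReal_re]; ring
      rw [e]; exact hk) (by
      refine he.trans ?_
      have h1 := B.ε1
      have h2 := mul_le_mul_of_nonneg_left hn B.ηpos.le
      linarith)
  rw [per_int B.per k γ hγ] at this
  have e2 : Dk (Z α - Z γ + e) = Dk (Z α - (Z γ + (((2 * π * k : ℝ) : ℂ), 0)) + e) := by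
    rw [← Dk_add_int (Z α - (Z γ + (((2 * π * k : ℝ) : ℂ), 0)) + e) k]
    congr 1
    abel
  rw [e2]
  refine le_trans ?_ this
  have := B.cpos
  gcongr

variable {ρ : ℝ} {z : ℂ → ℂ × ℂ}

theorem Good.sep (B : Base Z R η c M ε) (G : Good Z R ε ρ z) {α γ : ℂ} (hα : |α.im| < ρ)
    (hγ : |γ.im| < ρ) (h : R / 4 ≤ |α.im - γ.im|) : c * (R / 4) ^ 2 ≤ ‖Dk (z α - z γ)‖ := by
  have := B.sep (e := (z α - Z α) - (z γ - Z γ)) (hα.trans_le G.ρ2) (hγ.trans_le G.ρ2) h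
    ((norm_sub_le _ _).trans (by linarith [G.near α hα, G.near γ hγ]))
  convert this using 3
  abel

theorem Good.sep_ne (B : Base Z R η c M ε) (G : Good Z R ε ρ z) {α γ : ℂ} (hα : |α.im| < ρ)
    (hγ : |γ.im| < ρ) (h : R / 4 ≤ |α.im - γ.im|) : Dk (z α - z γ) ≠ 0 := by
  intro h0
  have h1 := G.sep B hα hγ h
  have := B.cpos
  have := B.Rpos
  rw [h0, norm_zero] at h1
  have : 0 < c * (R / 4) ^ 2 := by positivity
  linarith

theorem Good.inner (B : Base Z R η c M ε) (G : Good Z R ε ρ z) {α γ : ℂ} (hα : |α.im| ≤ R / 2)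
    (hγ : |γ.im| ≤ R / 2) (h : |α.re - γ.re| ≤ π) : c * ‖α - γ‖ ^ 2 ≤ ‖Dk (z α - z γ)‖ := by
  have hR := B.Rpos
  have hρ := G.ρ1
  have hρ2 := G.ρ2
  have key := (convex_im_strip (R / 2)).norm_image_sub_le_of_norm_deriv_le (𝕜 := ℂ)
    (f := fun ζ => z ζ - Z ζ) (C := η) (x := γ) (y := α)
    (fun x hx => by
      have hx' : |x.im| ≤ R / 2 := hx
      exact (G.diff x (by linarith)).sub (B.diff x (by linarith)))
    (fun x hx => by
      have hx' : |x.im| ≤ R / 2 := hx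
      rw [deriv_fun_sub (G.diff x (by linarith)) (B.diff x (by linarith))]
      refine (G.near' x (by linarith)).trans ?_
      have h2 : 0 < √(R / 4) := Real.sqrt_pos.2 (by positivity)
      calc ε / √(ρ - |x.im|) ≤ ε / √(R / 4) :=
            div_le_div_of_nonneg_left B.εpos.le h2 (Real.sqrt_le_sqrt (by linarith))
        _ ≤ η := by rw [div_le_iff₀ h2]; exact B.ε2)
    hγ hα
  have := B.cac α γ ((z α - Z α) - (z γ - Z γ)) (by linarith) (by linarith) h key
  convert this using 3
  abel

theorem Good.diff' (G : Good Z R ε ρ z) {ζ : ℂ} (hζ : |ζ.im| < ρ) :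
    DifferentiableAt ℂ (deriv z) ζ := by
  have ho : IsOpen {ζ : ℂ | |ζ.im| < ρ} := isOpen_lt (by fun_prop) continuous_const
  have hd : DifferentiableOn ℂ z {ζ : ℂ | |ζ.im| < ρ} := fun x hx => (G.diff x hx).differentiableWithinAt
  exact (hd.deriv ho).differentiableAt (ho.mem_nhds hζ)

theorem Good.per' (G : Good Z R ε ρ z) {ζ : ℂ} (hζ : |ζ.im| < ρ) :
    deriv z (ζ + ((2 * π : ℝ) : ℂ)) = deriv z ζ := by
  have ho : IsOpen {ζ : ℂ | |ζ.im| < ρ} := isOpen_lt (by fun_prop) continuous_const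
  rw [← deriv_comp_add_const]
  have : (fun x => z (x + ((2 * π : ℝ) : ℂ))) =ᶠ[nhds ζ] fun x => z x + (((2 * π : ℝ) : ℂ), 0) := by
    filter_upwards [ho.mem_nhds hζ] with x hx using G.per x hx
  rw [this.deriv_eq, deriv_add_const]

theorem kk_sub_per (p : ℂ × ℂ) : kk (p - (((2 * π : ℝ) : ℂ), 0)) = kk p := by
  rw [← kk_add_int _ 1]
  congr 1
  ext <;> simp

theorem kk_add_per (p : ℂ × ℂ) : kk (p + (((2 * π : ℝ) : ℂ), 0)) = kk p := by
  have := kk_add_int p 1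
  rw [← this]
  congr 1
  ext <;> simp

theorem Good.ig_per_right (G : Good Z R ε ρ z) (α : ℂ) {γ : ℂ} (hγ : |γ.im| < ρ) :
    ig z α (γ + ((2 * π : ℝ) : ℂ)) = ig z α γ := by
  rw [ig, ig, G.per' hγ, G.per γ hγ, ← sub_sub, kk_sub_per]

theorem Good.ig_per_left (G : Good Z R ε ρ z) (γ : ℂ) {α : ℂ} (hα : |α.im| < ρ) :
    ig z (α + ((2 * π : ℝ) : ℂ)) γ = ig z α γ := by
  rw [ig, ig, G.per' hα, G.per α hα, add_sub_right_comm, kk_add_per]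

theorem Good.FF_per (G : Good Z R ε ρ z) {α : ℂ} (hα : |α.im| < ρ) :
    FF R z (α + ((2 * π : ℝ) : ℂ)) = FF R z α := by
  have e : (α + ((2 * π : ℝ) : ℂ)).im = α.im := by simp
  simp only [FF, e, JJ, G.ig_per_left _ hα]

theorem Good.bd1 (B : Base Z R η c M ε) (G : Good Z R ε ρ z) {α γ : ℂ} (hα : |α.im| < ρ)
    (hγ : |γ.im| < ρ) : |(z α - z γ).1.im| ≤ 2 * (M + 1) := by
  have h : ∀ α : ℂ, |α.im| < ρ → |(z α).1.im| ≤ M + 1 := by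
    intro α hα
    have h1 := B.bd1 α (hα.trans_le G.ρ2)
    have h2 := (Complex.abs_im_le_norm (z α - Z α).1).trans ((norm_fst_le _).trans ((G.near α hα).trans B.ε3))
    have e : (z α).1.im = (z α - Z α).1.im + (Z α).1.im := by simp
    rw [e]
    exact (abs_add_le _ _).trans (by linarith)
  have e : (z α - z γ).1.im = (z α).1.im - (z γ).1.im := by simp
  rw [e]
  exact (abs_sub _ _).trans (by linarith [h α hα, h γ hγ])

theorem Good.bd2 (B : Base Z R η c M ε) (G : Good Z R ε ρ z) {α γ : ℂ} (hα : |α.im| < ρ)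
    (hγ : |γ.im| < ρ) : |(z α - z γ).2.re| ≤ 2 * (M + 1) := by
  have h : ∀ α : ℂ, |α.im| < ρ → |(z α).2.re| ≤ M + 1 := by
    intro α hα
    have h1 := B.bd2 α (hα.trans_le G.ρ2)
    have h2 := (Complex.abs_re_le_norm (z α - Z α).2).trans ((norm_snd_le _).trans ((G.near α hα).trans B.ε3))
    have e : (z α).2.re = (z α - Z α).2.re + (Z α).2.re := by simp
    rw [e]
    exact (abs_add_le _ _).trans (by linarith)
  have e : (z α - z γ).2.re = (z α).2.re - (z γ).2.re := by simp
  rw [e]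
  exact (abs_sub _ _).trans (by linarith [h α hα, h γ hγ])

theorem Good.ubd (B : Base Z R η c M ε) (G : Good Z R ε ρ z) {α γ : ℂ} (hα : |α.im| < ρ)
    (hγ : |γ.im| = R / 2) :
    ‖deriv z α - deriv z γ‖ ≤ (2 * M * √R + 3 * ε) / √(ρ - |α.im|) := by
  have hR := B.Rpos
  have hρ1 := G.ρ1
  have hρ2 := G.ρ2
  have hε := B.εpos
  set d := ρ - |α.im| with hd
  have hd0 : 0 < d := by linarith
  have hdR : d ≤ R := by have := abs_nonneg α.im; linarith
  have hs : 0 < √d := Real.sqrt_pos.2 hd0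
  have hsR : √d ≤ √R := Real.sqrt_le_sqrt hdR
  have hs4 : √R = 2 * √(R / 4) := by
    rw [show R = 2 ^ 2 * (R / 4) by ring, Real.sqrt_mul (by positivity), Real.sqrt_sq (by norm_num)]
    congr 2; ring
  have hs40 : 0 < √(R / 4) := Real.sqrt_pos.2 (by positivity)
  have h1 := G.near' α hα
  have h2 := G.near' γ (by linarith)
  have h3 := B.bd' α (by linarith)
  have h4 := B.bd' γ (by linarith)
  have h5 : ε / √(ρ - |γ.im|) ≤ 2 * ε / √d := by
    have : √(R / 4) ≤ √(ρ - |γ.im|) := Real.sqrt_le_sqrt (by linarith)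
    rw [div_le_div_iff₀ (hs40.trans_le this) hs]
    nlinarith
  have h6 : M ≤ M * √R / √d := by
    rw [le_div_iff₀ hs]
    exact mul_le_mul_of_nonneg_left hsR B.Mnn
  have e : deriv z α - deriv z γ = ((deriv z α - deriv Z α) + deriv Z α) - ((deriv z γ - deriv Z γ) + deriv Z γ) := by abel
  rw [e]
  have e2 : (2 * M * √R + 3 * ε) / √d = ε / √d + 2 * ε / √d + 2 * (M * √R / √d) := by ring
  rw [e2]
  have n1 := norm_add_le (deriv z α - deriv Z α) (deriv Z α)
  have n2 := norm_add_le (deriv z γ - deriv Z γ) (deriv Z γ)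
  refine (norm_sub_le _ _).trans ?_
  linarith

theorem Good.ig_cont (B : Base Z R η c M ε) (G : Good Z R ε ρ z) {α : ℂ} {σ : ℝ} (hα : |α.im| < ρ)
    (hσ : |σ| < ρ) (h : R / 4 ≤ |α.im - σ|) :
    Continuous (fun x : ℝ => ig z α ((x : ℂ) + σ * Complex.I)) := by
  rw [continuous_iff_continuousAt]
  intro x
  have hl : |((x : ℂ) + σ * Complex.I).im| < ρ := by rwa [line_im]
  have hD := G.sep_ne B hα hl (by rwa [line_im])
  have hx : ContinuousAt (fun x : ℝ => (x : ℂ) + σ * Complex.I) x := by fun_prop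
  have c1 : ContinuousAt (fun x : ℝ => z ((x : ℂ) + σ * Complex.I)) x :=
    ContinuousAt.comp (f := fun x : ℝ => (x : ℂ) + σ * Complex.I) (G.diff _ hl).continuousAt hx
  have c2 : ContinuousAt (fun x : ℝ => deriv z ((x : ℂ) + σ * Complex.I)) x :=
    ContinuousAt.comp (f := fun x : ℝ => (x : ℂ) + σ * Complex.I) (G.diff' hl).continuousAt hx
  have c3 : ContinuousAt (fun x : ℝ => kk (z α - z ((x : ℂ) + σ * Complex.I))) x :=
    ContinuousAt.comp (f := fun x : ℝ => z α - z ((x : ℂ) + σ * Complex.I))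
      (kk_differentiableAt hD).continuousAt (continuousAt_const.sub c1)
  exact c3.smul (continuousAt_const.sub c2)

/-- constants -/
def KB (R c M : ℝ) : ℝ := Real.exp (2 * (M + 1)) / (c * (R / 4) ^ 2)
def KL (R c M : ℝ) : ℝ := Real.exp (2 * (M + 1)) / (c * (R / 4) ^ 2) +
  2 * Real.exp (2 * (M + 1)) ^ 2 / (c * (R / 4) ^ 2) ^ 2
def CB (R c M ε : ℝ) : ℝ := KB R c M * (2 * M * √R + 3 * ε) * (2 * π)
def CL (R c M ε : ℝ) : ℝ := (KL R c M * 2 * (2 * M * √R + 3 * ε) + KB R c M * 3) * (2 * π)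

theorem Good.ig_bd (B : Base Z R η c M ε) (G : Good Z R ε ρ z) {α γ : ℂ} (hα : |α.im| < ρ)
    (hγ : |γ.im| = R / 2) (h : R / 4 ≤ |α.im - γ.im|) :
    ‖ig z α γ‖ ≤ KB R c M * (2 * M * √R + 3 * ε) / √(ρ - |α.im|) := by
  have hR := B.Rpos
  have hc := B.cpos
  have hγ' : |γ.im| < ρ := by linarith [G.ρ1]
  rw [ig, norm_smul, mul_div_assoc]
  exact mul_le_mul (kk_bound (by positivity) (G.bd1 B hα hγ') (G.sep B hα hγ' h)) (G.ubd B hα hγ)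
    (norm_nonneg _) (by unfold KB; positivity)

theorem Good.JJ_bd (B : Base Z R η c M ε) (G : Good Z R ε ρ z) {α : ℂ} {σ : ℝ} (hα : |α.im| < ρ)
    (hσ : |σ| = R / 2) (h : R / 4 ≤ |α.im - σ|) :
    ‖JJ z σ α‖ ≤ CB R c M ε / √(ρ - |α.im|) := by
  have := intervalIntegral.norm_integral_le_of_norm_le_const (a := -π) (b := π)
    (f := fun x : ℝ => ig z α ((x : ℂ) + σ * Complex.I))
    (C := KB R c M * (2 * M * √R + 3 * ε) / √(ρ - |α.im|))
    (fun x _ => G.ig_bd B hα (by rwa [line_im]) (by rwa [line_im]))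
  refine this.trans (le_of_eq ?_)
  have hpi : |π - -π| = 2 * π := by
    rw [sub_neg_eq_add, abs_of_pos (by linarith [Real.pi_pos])]; ring
  rw [hpi, CB]
  ring

theorem Good.JJ_lip (B : Base Z R η c M ε) (G : Good Z R ε ρ z) {v : ℂ → ℂ × ℂ}
    (V : Good Z R ε ρ v) {δ : ℝ}
    (h1 : ∀ ζ : ℂ, |ζ.im| < ρ → ‖z ζ - v ζ‖ ≤ δ)
    (h2 : ∀ ζ : ℂ, |ζ.im| < ρ → ‖deriv z ζ - deriv v ζ‖ ≤ δ / √(ρ - |ζ.im|))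
    {α : ℂ} {σ : ℝ} (hα : |α.im| < ρ)
    (hσ : |σ| = R / 2) (h : R / 4 ≤ |α.im - σ|) :
    ‖JJ z σ α - JJ v σ α‖ ≤ CL R c M ε * δ / √(ρ - |α.im|) := by
  have hR := B.Rpos
  have hc := B.cpos
  have hM := B.Mnn
  have hε := B.εpos
  have hρ1 := G.ρ1
  have hρ2 := G.ρ2
  have hσ' : |σ| < ρ := by linarith
  have hδ : 0 ≤ δ := (norm_nonneg _).trans (h1 α hα)
  have i1 := (G.ig_cont B hα hσ' h).intervalIntegrable (μ := volume) (-π) π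
  have i2 := (V.ig_cont B hα hσ' h).intervalIntegrable (μ := volume) (-π) π
  rw [JJ, JJ, ← intervalIntegral.integral_sub i1 i2]
  have hd0 : 0 < ρ - |α.im| := by linarith
  have hdR : ρ - |α.im| ≤ R := by have := abs_nonneg α.im; linarith
  have hs : 0 < √(ρ - |α.im|) := Real.sqrt_pos.2 hd0
  have key : ∀ x : ℝ, ‖ig z α ((x : ℂ) + σ * Complex.I) - ig v α ((x : ℂ) + σ * Complex.I)‖ ≤
      (KL R c M * 2 * (2 * M * √R + 3 * ε) + KB R c M * 3) * δ / √(ρ - |α.im|) := by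
    intro x
    set γ : ℂ := (x : ℂ) + σ * Complex.I with hγdef
    have hγi : γ.im = σ := line_im x σ
    have hγ : |γ.im| = R / 2 := by rw [hγi, hσ]
    have hγ' : |γ.im| < ρ := by rwa [hγi]
    have hh : R / 4 ≤ |α.im - γ.im| := by rwa [hγi]
    have e : ig z α γ - ig v α γ = (kk (z α - z γ) - kk (v α - v γ)) • (deriv z α - deriv z γ)
        + kk (v α - v γ) • ((deriv z α - deriv v α) - (deriv z γ - deriv v γ)) := by
      simp only [ig, sub_smul, smul_sub]; abel
    have a1 := kk_lip (by positivity) (G.bd1 B hα hγ') (G.bd2 B hα hγ') (V.bd1 B hα hγ') (V.bd2 B hα hγ')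
      (G.sep B hα hγ' hh) (V.sep B hα hγ' hh)
    have a2 := kk_bound (by positivity) (V.bd1 B hα hγ') (V.sep B hα hγ' hh)
    have a3 := G.ubd B hα hγ
    have a4 : ‖(z α - z γ) - (v α - v γ)‖ ≤ 2 * δ := by
      have e : (z α - z γ) - (v α - v γ) = (z α - v α) - (z γ - v γ) := by abel
      rw [e]
      exact (norm_sub_le _ _).trans (by linarith [h1 α hα, h1 γ hγ'])
    have a5 : δ / √(ρ - |γ.im|) ≤ 2 * δ / √(ρ - |α.im|) := by
      have hs4 : √R = 2 * √(R / 4) := by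
        rw [show R = 2 ^ 2 * (R / 4) by ring, Real.sqrt_mul (by positivity), Real.sqrt_sq (by norm_num)]
        congr 2; ring
      have hs40 : 0 < √(R / 4) := Real.sqrt_pos.2 (by positivity)
      have : √(R / 4) ≤ √(ρ - |γ.im|) := Real.sqrt_le_sqrt (by linarith)
      have : √(ρ - |α.im|) ≤ √R := Real.sqrt_le_sqrt hdR
      rw [div_le_div_iff₀ (by linarith) hs]
      nlinarith
    have a6 : ‖(deriv z α - deriv v α) - (deriv z γ - deriv v γ)‖ ≤ 3 * δ / √(ρ - |α.im|) := by
      refine (norm_sub_le _ _).trans ?_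
      have e : 3 * δ / √(ρ - |α.im|) = δ / √(ρ - |α.im|) + 2 * δ / √(ρ - |α.im|) := by ring
      rw [e]
      linarith [h2 α hα, h2 γ hγ']
    have b1 : ‖(kk (z α - z γ) - kk (v α - v γ)) • (deriv z α - deriv z γ)‖ ≤
        (KL R c M * (2 * δ)) * ((2 * M * √R + 3 * ε) / √(ρ - |α.im|)) := by
      rw [norm_smul]
      refine mul_le_mul (a1.trans ?_) a3 (norm_nonneg _) ?_
      · exact mul_le_mul_of_nonneg_left a4 (by positivity)
      · unfold KL; positivity
    have b2 : ‖kk (v α - v γ) • ((deriv z α - deriv v α) - (deriv z γ - deriv v γ))‖ ≤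
        KB R c M * (3 * δ / √(ρ - |α.im|)) := by
      rw [norm_smul]
      exact mul_le_mul a2 a6 (norm_nonneg _) (by unfold KB; positivity)
    rw [e]
    refine (norm_add_le _ _).trans ((add_le_add b1 b2).trans (le_of_eq ?_))
    ring
  have := intervalIntegral.norm_integral_le_of_norm_le_const (a := -π) (b := π)
    (fun x _ => key x)
  refine this.trans (le_of_eq ?_)
  have hpi : |π - -π| = 2 * π := by
    rw [sub_neg_eq_add, abs_of_pos (by linarith [Real.pi_pos])]; ring
  rw [hpi, CL]
  ring

end

section
variable {Z : ℂ → ℂ × ℂ} {R η c M ε : ℝ} {ρ : ℝ} {z : ℂ → ℂ × ℂ}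

theorem Good.JJ_diff (B : Base Z R η c M ε) (G : Good Z R ε ρ z) {α : ℂ} {σ : ℝ} (hα : |α.im| < ρ)
    (hσ : |σ| = R / 2) (h : R / 4 < |α.im - σ|) : DifferentiableAt ℂ (JJ z σ) α := by
  have hR := B.Rpos
  have hρ1 := G.ρ1
  have hσ' : |σ| < ρ := by linarith
  set W : Set (ℝ × ℂ) := {p | |p.2.im| < ρ ∧ R / 4 < |p.2.im - σ|} with hW
  have hWo : IsOpen W := (isOpen_lt (f := fun p : ℝ × ℂ => |p.2.im|) (by fun_prop) continuous_const).inter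
    (isOpen_lt (g := fun p : ℝ × ℂ => |p.2.im - σ|) continuous_const (by fun_prop))
  have hl : ∀ x : ℝ, |((x : ℂ) + σ * Complex.I).im| < ρ := fun x => by rwa [line_im]
  refine (hasDerivAt_param (G := fun x ζ => ig z ζ ((x : ℂ) + σ * Complex.I)) (W := W) hWo ?_ ?_
    (fun x _ => ⟨hα, h⟩)).differentiableAt
  · intro p hp
    apply ContinuousAt.continuousWithinAt
    have hD := G.sep_ne B hp.1 (hl p.1) (by rw [line_im]; exact hp.2.le)
    have hx : ContinuousAt (fun p : ℝ × ℂ => (p.1 : ℂ) + σ * Complex.I) p := by fun_prop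
    have c1 : ContinuousAt (fun p : ℝ × ℂ => z ((p.1 : ℂ) + σ * Complex.I)) p :=
      ContinuousAt.comp (f := fun p : ℝ × ℂ => (p.1 : ℂ) + σ * Complex.I) (G.diff _ (hl p.1)).continuousAt hx
    have c2 : ContinuousAt (fun p : ℝ × ℂ => deriv z ((p.1 : ℂ) + σ * Complex.I)) p :=
      ContinuousAt.comp (f := fun p : ℝ × ℂ => (p.1 : ℂ) + σ * Complex.I) (G.diff' (hl p.1)).continuousAt hx
    have c1' : ContinuousAt (fun p : ℝ × ℂ => z p.2) p :=
      ContinuousAt.comp (f := fun p : ℝ × ℂ => p.2) (G.diff _ hp.1).continuousAt continuousAt_snd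
    have c2' : ContinuousAt (fun p : ℝ × ℂ => deriv z p.2) p :=
      ContinuousAt.comp (f := fun p : ℝ × ℂ => p.2) (G.diff' hp.1).continuousAt continuousAt_snd
    have c3 : ContinuousAt (fun p : ℝ × ℂ => kk (z p.2 - z ((p.1 : ℂ) + σ * Complex.I))) p :=
      ContinuousAt.comp (f := fun p : ℝ × ℂ => z p.2 - z ((p.1 : ℂ) + σ * Complex.I))
        (kk_differentiableAt hD).continuousAt (c1'.sub c1)
    exact c3.smul (c2'.sub c2)
  · intro p hp
    have hD := G.sep_ne B hp.1 (hl p.1) (by rw [line_im]; exact hp.2.le)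
    have d3 : DifferentiableAt ℂ (fun ζ : ℂ => kk (z ζ - z ((p.1 : ℂ) + σ * Complex.I))) p.2 :=
      DifferentiableAt.comp (f := fun ζ : ℂ => z ζ - z ((p.1 : ℂ) + σ * Complex.I)) p.2
        (kk_differentiableAt hD) ((G.diff _ hp.1).sub_const _)
    exact d3.smul ((G.diff' hp.1).sub_const _)

/-- real points: the integrand is bounded near the diagonal -/
theorem Good.inner_ne (B : Base Z R η c M ε) (G : Good Z R ε ρ z) {α γ : ℂ} (hα : |α.im| ≤ R / 2)
    (hγ : |γ.im| ≤ R / 2) (h : |α.re - γ.re| ≤ π) (hne : α ≠ γ) : Dk (z α - z γ) ≠ 0 := by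
  intro h0
  have h1 := G.inner B hα hγ h
  rw [h0, norm_zero] at h1
  have := B.cpos
  have : 0 < ‖α - γ‖ := norm_pos_iff.2 (sub_ne_zero.2 hne)
  have : 0 < c * ‖α - γ‖ ^ 2 := by positivity
  linarith

theorem Good.ig_diff_right (G : Good Z R ε ρ z) {α γ : ℂ}
    (hγ : |γ.im| < ρ) (hD : Dk (z α - z γ) ≠ 0) : DifferentiableAt ℂ (ig z α) γ := by
  have d3 : DifferentiableAt ℂ (fun ζ : ℂ => kk (z α - z ζ)) γ :=
    DifferentiableAt.comp (f := fun ζ : ℂ => z α - z ζ) γ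
      (kk_differentiableAt hD) ((G.diff _ hγ).const_sub _)
  exact d3.smul ((G.diff' hγ).const_sub _)

theorem Good.ig_bdd (B : Base Z R η c M ε) (G : Good Z R ε ρ z) (a : ℝ) :
    ∃ C, ∀ᶠ γ in nhds (a : ℂ), ‖ig z a γ‖ ≤ C := by
  have hR := B.Rpos
  have hc := B.cpos
  have hρ1 := G.ρ1
  have ha : |(a : ℂ).im| < ρ := by simp; linarith
  have d1 : DifferentiableAt ℂ (fun γ => Complex.sin ((z a - z γ).1)) a := by
    have : DifferentiableAt ℂ (fun γ => (z a - z γ).1) a := ((G.diff _ ha).const_sub _).fst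
    exact this.csin
  obtain ⟨C1, h1⟩ := d1.hasDerivAt.isBigO_sub.bound
  obtain ⟨C2, h2⟩ := (G.diff' ha).hasDerivAt.isBigO_sub.bound
  refine ⟨|C1| * |C2| / c, ?_⟩
  have hn1 : ∀ᶠ γ : ℂ in nhds (a : ℂ), |γ.im| < R / 2 := by
    apply (isOpen_lt (f := fun γ : ℂ => |γ.im|) (by fun_prop) continuous_const).mem_nhds
    simp [hR]
  have hn2 : ∀ᶠ γ : ℂ in nhds (a : ℂ), |a - γ.re| < π := by
    apply (isOpen_lt (f := fun γ : ℂ => |a - γ.re|) (by fun_prop) continuous_const).mem_nhds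
    simp [Real.pi_pos]
  filter_upwards [h1, h2, hn1, hn2] with γ h1 h2 h3 h4
  simp only [sub_self, Prod.fst_zero, Complex.sin_zero, sub_zero] at h1
  have h5 := G.inner B (α := a) (γ := γ) (by simp; linarith) h3.le (by simpa using h4.le)
  rcases eq_or_ne (γ : ℂ) a with e | hne
  · have hz : deriv z a - deriv z γ = 0 := by rw [e, sub_self]
    rw [ig, hz, smul_zero, norm_zero]
    positivity
  · have hp : 0 < ‖γ - a‖ := norm_pos_iff.2 (sub_ne_zero.2 hne)
    rw [norm_sub_rev] at h5
    rw [norm_sub_rev] at h2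
    rw [ig, norm_smul, kk, norm_div]
    have hD : 0 < ‖Dk (z a - z γ)‖ := lt_of_lt_of_le (by positivity) h5
    rw [div_mul_eq_mul_div, div_le_div_iff₀ hD hc]
    have h1' := h1.trans (mul_le_mul_of_nonneg_right (le_abs_self C1) hp.le)
    have h2' := h2.trans (mul_le_mul_of_nonneg_right (le_abs_self C2) hp.le)
    calc _ ≤ (|C1| * ‖γ - a‖) * (|C2| * ‖γ - a‖) * c := by gcongr
      _ = |C1| * |C2| * (c * ‖γ - a‖ ^ 2) := by ring
      _ ≤ _ := by gcongr

theorem Ioo_min_max_subset_uIcc' {a b x : ℝ} (h : x ∈ Ioo (min a b) (max a b)) : x ∈ uIcc a b :=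
  ⟨h.1.le, h.2.le⟩

theorem Good.rect (B : Base Z R η c M ε) (G : Good Z R ε ρ z) (a : ℝ) {σ : ℝ} (hσ : |σ| = R / 2) :
    IntervalIntegrable (fun x : ℝ => ig z a (x : ℂ)) volume (a - π) (a + π) ∧
    ∫ x in (a - π)..(a + π), ig z a (x : ℂ) = JJ z σ a := by
  have hR := B.Rpos
  have hρ1 := G.ρ1
  have hpi := Real.pi_pos
  set f := ig z a with hf
  set g := Function.update f (a : ℂ) ((nhdsWithin (a : ℂ) {(a : ℂ)}ᶜ).limUnder f) with hg
  have hfd : ∀ γ : ℂ, |γ.im| ≤ R / 2 → |a - γ.re| ≤ π → γ ≠ a → DifferentiableAt ℂ f γ := by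
    intro γ h1 h2 h3
    exact G.ig_diff_right (by linarith) (G.inner_ne B (by simp; linarith) h1 (by simpa using h2) h3.symm)
  have hgd : ∀ γ : ℂ, |γ.im| ≤ R / 2 → |a - γ.re| ≤ π → DifferentiableAt ℂ g γ := by
    intro γ h1 h2
    rcases eq_or_ne γ (a : ℂ) with e | hne
    · subst e
      have ho : {γ : ℂ | |γ.im| < R / 2 ∧ |a - γ.re| < π} ∈ nhds (a : ℂ) := by
        apply ((isOpen_lt (f := fun γ : ℂ => |γ.im|) (by fun_prop) continuous_const).inter
          (isOpen_lt (f := fun γ : ℂ => |a - γ.re|) (by fun_prop) continuous_const)).mem_nhds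
        constructor
        · simp [hR]
        · simp [hpi]
      refine (Complex.differentiableOn_update_limUnder_of_isLittleO (f := f) ho ?_ ?_).differentiableAt ho
      · intro γ hγ
        exact (hfd γ hγ.1.1.le hγ.1.2.le hγ.2).differentiableWithinAt
      · apply Filter.IsBoundedUnder.isLittleO_sub_self_inv
        obtain ⟨C, hC⟩ := G.ig_bdd B a
        refine ⟨C + ‖f a‖, Filter.eventually_map.2 ?_⟩
        filter_upwards [nhdsWithin_le_nhds hC] with γ hγ
        exact norm_sub_le_of_le hγ le_rfl
    · refine (hfd γ h1 h2 hne).congr_of_eventuallyEq ?_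
      filter_upwards [isOpen_ne.mem_nhds hne] with x hx
      exact Function.update_of_ne hx _ _
  have hmin : ∀ y ∈ uIcc 0 σ, |y| ≤ R / 2 := by
    intro y hy
    rw [← hσ]
    have := abs_sub_left_of_mem_uIcc hy
    simpa using this
  have hre : ∀ x ∈ uIcc (a - π) (a + π), |a - x| ≤ π := by
    intro x hx
    rw [uIcc_of_le (by linarith)] at hx
    rw [abs_le]; constructor <;> linarith [hx.1, hx.2]
  have key := Complex.integral_boundary_rect_eq_zero_of_differentiable_on_off_countable g
    ((a - π : ℝ) : ℂ) (((a + π : ℝ) : ℂ) + σ * Complex.I) ∅ countable_empty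
    (fun γ hγ => by
      rw [line_im, line_re, Complex.ofReal_re, Complex.ofReal_im] at hγ
      exact (hgd γ (hmin _ hγ.2) (hre _ hγ.1)).continuousAt.continuousWithinAt)
    (fun γ hγ => by
      rw [line_im, line_re, Complex.ofReal_re, Complex.ofReal_im] at hγ
      exact hgd γ (hmin _ (Ioo_min_max_subset_uIcc' hγ.1.2)) (hre _ (Ioo_min_max_subset_uIcc' hγ.1.1)))
  rw [line_im, line_re, Complex.ofReal_re, Complex.ofReal_im] at key
  have hside : ∀ y : ℝ, |y| < ρ → g (((a + π : ℝ) : ℂ) + y * Complex.I) = g (((a - π : ℝ) : ℂ) + y * Complex.I) := by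
    intro y hy
    have n1 : ((a + π : ℝ) : ℂ) + y * Complex.I ≠ a := by
      intro h; have := congrArg Complex.re h; rw [line_re] at this; simp at this
    have n2 : ((a - π : ℝ) : ℂ) + y * Complex.I ≠ a := by
      intro h; have := congrArg Complex.re h; rw [line_re] at this; simp at this
    rw [hg, Function.update_of_ne n1, Function.update_of_ne n2, hf,
      ← G.ig_per_right (γ := ((a - π : ℝ) : ℂ) + y * Complex.I) a (by rwa [line_im])]
    congr 1
    push_cast; ring
  rw [intervalIntegral.integral_congr (g := fun y : ℝ => g (((a - π : ℝ) : ℂ) + y * Complex.I))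
    (fun y hy => hside y (by linarith [hmin y hy])), add_sub_cancel_right, sub_eq_zero] at key
  have e1 : ∫ x in (a - π)..(a + π), g ((x : ℂ) + ((0 : ℝ) : ℂ) * Complex.I) = ∫ x in (a - π)..(a + π), f (x : ℂ) := by
    apply intervalIntegral.integral_congr_ae
    have : ∀ᵐ x : ℝ, x ≠ a := by simp [ae_iff]
    filter_upwards [this] with x hx _
    have : (x : ℂ) ≠ a := fun h => hx (by exact_mod_cast h)
    simp only [Complex.ofReal_zero, zero_mul, add_zero]
    rw [hg, Function.update_of_ne this]
  have e2 : ∫ x in (a - π)..(a + π), g ((x : ℂ) + σ * Complex.I) = ∫ x in (a - π)..(a + π), f ((x : ℂ) + σ * Complex.I) := by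
    congr 1; ext1 x
    rw [hg, Function.update_of_ne]
    intro h
    have := congrArg Complex.im h
    rw [line_im] at this
    simp at this
    rw [this] at hσ
    simp at hσ
    linarith
  rw [e1, e2] at key
  constructor
  · have hgi : IntervalIntegrable (fun x : ℝ => g (x : ℂ)) volume (a - π) (a + π) := by
      apply ContinuousOn.intervalIntegrable
      intro x hx
      apply ContinuousAt.continuousWithinAt
      exact ContinuousAt.comp (f := fun x : ℝ => (x : ℂ))
        (hgd (x : ℂ) (by simp; linarith) (by simpa using hre x hx)).continuousAt (by fun_prop)
    refine hgi.congr_ae (Filter.Eventually.filter_mono (ae_mono Measure.restrict_le_self) ?_)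
    have : ∀ᵐ x : ℝ, x ≠ a := by simp [ae_iff]
    filter_upwards [this] with x hx
    have : (x : ℂ) ≠ a := fun h => hx (by exact_mod_cast h)
    change g (x : ℂ) = _
    rw [hg, Function.update_of_ne this]
  rw [key, JJ]
  have hP : Function.Periodic (fun x : ℝ => f ((x : ℂ) + σ * Complex.I)) (2 * π) := by
    intro x
    simp only [hf]
    rw [← G.ig_per_right (γ := (x : ℂ) + σ * Complex.I) a (by rw [line_im]; linarith)]
    congr 1
    push_cast; ring
  have := hP.intervalIntegral_add_eq (a - π) (-π)
  rw [show a - π + 2 * π = a + π by ring, show -π + 2 * π = π by ring] at this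
  exact this
end

section
variable {Z : ℂ → ℂ × ℂ} {R η c M ε : ℝ} {ρ : ℝ} {z : ℂ → ℂ × ℂ}

theorem Good.JJ_eq (B : Base Z R η c M ε) (G : Good Z R ε ρ z) {α : ℂ} (hα : |α.im| < R / 4) :
    JJ z (-(R / 2)) α = JJ z (R / 2) α := by
  have hR := B.Rpos
  have hρ1 := G.ρ1
  have ho : IsOpen {ζ : ℂ | |ζ.im| < R / 4} := isOpen_lt (by fun_prop) continuous_const
  have hconv : Convex ℝ {ζ : ℂ | |ζ.im| < R / 4} := by
    have : {ζ : ℂ | |ζ.im| < R / 4} = Complex.imLm ⁻¹' (Ioo (-(R / 4)) (R / 4)) := by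
      ext x; simp [abs_lt]
    rw [this]
    exact (convex_Ioo _ _).linear_preimage _
  have h1 : AnalyticOnNhd ℂ (JJ z (-(R / 2))) {ζ : ℂ | |ζ.im| < R / 4} := by
    apply DifferentiableOn.analyticOnNhd _ ho
    intro ζ hζ
    have hζ' : |ζ.im| < R / 4 := hζ
    refine (G.JJ_diff B (by linarith) (by rw [abs_neg, abs_of_pos (by positivity)]) ?_).differentiableWithinAt
    rw [abs_lt] at hζ'
    rw [lt_abs]; left; linarith
  have h2 : AnalyticOnNhd ℂ (JJ z (R / 2)) {ζ : ℂ | |ζ.im| < R / 4} := by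
    apply DifferentiableOn.analyticOnNhd _ ho
    intro ζ hζ
    have hζ' : |ζ.im| < R / 4 := hζ
    refine (G.JJ_diff B (by linarith) (by rw [abs_of_pos (by positivity)]) ?_).differentiableWithinAt
    rw [abs_lt] at hζ'
    rw [lt_abs]; right; linarith
  refine h1.eqOn_of_preconnected_of_frequently_eq h2 hconv.isPreconnected (z₀ := 0) (by simp [hR]) ?_ hα
  have hr : ∀ a : ℝ, JJ z (-(R / 2)) a = JJ z (R / 2) a := fun a => by
    rw [← (G.rect B a (σ := -(R / 2)) (by rw [abs_neg, abs_of_pos (by positivity)])).2,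
      ← (G.rect B a (σ := R / 2) (by rw [abs_of_pos (by positivity)])).2]
  have ht : Filter.Tendsto (fun x : ℝ => (x : ℂ)) (nhdsWithin 0 {0}ᶜ) (nhdsWithin 0 {0}ᶜ) := by
    apply tendsto_nhdsWithin_of_tendsto_nhds_of_eventually_within
    · have : ContinuousAt (fun x : ℝ => (x : ℂ)) 0 := by fun_prop
      simpa using this.tendsto.mono_left nhdsWithin_le_nhds
    · filter_upwards [self_mem_nhdsWithin] with x hx
      simpa using hx
  exact ht.frequently (Filter.Frequently.of_forall hr)

theorem Good.FF_low (B : Base Z R η c M ε) (G : Good Z R ε ρ z) {α : ℂ} (hα : -(R / 4) < α.im) :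
    FF R z α = JJ z (-(R / 2)) α := by
  rw [FF]
  split_ifs with h
  · rfl
  · rw [G.JJ_eq B]
    rw [abs_lt]; constructor <;> linarith [B.Rpos]

theorem Good.FF_up (B : Base Z R η c M ε) (G : Good Z R ε ρ z) {α : ℂ} (hα : α.im < R / 4) :
    FF R z α = JJ z (R / 2) α := by
  rw [FF]
  split_ifs with h
  · rw [G.JJ_eq B]
    rw [abs_lt]; constructor <;> linarith [B.Rpos]
  · rfl

theorem Good.FF_diff (B : Base Z R η c M ε) (G : Good Z R ε ρ z) {α : ℂ} (hα : |α.im| < ρ) :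
    DifferentiableAt ℂ (FF R z) α := by
  have hR := B.Rpos
  rcases lt_or_ge (-(R / 4)) α.im with h | h
  · refine (G.JJ_diff B (σ := -(R / 2)) hα (by rw [abs_neg, abs_of_pos (by positivity)])
      (by rw [lt_abs]; left; linarith)).congr_of_eventuallyEq ?_
    filter_upwards [(isOpen_lt (f := fun _ : ℂ => -(R / 4)) (g := Complex.im) (by fun_prop) (by fun_prop)).mem_nhds h] with x hx
    exact G.FF_low B hx
  · have h' : α.im < R / 4 := by linarith
    refine (G.JJ_diff B (σ := R / 2) hα (by rw [abs_of_pos (by positivity)])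
      (by rw [lt_abs]; right; linarith)).congr_of_eventuallyEq ?_
    filter_upwards [(isOpen_lt (g := fun _ : ℂ => R / 4) (f := Complex.im) (by fun_prop) (by fun_prop)).mem_nhds h'] with x hx
    exact G.FF_up B hx

theorem Good.FF_bd (B : Base Z R η c M ε) (G : Good Z R ε ρ z) {α : ℂ} (hα : |α.im| < ρ) :
    ‖FF R z α‖ ≤ CB R c M ε / √(ρ - |α.im|) := by
  have hR := B.Rpos
  rw [FF]
  split_ifs with h
  · exact G.JJ_bd B hα (by rw [abs_neg, abs_of_pos (by positivity)]) (by rw [le_abs]; left; linarith)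
  · exact G.JJ_bd B hα (by rw [abs_of_pos (by positivity)]) (by rw [le_abs]; right; linarith)

theorem Good.FF_lip (B : Base Z R η c M ε) (G : Good Z R ε ρ z) {v : ℂ → ℂ × ℂ}
    (V : Good Z R ε ρ v) {δ : ℝ}
    (h1 : ∀ ζ : ℂ, |ζ.im| < ρ → ‖z ζ - v ζ‖ ≤ δ)
    (h2 : ∀ ζ : ℂ, |ζ.im| < ρ → ‖deriv z ζ - deriv v ζ‖ ≤ δ / √(ρ - |ζ.im|))
    {α : ℂ} (hα : |α.im| < ρ) :
    ‖FF R z α - FF R v α‖ ≤ CL R c M ε * δ / √(ρ - |α.im|) := by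
  have hR := B.Rpos
  rw [FF, FF]
  split_ifs with h
  · exact G.JJ_lip B V h1 h2 hα (by rw [abs_neg, abs_of_pos (by positivity)]) (by rw [le_abs]; left; linarith)
  · exact G.JJ_lip B V h1 h2 hα (by rw [abs_of_pos (by positivity)]) (by rw [le_abs]; right; linarith)

/-- real part map -/
def reL : ℂ × ℂ →L[ℝ] ℝ × ℝ := Complex.reCLM.prodMap Complex.reCLM
def imL : ℂ × ℂ →L[ℝ] ℝ × ℝ := Complex.imCLM.prodMap Complex.imCLM

@[simp] theorem reL_apply (p : ℂ × ℂ) : reL p = (p.1.re, p.2.re) := rfl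
@[simp] theorem imL_apply (p : ℂ × ℂ) : imL p = (p.1.im, p.2.im) := rfl

theorem hasDerivAt_ofReal_comp {f : ℂ → ℂ × ℂ} {x : ℝ} (h : DifferentiableAt ℂ f x) :
    HasDerivAt (fun y : ℝ => f y) (deriv f x) x := by
  have := HasDerivAt.scomp (h := fun y : ℝ => (y : ℂ)) x h.hasDerivAt Complex.ofRealCLM.hasDerivAt
  have e : Complex.ofRealCLM 1 • deriv f x = deriv f x := by simp
  rw [e] at this
  exact this

theorem hasDerivAt_reL {f : ℂ → ℂ × ℂ} {x : ℝ} (h : DifferentiableAt ℂ f x) :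
    HasDerivAt (fun y : ℝ => reL (f y)) (reL (deriv f x)) x :=
  reL.hasFDerivAt.comp_hasDerivAt x (hasDerivAt_ofReal_comp h)

theorem hasDerivAt_imL {f : ℂ → ℂ × ℂ} {x : ℝ} (h : DifferentiableAt ℂ f x) :
    HasDerivAt (fun y : ℝ => imL (f y)) (imL (deriv f x)) x :=
  imL.hasFDerivAt.comp_hasDerivAt x (hasDerivAt_ofReal_comp h)

theorem Good.abs0 (B : Base Z R η c M ε) (G : Good Z R ε ρ z) (x : ℝ) : |(x : ℂ).im| < ρ := by
  simp; linarith [B.Rpos, G.ρ1]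

theorem Good.im' (B : Base Z R η c M ε) (G : Good Z R ε ρ z) (x : ℝ) : imL (deriv z x) = 0 := by
  have h := hasDerivAt_imL (G.diff x (G.abs0 B x))
  have e : (fun y : ℝ => imL (z y)) = fun _ => 0 := by
    ext1 y
    rw [imL_apply, (G.real y).1, (G.real y).2]; rfl
  rw [e] at h
  exact h.unique (hasDerivAt_const _ _)

theorem Good.ig_real (B : Base Z R η c M ε) (G : Good Z R ε ρ z) (a x : ℝ) :
    imL (ig z a x) = 0 ∧ reL (ig z a x) =
      (Real.sin ((z a).1.re - (z x).1.re) / (Real.cosh ((z a).2.re - (z x).2.re) -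
        Real.cos ((z a).1.re - (z x).1.re))) • (reL (deriv z a) - reL (deriv z x)) := by
  have e1 : (z a - z x).1 = (((z a).1.re - (z x).1.re : ℝ) : ℂ) := by
    apply Complex.ext <;> simp [(G.real a).1, (G.real x).1]
  have e2 : (z a - z x).2 = (((z a).2.re - (z x).2.re : ℝ) : ℂ) := by
    apply Complex.ext <;> simp [(G.real a).2, (G.real x).2]
  have e3 : kk (z a - z x) = ((Real.sin ((z a).1.re - (z x).1.re) / (Real.cosh ((z a).2.re - (z x).2.re) -
        Real.cos ((z a).1.re - (z x).1.re)) : ℝ) : ℂ) := by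
    rw [kk, Dk, e1, e2]; push_cast; rfl
  have e4 : ∀ (r : ℝ) (w : ℂ × ℂ), (r : ℂ) • w = r • w := fun r w => by ext <;> simp
  rw [ig, e3, e4, map_smul, map_smul, map_sub, map_sub, G.im' B, G.im' B]
  simp

theorem Good.FF_real (B : Base Z R η c M ε) (G : Good Z R ε ρ z) (a : ℝ) :
    imL (FF R z a) = 0 ∧ reL (FF R z a) = muskatRHS (fun x : ℝ => reL (z x)) a := by
  have hR := B.Rpos
  obtain ⟨h1, h2⟩ := G.rect B a (σ := -(R / 2)) (by rw [abs_neg, abs_of_pos (by positivity)])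
  rw [G.FF_low B (by simp [hR]), ← h2]
  rw [← ContinuousLinearMap.intervalIntegral_comp_comm _ h1, ← ContinuousLinearMap.intervalIntegral_comp_comm _ h1]
  constructor
  · simp only [(G.ig_real B a _).1]
    simp
  · have e := intervalIntegral.integral_comp_sub_left (a := -π) (b := π) (fun x : ℝ => reL (ig z a x)) a
    rw [sub_neg_eq_add] at e
    rw [← e, muskatRHS]
    congr 1
    ext1 β
    rw [(G.ig_real B a _).2, (hasDerivAt_reL (G.diff _ (G.abs0 B a))).deriv,
      (hasDerivAt_reL (G.diff _ (G.abs0 B (a - β)))).deriv]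
    rfl
end

set_option linter.unusedSectionVars false

/-- space-time domain -/
def Om (R κ : ℝ) : Set (ℝ × ℂ) := {p | |p.2.im| + κ * |p.1| < R ∧ κ * |p.1| < R / 4}

theorem Om_open (R κ : ℝ) : IsOpen (Om R κ) :=
  (isOpen_lt (f := fun p : ℝ × ℂ => |p.2.im| + κ * |p.1|) (by fun_prop) continuous_const).inter
    (isOpen_lt (f := fun p : ℝ × ℂ => κ * |p.1|) (by fun_prop) continuous_const)

theorem Om_mono {R κ : ℝ} (hκ : 0 < κ) {s t : ℝ} {ζ : ℂ} (h : (t, ζ) ∈ Om R κ) (hs : |s| ≤ |t|) :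
    (s, ζ) ∈ Om R κ := by
  have h1 := mul_le_mul_of_nonneg_left hs hκ.le
  obtain ⟨h2, h3⟩ := h
  simp only at h2 h3
  constructor <;> simp only <;> linarith

theorem abs_le_of_uIcc {s t : ℝ} (h : s ∈ uIcc 0 t) : |s| ≤ |t| := by
  simpa using abs_sub_left_of_mem_uIcc h

section
variable {E : Type*} [NormedAddCommGroup E] [NormedSpace ℂ E] [CompleteSpace E]

theorem Om_slice {R κ : ℝ} (hκ : 0 < κ) {F : ℝ → ℂ → E}
    (hF : ContinuousOn (fun p : ℝ × ℂ => F p.1 p.2) (Om R κ)) {t : ℝ} {ζ : ℂ} (h : (t, ζ) ∈ Om R κ) :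
    ContinuousOn (fun s => F s ζ) (uIcc 0 t) := by
  intro s hs
  apply ContinuousAt.continuousWithinAt
  have h1 : ContinuousAt (fun p : ℝ × ℂ => F p.1 p.2) (s, ζ) :=
    hF.continuousAt ((Om_open R κ).mem_nhds (Om_mono hκ h (abs_le_of_uIcc hs)))
  exact ContinuousAt.comp (f := fun s : ℝ => (s, ζ)) h1 (by fun_prop)

theorem Om_int_cont {R κ : ℝ} (hκ : 0 < κ) {F : ℝ → ℂ → E}
    (hF : ContinuousOn (fun p : ℝ × ℂ => F p.1 p.2) (Om R κ)) :
    ContinuousOn (fun p : ℝ × ℂ => ∫ s in (0 : ℝ)..p.1, F s p.2) (Om R κ) := by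
  have hcl : ∀ θ : ℝ, |max 0 (min θ 1)| ≤ 1 := by
    intro θ
    rw [abs_of_nonneg (le_max_left _ _)]
    exact max_le (by norm_num) (min_le_right _ _)
  have h := contOn_param (Om_open R κ) (f := fun (p : ℝ × ℂ) (θ : ℝ) => F (max 0 (min θ 1) * p.1) p.2) (by
    have hm : Continuous (fun q : (ℝ × ℂ) × ℝ => (max 0 (min q.2 1) * q.1.1, q.1.2)) := by fun_prop
    refine ContinuousOn.comp (g := fun p : ℝ × ℂ => F p.1 p.2)
      (f := fun q : (ℝ × ℂ) × ℝ => (max 0 (min q.2 1) * q.1.1, q.1.2)) hF hm.continuousOn ?_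
    rintro ⟨⟨t, ζ⟩, θ⟩ ⟨h, -⟩
    refine Om_mono hκ h ?_
    rw [abs_mul]
    exact mul_le_of_le_one_left (abs_nonneg _) (hcl θ)) 0 1
  have h2 : ContinuousOn (fun p : ℝ × ℂ => p.1 • ∫ θ in (0 : ℝ)..1, F (max 0 (min θ 1) * p.1) p.2) (Om R κ) :=
    continuous_fst.continuousOn.smul h
  refine h2.congr ?_
  rintro ⟨t, ζ⟩ hp
  simp only
  have e := intervalIntegral.smul_integral_comp_mul_left (a := 0) (b := 1) (fun s => F s ζ) t
  rw [mul_zero, mul_one] at e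
  rw [← e]
  congr 1
  apply intervalIntegral.integral_congr
  intro θ hθ
  rw [uIcc_of_le zero_le_one] at hθ
  simp only
  rw [min_eq_left hθ.2, max_eq_right hθ.1, mul_comm]

theorem Om_int_deriv {R κ : ℝ} (hκ : 0 < κ) {F : ℝ → ℂ → E}
    (hF : ContinuousOn (fun p : ℝ × ℂ => F p.1 p.2) (Om R κ))
    (hd : ∀ p ∈ Om R κ, DifferentiableAt ℂ (F p.1) p.2) {t : ℝ} {ζ : ℂ} (h : (t, ζ) ∈ Om R κ) :
    HasDerivAt (fun ζ => ∫ s in (0 : ℝ)..t, F s ζ) (∫ s in (0 : ℝ)..t, deriv (F s) ζ) ζ :=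
  hasDerivAt_param (Om_open R κ) hF hd (fun _ hs => Om_mono hκ h (abs_le_of_uIcc hs))
end

/-- admissible space-time curves -/
structure Adm (Z : ℂ → ℂ × ℂ) (R ε κ : ℝ) (z : ℝ → ℂ → ℂ × ℂ) : Prop where
  cont : ContinuousOn (fun p : ℝ × ℂ => z p.1 p.2) (Om R κ)
  good : ∀ t, κ * |t| < R / 4 → Good Z R ε (R - κ * |t|) (z t)

/-- largeness of `κ` -/
structure Kap (R c M ε κ : ℝ) : Prop where
  pos : 0 < κ
  k1 : 2 * CB R c M ε / κ * √R ≤ ε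
  k2 : 2 * (3 * CB R c M ε) / κ ≤ ε
  k3 : 2 * CL R c M ε / κ * √R ≤ 1 / 2
  k4 : 2 * (3 * CL R c M ε) / κ ≤ 1 / 2

def PhiM (Z : ℂ → ℂ × ℂ) (R : ℝ) (z : ℝ → ℂ → ℂ × ℂ) (t : ℝ) (ζ : ℂ) : ℂ × ℂ :=
  Z ζ + ∫ s in (0 : ℝ)..t, FF R (z s) ζ

section
variable {Z : ℂ → ℂ × ℂ} {R η c M ε κ : ℝ} {z : ℝ → ℂ → ℂ × ℂ}

theorem Adm.deriv_cont (A : Adm Z R ε κ z) :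
    ContinuousOn (fun p : ℝ × ℂ => deriv (z p.1) p.2) (Om R κ) :=
  contOn_deriv (Om_open R κ) A.cont (fun p hp => (A.good p.1 hp.2).diff p.2 (by linarith [hp.1]))

theorem Adm.JJ_cont (B : Base Z R η c M ε) (A : Adm Z R ε κ z) {σ : ℝ} (hσ : |σ| = R / 2) :
    ContinuousOn (fun p : ℝ × ℂ => JJ (z p.1) σ p.2) (Om R κ ∩ {p | R / 4 < |p.2.im - σ|}) := by
  have hR := B.Rpos
  have ho : IsOpen (Om R κ ∩ {p | R / 4 < |p.2.im - σ|}) := (Om_open R κ).inter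
    (isOpen_lt (g := fun p : ℝ × ℂ => |p.2.im - σ|) continuous_const (by fun_prop))
  refine contOn_param ho (f := fun (p : ℝ × ℂ) (x : ℝ) => ig (z p.1) p.2 ((x : ℂ) + σ * Complex.I)) ?_ _ _
  rintro ⟨⟨t, ζ⟩, x⟩ ⟨⟨h, hs⟩, -⟩
  apply ContinuousAt.continuousWithinAt
  have G := A.good t h.2
  have h1 : |ζ.im| < R - κ * |t| := by have := h.1; simp only at this; linarith
  have h2 : (t, (x : ℂ) + σ * Complex.I) ∈ Om R κ := by
    have := h.2
    simp only at this
    refine ⟨?_, h.2⟩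
    simp only [line_im, hσ]
    linarith
  have hD := G.sep_ne B h1 (γ := (x : ℂ) + σ * Complex.I) (by have := h2.1; simp only at this; linarith)
    (by rw [line_im]; exact le_of_lt hs)
  have m1 : ContinuousAt (fun q : (ℝ × ℂ) × ℝ => (q.1.1, (q.2 : ℂ) + σ * Complex.I)) ((t, ζ), x) := by fun_prop
  have m2 : ContinuousAt (fun q : (ℝ × ℂ) × ℝ => q.1) ((t, ζ), x) := by fun_prop
  have cz := fun (p : ℝ × ℂ) (hp : p ∈ Om R κ) => A.cont.continuousAt ((Om_open R κ).mem_nhds hp)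
  have cd := fun (p : ℝ × ℂ) (hp : p ∈ Om R κ) => A.deriv_cont.continuousAt ((Om_open R κ).mem_nhds hp)
  have c1 : ContinuousAt (fun q : (ℝ × ℂ) × ℝ => z q.1.1 ((q.2 : ℂ) + σ * Complex.I)) ((t, ζ), x) :=
    ContinuousAt.comp (f := fun q : (ℝ × ℂ) × ℝ => (q.1.1, (q.2 : ℂ) + σ * Complex.I))
      (g := fun p : ℝ × ℂ => z p.1 p.2) (cz _ h2) m1
  have c2 : ContinuousAt (fun q : (ℝ × ℂ) × ℝ => deriv (z q.1.1) ((q.2 : ℂ) + σ * Complex.I)) ((t, ζ), x) :=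
    ContinuousAt.comp (f := fun q : (ℝ × ℂ) × ℝ => (q.1.1, (q.2 : ℂ) + σ * Complex.I))
      (g := fun p : ℝ × ℂ => deriv (z p.1) p.2) (cd _ h2) m1
  have c3 : ContinuousAt (fun q : (ℝ × ℂ) × ℝ => z q.1.1 q.1.2) ((t, ζ), x) :=
    ContinuousAt.comp (f := fun q : (ℝ × ℂ) × ℝ => q.1)
      (g := fun p : ℝ × ℂ => z p.1 p.2) (cz _ h) m2
  have c4 : ContinuousAt (fun q : (ℝ × ℂ) × ℝ => deriv (z q.1.1) q.1.2) ((t, ζ), x) :=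
    ContinuousAt.comp (f := fun q : (ℝ × ℂ) × ℝ => q.1)
      (g := fun p : ℝ × ℂ => deriv (z p.1) p.2) (cd _ h) m2
  have c5 : ContinuousAt (fun q : (ℝ × ℂ) × ℝ => kk (z q.1.1 q.1.2 - z q.1.1 ((q.2 : ℂ) + σ * Complex.I))) ((t, ζ), x) :=
    ContinuousAt.comp (f := fun q : (ℝ × ℂ) × ℝ => z q.1.1 q.1.2 - z q.1.1 ((q.2 : ℂ) + σ * Complex.I))
      (g := kk) (kk_differentiableAt hD).continuousAt (c3.sub c1)
  exact c5.smul (c4.sub c2)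

theorem Adm.FF_cont (B : Base Z R η c M ε) (A : Adm Z R ε κ z) :
    ContinuousOn (fun p : ℝ × ℂ => FF R (z p.1) p.2) (Om R κ) := by
  have hR := B.Rpos
  rintro ⟨t, ζ⟩ h
  apply ContinuousAt.continuousWithinAt
  have hOm := (Om_open R κ).mem_nhds h
  rcases lt_or_ge (-(R / 4)) ζ.im with hh | hh
  · have hs : |-(R / 2)| = R / 2 := by rw [abs_neg, abs_of_pos (by positivity)]
    have hn : {p : ℝ × ℂ | -(R / 4) < p.2.im} ∈ nhds (t, ζ) :=
      (isOpen_lt (f := fun _ : ℝ × ℂ => -(R / 4)) (g := fun p : ℝ × ℂ => p.2.im) (by fun_prop) (by fun_prop)).mem_nhds hh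
    have h1 := (A.JJ_cont B hs).continuousAt (x := (t, ζ)) (Filter.inter_mem hOm (by
      filter_upwards [hn] with p hp
      have hp' : -(R / 4) < p.2.im := hp
      change R / 4 < |_|
      rw [lt_abs]; left; linarith))
    refine h1.congr ?_
    filter_upwards [hOm, hn] with p hp hp2
    exact ((A.good p.1 hp.2).FF_low B hp2).symm
  · have hh : ζ.im < R / 4 := by linarith
    have hs : |R / 2| = R / 2 := by rw [abs_of_pos (by positivity)]
    have hn : {p : ℝ × ℂ | p.2.im < R / 4} ∈ nhds (t, ζ) :=
      (isOpen_lt (g := fun _ : ℝ × ℂ => (R / 4)) (f := fun p : ℝ × ℂ => p.2.im) (by fun_prop) (by fun_prop)).mem_nhds hh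
    have h1 := (A.JJ_cont B hs).continuousAt (x := (t, ζ)) (Filter.inter_mem hOm (by
      filter_upwards [hn] with p hp
      have hp' : p.2.im < R / 4 := hp
      change R / 4 < |_|
      rw [lt_abs]; right; linarith))
    refine h1.congr ?_
    filter_upwards [hOm, hn] with p hp hp2
    exact ((A.good p.1 hp.2).FF_up B hp2).symm

theorem Om_im {t : ℝ} {ζ : ℂ} (h : (t, ζ) ∈ Om R κ) : |ζ.im| < R - κ * |t| := by
  have := h.1; simp only at this; linarith

theorem Om_mk {t : ℝ} {ζ : ℂ} (ht : κ * |t| < R / 4) (h : |ζ.im| < R - κ * |t|) : (t, ζ) ∈ Om R κ :=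
  ⟨by simp only; linarith, ht⟩

theorem Adm.FF_diff (B : Base Z R η c M ε) (A : Adm Z R ε κ z) {p : ℝ × ℂ} (hp : p ∈ Om R κ) :
    DifferentiableAt ℂ (FF R (z p.1)) p.2 := (A.good p.1 hp.2).FF_diff B (Om_im hp)

theorem Adm.Phi_deriv (B : Base Z R η c M ε) (K : Kap R c M ε κ) (A : Adm Z R ε κ z) {t : ℝ} {ζ : ℂ}
    (h : (t, ζ) ∈ Om R κ) :
    HasDerivAt (PhiM Z R z t) (deriv Z ζ + ∫ s in (0 : ℝ)..t, deriv (FF R (z s)) ζ) ζ := by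
  have h1 := Om_int_deriv (F := fun s ζ => FF R (z s) ζ) K.pos (A.FF_cont B) (fun p hp => A.FF_diff B hp) h
  have h2 := (B.diff ζ (by have := Om_im h; have := mul_nonneg K.pos.le (abs_nonneg t); linarith)).hasDerivAt
  exact h2.add h1

theorem Adm.step (B : Base Z R η c M ε) (K : Kap R c M ε κ) (A : Adm Z R ε κ z) :
    Adm Z R ε κ (PhiM Z R z) := by
  have hκ := K.pos
  have hR := B.Rpos
  have hC : 0 ≤ CB R c M ε := by
    have := B.Mnn; have := B.cpos; have := B.εpos
    unfold CB KB; positivity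
  refine ⟨?_, fun t ht => ?_⟩
  · refine ContinuousOn.add ?_ (Om_int_cont (F := fun s ζ => FF R (z s) ζ) hκ (A.FF_cont B))
    rintro ⟨t, ζ⟩ h
    apply ContinuousAt.continuousWithinAt
    have h2 := (B.diff ζ (by have := Om_im h; have := mul_nonneg hκ.le (abs_nonneg t); linarith)).continuousAt
    exact ContinuousAt.comp (f := fun p : ℝ × ℂ => p.2) h2 continuousAt_snd
  · have ht0 := mul_nonneg hκ.le (abs_nonneg t)
    have hs : ∀ s, |s| ≤ |t| → κ * |s| ≤ κ * |t| := fun s h => mul_le_mul_of_nonneg_left h hκ.le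
    refine ⟨by linarith, by linarith, ?_, ?_, ?_, ?_, ?_⟩
    · intro ζ hζ
      exact (A.Phi_deriv B K (Om_mk ht hζ)).differentiableAt
    · intro ζ hζ
      rw [PhiM, PhiM, B.per ζ (by linarith), add_right_comm]
      congr 2
      apply intervalIntegral.integral_congr
      intro s hs'
      have := hs s (abs_le_of_uIcc hs')
      exact (A.good s (by linarith)).FF_per (by linarith)
    · intro x
      have hx : (t, (x : ℂ)) ∈ Om R κ := Om_mk ht (by simp; linarith)
      have hi := (Om_slice (F := fun s ζ => FF R (z s) ζ) hκ (A.FF_cont B) hx).intervalIntegrable (μ := volume)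
      have h1 : imL (∫ s in (0 : ℝ)..t, FF R (z s) x) = 0 := by
        rw [← ContinuousLinearMap.intervalIntegral_comp_comm _ hi]
        rw [intervalIntegral.integral_congr (g := fun _ => 0)]
        · simp
        · intro s hs'
          have := hs s (abs_le_of_uIcc hs')
          exact ((A.good s (by linarith)).FF_real B x).1
      have h2 := B.real x
      rw [imL_apply, Prod.mk_eq_zero] at h1
      simp [PhiM, h1.1, h1.2, h2.1, h2.2]
    · intro ζ hζ
      rw [PhiM, add_sub_cancel_left]
      have := time_int_one (κ := κ) (K := CB R c M ε) (c := R - |ζ.im|) (t := t)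
        (g := fun s => FF R (z s) ζ) hκ hC (by linarith) (fun s h => by
          have := hs s h
          have := (A.good s (by linarith)).FF_bd B (α := ζ) (by linarith)
          rwa [show R - κ * |s| - |ζ.im| = R - |ζ.im| - κ * |s| by ring] at this)
      refine this.trans (le_trans ?_ K.k1)
      have := abs_nonneg ζ.im
      gcongr
      linarith
    · intro ζ hζ
      rw [(A.Phi_deriv B K (Om_mk ht hζ)).deriv, add_sub_cancel_left]
      have := time_int_three (κ := κ) (K := 3 * CB R c M ε) (c := R - |ζ.im|) (t := t)
        (g := fun s => deriv (FF R (z s)) ζ) hκ (by positivity) (by linarith) (fun s h => by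
          have := hs s h
          have G := A.good s (by linarith)
          have := nagumo (ρ := R - κ * |s|) (f := FF R (z s)) (A := CB R c M ε) (ζ := ζ)
            (fun ζ hζ => G.FF_diff B hζ) (fun ζ hζ => G.FF_bd B hζ) (by linarith)
          rwa [show R - κ * |s| - |ζ.im| = R - |ζ.im| - κ * |s| by ring] at this)
      rw [show R - |ζ.im| - κ * |t| = R - κ * |t| - |ζ.im| by ring] at this
      refine this.trans ?_
      exact div_le_div_of_nonneg_right K.k2 (Real.sqrt_nonneg _)

/-- distance -/
def Dst (R κ δ : ℝ) (z v : ℝ → ℂ → ℂ × ℂ) : Prop :=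
  ∀ (t : ℝ) (ζ : ℂ), (t, ζ) ∈ Om R κ → ‖z t ζ - v t ζ‖ ≤ δ ∧
    ‖deriv (z t) ζ - deriv (v t) ζ‖ ≤ δ / √(R - κ * |t| - |ζ.im|)

theorem Adm.contr (B : Base Z R η c M ε) (K : Kap R c M ε κ) (A : Adm Z R ε κ z)
    {v : ℝ → ℂ → ℂ × ℂ} (V : Adm Z R ε κ v) {δ : ℝ} (hδ : 0 ≤ δ) (D : Dst R κ δ z v) :
    Dst R κ (δ / 2) (PhiM Z R z) (PhiM Z R v) := by
  have hκ := K.pos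
  have hR := B.Rpos
  have hC : 0 ≤ CL R c M ε := by
    have := B.Mnn; have := B.cpos; have := B.εpos
    unfold CL KL KB; positivity
  intro t ζ h
  have hζ := Om_im h
  have ht : κ * |t| < R / 4 := h.2
  have hs : ∀ s, |s| ≤ |t| → κ * |s| ≤ κ * |t| := fun s h => mul_le_mul_of_nonneg_left h hκ.le
  have hlip : ∀ s, |s| ≤ |t| → ∀ ζ : ℂ, |ζ.im| < R - κ * |s| →
      ‖FF R (z s) ζ - FF R (v s) ζ‖ ≤ CL R c M ε * δ / √(R - κ * |s| - |ζ.im|) := by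
    intro s h ζ hζ
    have := hs s h
    have hs4 : κ * |s| < R / 4 := by linarith
    exact (A.good s hs4).FF_lip B (V.good s hs4) (fun ζ hζ => (D s ζ (Om_mk hs4 hζ)).1)
      (fun ζ hζ => (D s ζ (Om_mk hs4 hζ)).2) hζ
  constructor
  · rw [PhiM, PhiM, add_sub_add_left_eq_sub, ← intervalIntegral.integral_sub
      (Om_slice (F := fun s ζ => FF R (z s) ζ) hκ (A.FF_cont B) h).intervalIntegrable (Om_slice (F := fun s ζ => FF R (v s) ζ) hκ (V.FF_cont B) h).intervalIntegrable]
    have := time_int_one (κ := κ) (K := CL R c M ε * δ) (c := R - |ζ.im|) (t := t)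
      (g := fun s => FF R (z s) ζ - FF R (v s) ζ) hκ (by positivity) (by linarith) (fun s h => by
        have := hs s h
        have := hlip s h ζ (by linarith)
        rwa [show R - κ * |s| - |ζ.im| = R - |ζ.im| - κ * |s| by ring] at this)
    refine this.trans ?_
    have h1 : √(R - |ζ.im|) ≤ √R := Real.sqrt_le_sqrt (by linarith [abs_nonneg ζ.im])
    calc 2 * (CL R c M ε * δ) / κ * √(R - |ζ.im|) ≤ 2 * (CL R c M ε * δ) / κ * √R := by gcongr
      _ = (2 * CL R c M ε / κ * √R) * δ := by ring
      _ ≤ 1 / 2 * δ := mul_le_mul_of_nonneg_right K.k3 hδ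
      _ = δ / 2 := by ring
  · rw [(A.Phi_deriv B K h).deriv, (V.Phi_deriv B K h).deriv, add_sub_add_left_eq_sub]
    have dz := contOn_deriv (G := fun s ζ => FF R (z s) ζ) (Om_open R κ) (A.FF_cont B) (fun p hp => A.FF_diff B hp)
    have dv := contOn_deriv (G := fun s ζ => FF R (v s) ζ) (Om_open R κ) (V.FF_cont B) (fun p hp => V.FF_diff B hp)
    rw [← intervalIntegral.integral_sub
      (Om_slice (F := fun s ζ => deriv (FF R (z s)) ζ) hκ dz h).intervalIntegrable
      (Om_slice (F := fun s ζ => deriv (FF R (v s)) ζ) hκ dv h).intervalIntegrable]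
    have := time_int_three (κ := κ) (K := 3 * (CL R c M ε * δ)) (c := R - |ζ.im|) (t := t)
      (g := fun s => deriv (FF R (z s)) ζ - deriv (FF R (v s)) ζ) hκ (by positivity) (by linarith) (fun s h => by
        have := hs s h
        have hs4 : κ * |s| < R / 4 := by linarith
        have G := A.good s hs4
        have G' := V.good s hs4
        have hζs : |ζ.im| < R - κ * |s| := by linarith
        have := nagumo (ρ := R - κ * |s|) (f := fun ζ => FF R (z s) ζ - FF R (v s) ζ) (A := CL R c M ε * δ) (ζ := ζ)
          (fun ζ hζ => (G.FF_diff B hζ).sub (G'.FF_diff B hζ)) (fun ζ hζ => hlip s h ζ hζ) hζs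
        rw [deriv_fun_sub (G.FF_diff B hζs) (G'.FF_diff B hζs)] at this
        rwa [show R - κ * |s| - |ζ.im| = R - |ζ.im| - κ * |s| by ring] at this)
    rw [show R - |ζ.im| - κ * |t| = R - κ * |t| - |ζ.im| by ring] at this
    refine this.trans ?_
    apply div_le_div_of_nonneg_right _ (Real.sqrt_nonneg _)
    calc 2 * (3 * (CL R c M ε * δ)) / κ = (2 * (3 * CL R c M ε) / κ) * δ := by ring
      _ ≤ 1 / 2 * δ := mul_le_mul_of_nonneg_right K.k4 hδ
      _ = δ / 2 := by ring
end

section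
open Filter

def zit (Z : ℂ → ℂ × ℂ) (R : ℝ) : ℕ → ℝ → ℂ → ℂ × ℂ
  | 0 => fun _ => Z
  | n + 1 => PhiM Z R (zit Z R n)

section
variable {Z : ℂ → ℂ × ℂ} {R η c M ε κ : ℝ}

theorem zit_adm (B : Base Z R η c M ε) (K : Kap R c M ε κ) (n : ℕ) : Adm Z R ε κ (zit Z R n) := by
  induction n with
  | zero =>
    have hR := B.Rpos
    have hε := B.εpos
    refine ⟨?_, fun t ht => ?_⟩
    · rintro ⟨t, ζ⟩ h
      apply ContinuousAt.continuousWithinAt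
      have h2 := (B.diff ζ (by have := Om_im h; have := mul_nonneg K.pos.le (abs_nonneg t); linarith)).continuousAt
      exact ContinuousAt.comp (f := fun p : ℝ × ℂ => p.2) h2 continuousAt_snd
    · have ht0 := mul_nonneg K.pos.le (abs_nonneg t)
      refine ⟨by linarith, by linarith, fun ζ hζ => B.diff ζ (by linarith),
        fun ζ hζ => B.per ζ (by linarith), B.real, fun ζ hζ => ?_, fun ζ hζ => ?_⟩
      · simp [zit, hε.le]
      · simp only [zit, sub_self, norm_zero]; positivity
  | succ n ih => exact ih.step B K

theorem zit_dst (B : Base Z R η c M ε) (K : Kap R c M ε κ) (n : ℕ) :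
    Dst R κ (ε / 2 ^ n) (zit Z R n) (zit Z R (n + 1)) := by
  have hε := B.εpos
  induction n with
  | zero =>
    intro t ζ h
    have G := (zit_adm B K 1).good t h.2
    rw [norm_sub_rev, norm_sub_rev (deriv _ _), pow_zero, div_one]
    exact ⟨G.near ζ (Om_im h), G.near' ζ (Om_im h)⟩
  | succ n ih =>
    have := (zit_adm B K n).contr B K (zit_adm B K (n + 1)) (by positivity) ih
    rw [pow_succ, ← div_div]
    exact this

/-- the limit -/
def zlim (Z : ℂ → ℂ × ℂ) (R : ℝ) (t : ℝ) (ζ : ℂ) : ℂ × ℂ := limUnder atTop (fun n => zit Z R n t ζ)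

theorem zlim_tendsto (B : Base Z R η c M ε) (K : Kap R c M ε κ) {t : ℝ} {ζ : ℂ} (h : (t, ζ) ∈ Om R κ) :
    Tendsto (fun n => zit Z R n t ζ) atTop (nhds (zlim Z R t ζ)) ∧
      ∀ n, ‖zit Z R n t ζ - zlim Z R t ζ‖ ≤ 2 * ε / 2 ^ n := by
  have hd : ∀ n, dist (zit Z R n t ζ) (zit Z R (n + 1) t ζ) ≤ 2 * ε / 2 / 2 ^ n := fun n => by
    rw [dist_eq_norm, mul_div_cancel_left₀ _ (by norm_num : (2 : ℝ) ≠ 0)]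
    exact (zit_dst B K n t ζ h).1
  have hc := cauchySeq_of_le_geometric_two hd
  have ht : Tendsto (fun n => zit Z R n t ζ) atTop (nhds (zlim Z R t ζ)) := hc.tendsto_limUnder
  refine ⟨ht, fun n => ?_⟩
  rw [← dist_eq_norm]
  exact dist_le_of_le_geometric_two_of_tendsto hd ht n

theorem pow_lim (ε : ℝ) : Tendsto (fun n : ℕ => 2 * ε / 2 ^ n) atTop (nhds 0) := by
  have := (tendsto_pow_atTop_nhds_zero_of_lt_one (r := (1 / 2 : ℝ)) (by norm_num) (by norm_num)).const_mul (2 * ε)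
  rw [mul_zero] at this
  refine this.congr fun n => ?_
  rw [one_div, inv_pow]; rfl

theorem zlim_unif (B : Base Z R η c M ε) (K : Kap R c M ε κ) :
    TendstoUniformlyOn (fun n (p : ℝ × ℂ) => zit Z R n p.1 p.2) (fun p => zlim Z R p.1 p.2) atTop (Om R κ) := by
  rw [Metric.tendstoUniformlyOn_iff]
  intro e he
  filter_upwards [(pow_lim ε).eventually (gt_mem_nhds he)] with n hn p hp
  rw [dist_comm, dist_eq_norm]
  exact ((zlim_tendsto B K hp).2 n).trans_lt hn

theorem strip_open (ρ : ℝ) : IsOpen {ζ : ℂ | |ζ.im| < ρ} := isOpen_lt (by fun_prop) continuous_const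

theorem zlim_slice (B : Base Z R η c M ε) (K : Kap R c M ε κ) {t : ℝ} (ht : κ * |t| < R / 4) :
    TendstoLocallyUniformlyOn (fun n ζ => zit Z R n t ζ) (zlim Z R t) atTop {ζ : ℂ | |ζ.im| < R - κ * |t|} := by
  apply TendstoUniformlyOn.tendstoLocallyUniformlyOn
  rw [Metric.tendstoUniformlyOn_iff]
  intro e he
  filter_upwards [(pow_lim ε).eventually (gt_mem_nhds he)] with n hn ζ hζ
  rw [dist_comm, dist_eq_norm]
  exact ((zlim_tendsto B K (Om_mk ht hζ)).2 n).trans_lt hn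

theorem zit_diffOn (B : Base Z R η c M ε) (K : Kap R c M ε κ) {t : ℝ} (ht : κ * |t| < R / 4) (n : ℕ) :
    DifferentiableOn ℂ (fun ζ => zit Z R n t ζ) {ζ : ℂ | |ζ.im| < R - κ * |t|} := fun ζ hζ =>
  (((zit_adm B K n).good t ht).diff ζ hζ).differentiableWithinAt

theorem zlim_deriv (B : Base Z R η c M ε) (K : Kap R c M ε κ) {t : ℝ} {ζ : ℂ} (h : (t, ζ) ∈ Om R κ) :
    Tendsto (fun n => deriv (zit Z R n t) ζ) atTop (nhds (deriv (zlim Z R t) ζ)) :=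
  ((zlim_slice B K h.2).deriv (Eventually.of_forall fun n => zit_diffOn B K h.2 n)
    (strip_open _)).tendsto_at (Om_im h)

theorem zlim_adm (B : Base Z R η c M ε) (K : Kap R c M ε κ) : Adm Z R ε κ (zlim Z R) := by
  have hR := B.Rpos
  refine ⟨(zlim_unif B K).continuousOn (Eventually.of_forall fun n => (zit_adm B K n).cont).frequently, fun t ht => ?_⟩
  have ht0 := mul_nonneg K.pos.le (abs_nonneg t)
  have G := fun n => (zit_adm B K n).good t ht
  have hlim := fun (ζ : ℂ) (hζ : |ζ.im| < R - κ * |t|) => (zlim_tendsto B K (Om_mk ht hζ)).1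
  refine ⟨by linarith, by linarith, ?_, ?_, ?_, ?_, ?_⟩
  · intro ζ hζ
    exact ((zlim_slice B K ht).differentiableOn (Eventually.of_forall fun n => zit_diffOn B K ht n)
      (strip_open _)).differentiableAt ((strip_open _).mem_nhds hζ)
  · intro ζ hζ
    refine tendsto_nhds_unique (hlim (ζ + ((2 * π : ℝ) : ℂ)) (by simpa using hζ)) ?_
    refine ((hlim ζ hζ).add_const _).congr fun n => ?_
    exact ((G n).per ζ hζ).symm
  · intro x
    have h1 := hlim x (by simp; linarith)
    have h2 : Tendsto (fun n => imL (zit Z R n t x)) atTop (nhds (imL (zlim Z R t x))) :=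
      (imL.continuous.tendsto _).comp h1
    have h3 : (fun n => imL (zit Z R n t x)) = fun _ => 0 := by
      ext1 n
      rw [imL_apply, ((G n).real x).1, ((G n).real x).2]; rfl
    rw [h3] at h2
    have h4 := tendsto_nhds_unique h2 tendsto_const_nhds
    rw [imL_apply, Prod.mk_eq_zero] at h4
    exact h4
  · intro ζ hζ
    exact le_of_tendsto ((hlim ζ hζ).sub_const _).norm (Eventually.of_forall fun n => (G n).near ζ hζ)
  · intro ζ hζ
    exact le_of_tendsto ((zlim_deriv B K (Om_mk ht hζ)).sub_const _).norm
      (Eventually.of_forall fun n => (G n).near' ζ hζ)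

theorem zlim_dst (B : Base Z R η c M ε) (K : Kap R c M ε κ) (n : ℕ) :
    Dst R κ (2 * ε / 2 ^ n) (zit Z R n) (zlim Z R) := by
  intro t ζ h
  refine ⟨(zlim_tendsto B K h).2 n, ?_⟩
  set d := √(R - κ * |t| - |ζ.im|)
  have hd : ∀ n, dist (deriv (zit Z R n t) ζ) (deriv (zit Z R (n + 1) t) ζ) ≤ (2 * (ε / d)) / 2 / 2 ^ n := fun n => by
    rw [dist_eq_norm, mul_div_cancel_left₀ _ (by norm_num : (2 : ℝ) ≠ 0)]
    refine (zit_dst B K n t ζ h).2.trans (le_of_eq ?_)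
    rw [div_right_comm]
  rw [← dist_eq_norm]
  refine (dist_le_of_le_geometric_two_of_tendsto hd (zlim_deriv B K h) n).trans (le_of_eq ?_)
  ring

theorem zlim_fix (B : Base Z R η c M ε) (K : Kap R c M ε κ) {t : ℝ} {ζ : ℂ} (h : (t, ζ) ∈ Om R κ) :
    zlim Z R t ζ = Z ζ + ∫ s in (0 : ℝ)..t, FF R (zlim Z R s) ζ := by
  have hε := B.εpos
  have h1 : Tendsto (fun n => zit Z R (n + 1) t ζ) atTop (nhds (zlim Z R t ζ)) :=
    (tendsto_add_atTop_iff_nat 1).2 (zlim_tendsto B K h).1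
  refine tendsto_nhds_unique h1 ?_
  rw [tendsto_iff_norm_sub_tendsto_zero]
  have h2 : Tendsto (fun n : ℕ => 2 * ε / 2 ^ n / 2) atTop (nhds 0) := by
    simpa using (pow_lim ε).div_const 2
  refine squeeze_zero (fun _ => norm_nonneg _) (fun n => ?_) h2
  exact ((zit_adm B K n).contr B K (zlim_adm B K) (by positivity) (zlim_dst B K n) t ζ h).1

theorem exists_Kap (B : Base Z R η c M ε) : ∃ κ, Kap R c M ε κ := by
  have hε := B.εpos
  have hR := B.Rpos
  have hM := B.Mnn
  have hc := B.cpos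
  have hC : 0 ≤ CB R c M ε := by unfold CB KB; positivity
  have hL : 0 ≤ CL R c M ε := by unfold CL KL KB; positivity
  have hlim : ∀ a : ℝ, Tendsto (fun κ : ℝ => a / κ) atTop (nhds 0) := fun a => tendsto_const_nhds.div_atTop tendsto_id
  have e1 := (hlim (2 * CB R c M ε * √R)).eventually (gt_mem_nhds hε)
  have e2 := (hlim (2 * (3 * CB R c M ε))).eventually (gt_mem_nhds hε)
  have e3 := (hlim (2 * CL R c M ε * √R)).eventually (gt_mem_nhds (by norm_num : (0 : ℝ) < 1 / 2))
  have e4 := (hlim (2 * (3 * CL R c M ε))).eventually (gt_mem_nhds (by norm_num : (0 : ℝ) < 1 / 2))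
  obtain ⟨κ, h1, h2, h3, h4, h5⟩ := (e1.and (e2.and (e3.and (e4.and (eventually_gt_atTop 0))))).exists
  refine ⟨κ, h5, ?_, h2.le, ?_, h4.le⟩
  · rw [div_mul_eq_mul_div]; exact h1.le
  · rw [div_mul_eq_mul_div]; exact h3.le
end

end

section
open Filter

/-- complexification -/
def cx (p : ℝ × ℝ) : ℂ × ℂ := ((p.1 : ℂ), (p.2 : ℂ))

theorem cx_norm (p : ℝ × ℝ) : ‖cx p‖ = ‖p‖ := by
  simp [cx, Prod.norm_def]

theorem ident {U : Set ℂ} (hU : IsOpen U) (hc : Convex ℝ U) {f g : ℂ → ℂ × ℂ}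
    (hf : DifferentiableOn ℂ f U) (hg : DifferentiableOn ℂ g U) {a : ℝ} (ha : (a : ℂ) ∈ U)
    (h : ∀ x : ℝ, (x : ℂ) ∈ U → f x = g x) : EqOn f g U := by
  refine (hf.analyticOnNhd hU).eqOn_of_preconnected_of_frequently_eq (hg.analyticOnNhd hU)
    hc.isPreconnected ha ?_
  have ht : Filter.Tendsto (fun x : ℝ => (x : ℂ)) (nhdsWithin a {a}ᶜ) (nhdsWithin (a : ℂ) {(a : ℂ)}ᶜ) := by
    apply tendsto_nhdsWithin_of_tendsto_nhds_of_eventually_within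
    · have : ContinuousAt (fun x : ℝ => (x : ℂ)) a := by fun_prop
      exact this.tendsto.mono_left nhdsWithin_le_nhds
    · filter_upwards [self_mem_nhdsWithin] with x hx
      have hx' : x ≠ a := hx
      change (x : ℂ) ≠ a
      exact_mod_cast hx'
  apply ht.frequently
  apply Filter.Eventually.frequently
  have : ContinuousAt (fun x : ℝ => (x : ℂ)) a := by fun_prop
  filter_upwards [nhdsWithin_le_nhds (this.preimage_mem_nhds (hU.mem_nhds ha))] with x hx
  exact h x hx

theorem local_ext {f : ℝ → ℝ × ℝ} {x : ℝ} (h : AnalyticAt ℝ f x) :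
    ∃ r > 0, ∃ g : ℂ → ℂ × ℂ, DifferentiableOn ℂ g (Metric.ball (x : ℂ) r) ∧
      ∀ y : ℝ, (y : ℂ) ∈ Metric.ball (x : ℂ) r → g y = cx (f y) := by
  obtain ⟨p, r, hp⟩ := h
  obtain ⟨r', hr'0, hr'⟩ := ENNReal.lt_iff_exists_nnreal_btwn.1 hp.r_pos
  have hr'pos : 0 < (r' : ℝ) := by exact_mod_cast hr'0
  obtain ⟨C, hC, hb⟩ := p.norm_mul_pow_le_of_lt_radius (hr'.trans_le hp.r_le)
  set s : ℝ := r' / 2 with hs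
  have hspos : 0 < s := by positivity
  set F : ℕ → ℂ → ℂ × ℂ := fun n ζ => (ζ - x) ^ n • cx (p.coeff n) with hF
  have hbd : ∀ n, ∀ ζ ∈ Metric.ball (x : ℂ) s, ‖F n ζ‖ ≤ C * (1 / 2) ^ n := by
    intro n ζ hζ
    rw [mem_ball_iff_norm] at hζ
    rw [hF]
    simp only
    rw [norm_smul, norm_pow, cx_norm]
    have h1 := hb n
    rw [FormalMultilinearSeries.norm_apply_eq_norm_coef] at h1
    calc ‖ζ - x‖ ^ n * ‖p.coeff n‖ ≤ s ^ n * ‖p.coeff n‖ := by gcongr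
      _ = (‖p.coeff n‖ * r' ^ n) * (1 / 2) ^ n := by rw [hs, div_pow, div_pow]; ring
      _ ≤ C * (1 / 2) ^ n := by gcongr
  have hsum : Summable (fun n : ℕ => C * (1 / 2 : ℝ) ^ n) := (summable_geometric_two).mul_left C
  refine ⟨s, hspos, fun ζ => ∑' n, F n ζ, ?_, ?_⟩
  · exact Complex.differentiableOn_tsum_of_summable_norm hsum (fun n => by
      apply Differentiable.differentiableOn
      intro ζ
      exact ((differentiableAt_id.sub_const _).pow n).smul_const _) Metric.isOpen_ball hbd
  · intro y hy
    have hy' : |y - x| < s := by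
      rw [mem_ball_iff_norm, ← Complex.ofReal_sub, Complex.norm_real] at hy
      exact hy
    have hmem : y - x ∈ Metric.eball (0 : ℝ) r := by
      rw [Metric.mem_eball, edist_zero_right]
      refine lt_trans ?_ hr'
      rw [enorm_eq_nnnorm]
      norm_cast
      rw [← NNReal.coe_lt_coe, coe_nnnorm, Real.norm_eq_abs]
      linarith
    have h1 := hp.hasSum hmem
    rw [add_sub_cancel] at h1
    have h2 : HasSum (fun n => cx (p n fun _ => y - x)) (cx (f y)) := by
      have hL := (Complex.ofRealCLM.prodMap Complex.ofRealCLM).hasSum h1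
      exact hL
    have h3 : (fun n => cx (p n fun _ => y - x)) = fun n => F n y := by
      ext1 n
      rw [FormalMultilinearSeries.apply_eq_pow_smul_coeff, hF]
      simp only [cx]
      ext <;> simp
    rw [h3] at h2
    exact h2.tsum_eq

theorem unif_ext {f : ℝ → ℝ × ℝ} (h : ∀ x, AnalyticAt ℝ f x) (hper : PerCurve f) :
    ∃ r > 0, ∀ x : ℝ, ∃ g : ℂ → ℂ × ℂ, DifferentiableOn ℂ g (Metric.ball (x : ℂ) r) ∧
      ∀ y : ℝ, (y : ℂ) ∈ Metric.ball (x : ℂ) r → g y = cx (f y) := by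
  choose r hr g hg1 hg2 using fun x => local_ext (h x)
  obtain ⟨δ, hδ, hL⟩ := lebesgue_number_lemma_of_metric
    (s := Set.image (fun x : ℝ => (x : ℂ)) (Icc 0 (2 * π))) (c := fun x : ℝ => Metric.ball (x : ℂ) (r x))
    (isCompact_Icc.image Complex.continuous_ofReal) (fun _ => Metric.isOpen_ball) (by
      rintro _ ⟨x, -, rfl⟩
      exact mem_iUnion.2 ⟨x, Metric.mem_ball_self (hr x)⟩)
  have hper' : ∀ (k : ℤ) (x : ℝ), f (x + 2 * π * k) = f x + (2 * π * k, 0) := by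
    intro k x
    induction k using Int.induction_on with
    | zero => simp [Prod.mk_zero_zero]
    | succ i ih =>
      have h1 := hper (x + 2 * π * (i : ℤ))
      rw [ih] at h1
      push_cast at h1 ⊢
      rw [show x + 2 * π * (i + 1) = x + 2 * π * i + 2 * π by ring, h1]
      ext <;> simp
      ring
    | pred i ih =>
      have h1 := hper (x + 2 * π * (-i - 1 : ℤ))
      rw [show x + 2 * π * ((-i - 1 : ℤ) : ℝ) + 2 * π = x + 2 * π * ((-i : ℤ) : ℝ) by push_cast; ring, ih] at h1
      rw [eq_comm, ← sub_eq_iff_eq_add] at h1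
      rw [← h1]
      ext <;> simp
      ring
  refine ⟨δ, hδ, fun x => ?_⟩
  obtain ⟨k, hk⟩ : ∃ k : ℤ, x - 2 * π * k ∈ Icc 0 (2 * π) := by
    obtain ⟨k, hk⟩ := exists_int_close (x - π)
    refine ⟨k, ?_⟩
    rw [abs_le] at hk
    constructor <;> linarith [hk.1, hk.2]
  obtain ⟨i, hi⟩ := hL ((x - 2 * π * k : ℝ) : ℂ) ⟨_, hk, rfl⟩
  have hmap : ∀ ζ ∈ Metric.ball (x : ℂ) δ, ζ - ((2 * π * k : ℝ) : ℂ) ∈ Metric.ball (i : ℂ) (r i) := by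
    intro ζ hζ
    apply hi
    rw [mem_ball_iff_norm] at hζ ⊢
    convert hζ using 2
    push_cast; ring
  refine ⟨fun ζ => g i (ζ - ((2 * π * k : ℝ) : ℂ)) + (((2 * π * k : ℝ) : ℂ), 0), ?_, ?_⟩
  · apply DifferentiableOn.add_const
    exact (hg1 i).comp (differentiableOn_id.sub_const _) hmap
  · intro y hy
    have h1 := hmap _ hy
    rw [← Complex.ofReal_sub] at h1
    have h2 := hper' k (y - 2 * π * k)
    rw [sub_add_cancel] at h2
    simp only
    rw [← Complex.ofReal_sub, hg2 i _ h1, h2]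
    ext <;> simp [cx]

theorem exists_ext {f : ℝ → ℝ × ℝ} (h : ∀ x, AnalyticAt ℝ f x) (hper : PerCurve f) :
    ∃ Z : ℂ → ℂ × ℂ, ∃ r > 0, (∀ ζ : ℂ, |ζ.im| < r → DifferentiableAt ℂ Z ζ) ∧
      (∀ ζ : ℂ, |ζ.im| < r → Z (ζ + ((2 * π : ℝ) : ℂ)) = Z ζ + (((2 * π : ℝ) : ℂ), 0)) ∧
      ∀ x : ℝ, Z x = cx (f x) := by
  obtain ⟨r, hr, hg⟩ := unif_ext h hper
  choose g hg1 hg2 using hg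
  have hmem : ∀ ζ : ℂ, |ζ.im| < r → ζ ∈ Metric.ball (ζ.re : ℂ) r := by
    intro ζ hζ
    rw [mem_ball_iff_norm]
    have : ζ - (ζ.re : ℂ) = ζ.im * Complex.I := by apply Complex.ext <;> simp
    rw [this, norm_mul, Complex.norm_I, mul_one, Complex.norm_real]
    exact hζ
  set Z : ℂ → ℂ × ℂ := fun ζ => g ζ.re ζ with hZ
  have hd : ∀ ζ : ℂ, |ζ.im| < r → DifferentiableAt ℂ Z ζ := by
    intro ζ hζ
    refine ((hg1 ζ.re).differentiableAt (Metric.isOpen_ball.mem_nhds (hmem ζ hζ))).congr_of_eventuallyEq ?_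
    filter_upwards [Metric.isOpen_ball.mem_nhds (hmem ζ hζ), (strip_open r).mem_nhds hζ] with w hw1 hw2
    have hw3 := hmem w hw2
    refine ident (Metric.isOpen_ball.inter Metric.isOpen_ball)
      ((convex_ball (w.re : ℂ) r).inter (convex_ball (ζ.re : ℂ) r))
      ((hg1 w.re).mono inter_subset_left) ((hg1 ζ.re).mono inter_subset_right) (a := w.re) ?_ ?_ ⟨hw3, hw1⟩
    · refine ⟨Metric.mem_ball_self hr, ?_⟩
      rw [mem_ball_iff_norm] at hw1 ⊢
      refine lt_of_le_of_lt ?_ hw1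
      rw [← Complex.ofReal_sub, Complex.norm_real, Real.norm_eq_abs]
      have := Complex.abs_re_le_norm (w - ζ.re)
      simpa using this
    · intro x hx
      rw [hg2 _ _ hx.1, hg2 _ _ hx.2]
  have hx : ∀ x : ℝ, Z x = cx (f x) := fun x => by
    simp only [hZ]
    rw [Complex.ofReal_re]
    exact hg2 x x (Metric.mem_ball_self hr)
  refine ⟨Z, r, hr, hd, ?_, hx⟩
  have hconv : Convex ℝ {ζ : ℂ | |ζ.im| < r} := by
    have : {ζ : ℂ | |ζ.im| < r} = Complex.imLm ⁻¹' (Ioo (-r) r) := by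
      ext x; simp [abs_lt]
    rw [this]
    exact (convex_Ioo _ _).linear_preimage _
  have := ident (strip_open r) hconv (f := fun ζ => Z (ζ + ((2 * π : ℝ) : ℂ)))
    (g := fun ζ => Z ζ + (((2 * π : ℝ) : ℂ), 0)) (a := 0)
    (fun ζ hζ => by
      apply DifferentiableAt.differentiableWithinAt
      rw [differentiableAt_comp_add_const]
      exact hd _ (by simpa using hζ))
    (fun ζ hζ => ((hd ζ hζ).add_const _).differentiableWithinAt)
    (by simp [hr])
    (fun x _ => by
      change Z (x + ((2 * π : ℝ) : ℂ)) = Z x + _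
      rw [← Complex.ofReal_add, hx, hx, hper]
      ext <;> simp [cx])
  exact this

end

section
open Filter

theorem per_bdd {E : Type*} [NormedAddCommGroup E] {g : ℂ → E} {R : ℝ}
    (hc : ∀ ζ : ℂ, |ζ.im| ≤ R → ContinuousAt g ζ)
    (hp : ∀ ζ : ℂ, |ζ.im| ≤ R → g (ζ + ((2 * π : ℝ) : ℂ)) = g ζ) :
    ∃ N, ∀ ζ : ℂ, |ζ.im| ≤ R → ‖g ζ‖ ≤ N := by
  have hK : IsCompact ((Icc (-π) π) ×ℂ (Icc (-R) R)) := isCompact_Icc.reProdIm isCompact_Icc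
  obtain ⟨N, hN⟩ := hK.exists_bound_of_continuousOn (f := g) (fun ζ hζ =>
    (hc ζ (abs_le.2 hζ.2)).continuousWithinAt)
  refine ⟨N, fun ζ hζ => ?_⟩
  have hP : Function.Periodic (fun x : ℝ => g ((x : ℂ) + ζ.im * Complex.I)) (2 * π) := by
    intro x
    have := hp ((x : ℂ) + ζ.im * Complex.I) (by rwa [line_im])
    simp only
    rw [← this]
    congr 1
    push_cast; ring
  obtain ⟨k, hk⟩ := exists_int_close ζ.re
  have h1 := hP.sub_int_mul_eq k (x := ζ.re)
  simp only [Complex.re_add_im] at h1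
  rw [← h1]
  refine hN _ ⟨?_, ?_⟩
  · change (_ : ℂ).re ∈ Icc (-π) π
    rw [line_re]
    rw [mul_comm]
    exact abs_le.1 hk
  · change (_ : ℂ).im ∈ Icc (-R) R
    rw [line_im]
    exact abs_le.1 hζ

theorem distTZ_ge {β : ℝ} (h : |β| ≤ π) : |β| ≤ distTZ β := by
  rw [distTZ]
  generalize round (β / (2 * π)) = k
  rcases eq_or_ne k 0 with rfl | hk
  · simp
  · have h1 : (1 : ℝ) ≤ |(k : ℝ)| := by exact_mod_cast Int.one_le_abs hk
    have h2 := abs_sub_abs_le_abs_sub (2 * π * (k : ℝ)) β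
    rw [abs_mul, abs_of_pos (by positivity : 0 < 2 * π), abs_sub_comm] at h2
    nlinarith [Real.pi_pos]

/-- quantitative regularity on a closed strip -/
structure Reg (Z : ℂ → ℂ × ℂ) (R N : ℝ) : Prop where
  Rnn : 0 ≤ R
  N1 : 1 ≤ N
  d1 : ∀ ζ : ℂ, |ζ.im| ≤ R → DifferentiableAt ℂ Z ζ
  d2 : ∀ ζ : ℂ, |ζ.im| ≤ R → DifferentiableAt ℂ (deriv Z) ζ
  b1 : ∀ ζ : ℂ, |ζ.im| ≤ R → ‖deriv Z ζ‖ ≤ N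
  b2 : ∀ ζ : ℂ, |ζ.im| ≤ R → ‖deriv (deriv Z) ζ‖ ≤ N

section
variable {Z : ℂ → ℂ × ℂ} {R N : ℝ}

theorem Reg.l1 (H : Reg Z R N) {α γ : ℂ} (hα : |α.im| ≤ R) (hγ : |γ.im| ≤ R) :
    ‖Z α - Z γ‖ ≤ N * ‖α - γ‖ :=
  (convex_im_strip R).norm_image_sub_le_of_norm_deriv_le (𝕜 := ℂ) (fun x hx => H.d1 x hx)
    (fun x hx => H.b1 x hx) hγ hα

theorem Reg.l1' (H : Reg Z R N) {α γ : ℂ} (hα : |α.im| ≤ R) (hγ : |γ.im| ≤ R) :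
    ‖deriv Z α - deriv Z γ‖ ≤ N * ‖α - γ‖ :=
  (convex_im_strip R).norm_image_sub_le_of_norm_deriv_le (𝕜 := ℂ) (fun x hx => H.d2 x hx)
    (fun x hx => H.b2 x hx) hγ hα

theorem Reg.l2 (H : Reg Z R N) {α γ : ℂ} (hα : |α.im| ≤ R) (hγ : |γ.im| ≤ R) :
    ‖Z α - Z γ - (α - γ) • deriv Z γ‖ ≤ N * ‖α - γ‖ * ‖α - γ‖ := by
  have hN := H.N1
  have hdd : ∀ x : ℂ, |x.im| ≤ R → HasDerivAt (fun ζ => Z ζ - ζ • deriv Z γ) (deriv Z x - deriv Z γ) x := by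
    intro x hx
    have h1 := (H.d1 x hx).hasDerivAt
    have h2 := (hasDerivAt_id x).smul_const (deriv Z γ)
    rw [one_smul] at h2
    exact h1.sub h2
  have := ((convex_im_strip R).inter (convex_closedBall γ ‖α - γ‖)).norm_image_sub_le_of_norm_deriv_le (𝕜 := ℂ)
    (f := fun ζ => Z ζ - ζ • deriv Z γ) (C := N * ‖α - γ‖) (x := γ) (y := α)
    (fun x hx => (hdd x hx.1).differentiableAt)
    (fun x hx => by
      rw [(hdd x hx.1).deriv]
      refine (H.l1' hx.1 hγ).trans ?_
      have := hx.2
      rw [mem_closedBall_iff_norm] at this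
      gcongr)
    ⟨hγ, Metric.mem_closedBall_self (norm_nonneg _)⟩ ⟨hα, by rw [mem_closedBall_iff_norm]⟩
  have e : Z α - Z γ - (α - γ) • deriv Z γ =
      (Z α - α • deriv Z γ) - (Z γ - γ • deriv Z γ) := by
    rw [sub_smul]; abel
  rw [e]; exact this

theorem Reg.l3 (H : Reg Z R N) {α γ : ℂ} (hα : |α.im| ≤ R) (hγ : |γ.im| ≤ R) :
    ‖Z α - Z γ - (α - γ) • deriv Z (γ.re : ℂ)‖ ≤ N * (‖α - γ‖ + |γ.im|) * ‖α - γ‖ := by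
  have h1 := H.l2 hα hγ
  have h2 := H.l1' hγ (γ := (γ.re : ℂ)) (by simpa using H.Rnn)
  have e : γ - (γ.re : ℂ) = γ.im * Complex.I := by apply Complex.ext <;> simp
  rw [e, norm_mul, Complex.norm_I, mul_one, Complex.norm_real, Real.norm_eq_abs] at h2
  have e2 : Z α - Z γ - (α - γ) • deriv Z (γ.re : ℂ) =
      (Z α - Z γ - (α - γ) • deriv Z γ) + (α - γ) • (deriv Z γ - deriv Z (γ.re : ℂ)) := by
    rw [smul_sub]; abel
  rw [e2]
  refine (norm_add_le _ _).trans ?_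
  rw [norm_smul]
  have := mul_le_mul_of_nonneg_left h2 (norm_nonneg (α - γ))
  nlinarith

def qq (Z : ℂ → ℂ × ℂ) (x : ℝ) : ℂ := ((deriv Z x).1 ^ 2 + (deriv Z x).2 ^ 2) / 2
def KE (N : ℝ) : ℝ := 2 * Real.exp (N + 1) * (2 * N + 1) * N + 2 * Real.exp (N + 1) * N ^ 3

theorem Reg.ke (H : Reg Z R N) {α γ : ℂ} {e : ℂ × ℂ} {η : ℝ} (hα : |α.im| ≤ R) (hγ : |γ.im| ≤ R)
    (h1 : ‖α - γ‖ ≤ 1) (hη0 : 0 ≤ η) (hη1 : η ≤ 1) (he : ‖e‖ ≤ η * ‖α - γ‖) :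
    ‖Dk (Z α - Z γ + e) - (α - γ) ^ 2 * qq Z γ.re‖ ≤ KE N * (‖α - γ‖ + |γ.im| + η) * ‖α - γ‖ ^ 2 := by
  have hN := H.N1
  have hd := norm_nonneg (α - γ)
  set d := ‖α - γ‖ with hdd
  set p := Z α - Z γ + e with hp
  set q := (α - γ) • deriv Z (γ.re : ℂ) with hq
  have hy := abs_nonneg γ.im
  have np : ‖p‖ ≤ (N + 1) * d := by
    refine (norm_add_le _ _).trans ?_
    have := H.l1 hα hγ
    have : η * d ≤ 1 * d := mul_le_mul_of_nonneg_right hη1 hd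
    linarith
  have nq : ‖q‖ ≤ N * d := by
    rw [hq, norm_smul, mul_comm]
    exact mul_le_mul_of_nonneg_right (H.b1 _ (by simpa using H.Rnn)) hd
  have npq : ‖p - q‖ ≤ N * (d + |γ.im| + η) * d := by
    have e1 : p - q = (Z α - Z γ - q) + e := by rw [hp]; abel
    rw [e1]
    refine (norm_add_le _ _).trans ?_
    have h3 := H.l3 hα hγ
    have : η * d ≤ N * η * d := by
      have : 0 ≤ η * d := by positivity
      nlinarith
    have e2 : N * (d + |γ.im| + η) * d = N * (d + |γ.im|) * d + N * η * d := by ring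
    rw [e2]
    linarith
  have D1 := Dk_quad (p := p) (q := q) (N := N + 1) (by nlinarith) (by nlinarith)
  have D2 := Dk_taylor (p := q) (N := N + 1) (by nlinarith)
  have e3 : (q.1 ^ 2 + q.2 ^ 2) / 2 = (α - γ) ^ 2 * qq Z γ.re := by
    rw [hq, qq]; simp; ring
  rw [e3] at D2
  have b1 : 2 * Real.exp (N + 1) * (‖p‖ + ‖q‖) * ‖p - q‖ ≤
      2 * Real.exp (N + 1) * ((2 * N + 1) * d) * (N * (d + |γ.im| + η) * d) := by
    gcongr
    linarith
  have b2 : 2 * Real.exp (N + 1) * ‖q‖ ^ 3 ≤ 2 * Real.exp (N + 1) * (N ^ 3 * (d + |γ.im| + η) * d ^ 2) := by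
    have : ‖q‖ ^ 3 ≤ (N * d) ^ 3 := by gcongr
    have h5 : (N * d) ^ 3 ≤ N ^ 3 * (d + |γ.im| + η) * d ^ 2 := by
      have : (N * d) ^ 3 = N ^ 3 * d * d ^ 2 := by ring
      rw [this]
      gcongr
      linarith
    gcongr
    linarith
  calc _ ≤ ‖Dk p - Dk q‖ + ‖Dk q - (α - γ) ^ 2 * qq Z γ.re‖ := norm_sub_le_norm_sub_add_norm_sub _ _ _
    _ ≤ _ := add_le_add (D1.trans b1) (D2.trans b2)
    _ = _ := by rw [KE]; ring

theorem Reg.qlow (H : Reg Z R N) {c₀ : ℝ}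
    (hr : ∀ a b : ℝ, |a - b| ≤ π → c₀ * |a - b| ^ 2 ≤ ‖Dk (Z a - Z b)‖) (x : ℝ) : c₀ ≤ ‖qq Z x‖ := by
  have hN := H.N1
  have hK : 0 < KE N := by unfold KE; positivity
  apply le_of_forall_pos_le_add
  intro δ hδ
  set h := min 1 (δ / KE N) with hh
  have hpos : 0 < h := lt_min one_pos (by positivity)
  have h1 : h ≤ 1 := min_le_left _ _
  have h2 : KE N * h ≤ δ := by
    have : h ≤ δ / KE N := min_le_right _ _
    rw [le_div_iff₀ hK] at this
    linarith
  have e1 : ‖((x + h : ℝ) : ℂ) - (x : ℂ)‖ = h := by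
    rw [← Complex.ofReal_sub, Complex.norm_real, add_sub_cancel_left, Real.norm_eq_abs, abs_of_pos hpos]
  have k := H.ke (α := ((x + h : ℝ) : ℂ)) (γ := (x : ℂ)) (e := 0) (η := 0) (by simpa using H.Rnn) (by simpa using H.Rnn)
    (by rw [e1]; exact h1) le_rfl zero_le_one (by simp)
  rw [e1, add_zero, Complex.ofReal_im, Complex.ofReal_re, abs_zero, add_zero, add_zero] at k
  have r := hr (x + h) x (by rw [add_sub_cancel_left, abs_of_pos hpos]; linarith [Real.pi_gt_three])
  rw [add_sub_cancel_left, abs_of_pos hpos] at r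
  have n1 := norm_sub_norm_le (Dk (Z ((x + h : ℝ) : ℂ) - Z x)) ((((x + h : ℝ) : ℂ) - (x : ℂ)) ^ 2 * qq Z x)
  rw [norm_mul, norm_pow, e1] at n1
  have : h ^ 2 * c₀ ≤ h ^ 2 * (‖qq Z x‖ + KE N * h) := by nlinarith
  have := le_of_mul_le_mul_left this (by positivity)
  linarith

theorem Reg.cac (H : Reg Z R N) (hR : 0 < R) {c₀ : ℝ} (hc : 0 < c₀)
    (hr : ∀ a b : ℝ, |a - b| ≤ π → c₀ * |a - b| ^ 2 ≤ ‖Dk (Z a - Z b)‖) :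
    ∃ r > 0, r ≤ R ∧ ∃ η > 0, ∃ c > 0, ∀ (α γ : ℂ) (e : ℂ × ℂ), |α.im| < r → |γ.im| < r → |α.re - γ.re| ≤ π →
    ‖e‖ ≤ η * ‖α - γ‖ → c * ‖α - γ‖ ^ 2 ≤ ‖Dk (Z α - Z γ + e)‖ := by
  have hN := H.N1
  have hK : 0 < KE N := by unfold KE; positivity
  set ρ := min 1 (c₀ / (8 * KE N)) with hρ
  have hρ0 : 0 < ρ := lt_min one_pos (by positivity)
  have hρ1 : ρ ≤ 1 := min_le_left _ _
  have hρ2 : KE N * ρ ≤ c₀ / 8 := by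
    have : ρ ≤ c₀ / (8 * KE N) := min_le_right _ _
    rw [le_div_iff₀ (by positivity)] at this
    linarith
  set E := 2 * Real.exp (6 * N + 6) * (12 * N + 12) with hE
  have hE0 : 0 < E := by positivity
  set μ := min (ρ / 4) (c₀ * ρ ^ 2 / (8 * E * (2 * N + 6))) with hμ
  have hμ0 : 0 < μ := lt_min (by positivity) (by positivity)
  have hμ1 : μ ≤ ρ / 4 := min_le_left _ _
  have hμ2 : E * (2 * N + 6) * μ ≤ c₀ * ρ ^ 2 / 8 := by
    have : μ ≤ c₀ * ρ ^ 2 / (8 * E * (2 * N + 6)) := min_le_right _ _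
    rw [le_div_iff₀ (by positivity)] at this
    linarith
  refine ⟨min R μ, lt_min hR hμ0, min_le_left _ _, μ, hμ0, min (c₀ / 2) (c₀ * ρ ^ 2 / 8 / 36),
    lt_min (by positivity) (by positivity), ?_⟩
  intro α γ e hα hγ hre he
  have hα1 : |α.im| ≤ R := hα.le.trans (min_le_left _ _)
  have hγ1 : |γ.im| ≤ R := hγ.le.trans (min_le_left _ _)
  have hα2 : |α.im| ≤ μ := hα.le.trans (min_le_right _ _)
  have hγ2 : |γ.im| ≤ μ := hγ.le.trans (min_le_right _ _)
  have hd := norm_nonneg (α - γ)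
  rcases le_total ‖α - γ‖ ρ with hn | hn
  · have k := H.ke hα1 hγ1 (hn.trans hρ1) hμ0.le (by linarith) he
    have ql := H.qlow hr γ.re
    have n1 := norm_sub_norm_le ((α - γ) ^ 2 * qq Z γ.re) (Dk (Z α - Z γ + e))
    rw [norm_sub_rev, norm_mul, norm_pow] at n1
    have b1 : KE N * (‖α - γ‖ + |γ.im| + μ) ≤ c₀ / 2 := by
      have : ‖α - γ‖ + |γ.im| + μ ≤ 4 * ρ := by linarith
      have := mul_le_mul_of_nonneg_left this hK.le
      linarith
    have b2 := mul_le_mul_of_nonneg_right b1 (sq_nonneg ‖α - γ‖)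
    have b3 := mul_le_mul_of_nonneg_left ql (sq_nonneg ‖α - γ‖)
    have b4 := mul_le_mul_of_nonneg_right (min_le_left (c₀ / 2) (c₀ * ρ ^ 2 / 8 / 36)) (sq_nonneg ‖α - γ‖)
    nlinarith
  · have hdec : α - γ = ((α.re - γ.re : ℝ) : ℂ) + ((α.im - γ.im : ℝ) : ℂ) * Complex.I := by
      apply Complex.ext <;> simp
    have him : |α.im - γ.im| ≤ 2 * μ := (abs_sub _ _).trans (by linarith)
    have hnle : ‖α - γ‖ ≤ |α.re - γ.re| + 2 * μ := by
      rw [hdec]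
      refine (norm_add_le _ _).trans ?_
      rw [norm_mul, Complex.norm_I, mul_one, Complex.norm_real, Complex.norm_real, Real.norm_eq_abs, Real.norm_eq_abs]
      linarith
    have h6 : ‖α - γ‖ ≤ 6 := by linarith [Real.pi_lt_four]
    have hrel : ρ / 2 ≤ |α.re - γ.re| := by linarith
    have r := hr α.re γ.re hre
    have e0 : ∀ ζ : ℂ, ‖ζ - (ζ.re : ℂ)‖ = |ζ.im| := by
      intro ζ
      have : ζ - (ζ.re : ℂ) = ζ.im * Complex.I := by apply Complex.ext <;> simp
      rw [this, norm_mul, Complex.norm_I, mul_one, Complex.norm_real]; rfl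
    have a1 := H.l1 hα1 (γ := (α.re : ℂ)) (by simpa using H.Rnn)
    have a2 := H.l1 hγ1 (γ := (γ.re : ℂ)) (by simpa using H.Rnn)
    rw [e0] at a1 a2
    have a3 := H.l1 hα1 hγ1
    have a4 := H.l1 (α := (α.re : ℂ)) (γ := (γ.re : ℂ)) (by simpa using H.Rnn) (by simpa using H.Rnn)
    rw [← Complex.ofReal_sub, Complex.norm_real, Real.norm_eq_abs] at a4
    have he6 : ‖e‖ ≤ μ * 6 := he.trans (by gcongr)
    have np : ‖Z α - Z γ + e‖ ≤ 6 * N + 6 := by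
      refine (norm_add_le _ _).trans ?_
      have : N * ‖α - γ‖ ≤ N * 6 := by gcongr
      linarith
    have nq : ‖Z (α.re : ℂ) - Z (γ.re : ℂ)‖ ≤ 6 * N + 6 := by
      have : N * |α.re - γ.re| ≤ N * 6 := by
        gcongr; linarith [Real.pi_lt_four]
      linarith
    have npq : ‖(Z α - Z γ + e) - (Z (α.re : ℂ) - Z (γ.re : ℂ))‖ ≤ (2 * N + 6) * μ := by
      have e1 : (Z α - Z γ + e) - (Z (α.re : ℂ) - Z (γ.re : ℂ)) =
        (Z α - Z (α.re : ℂ)) - (Z γ - Z (γ.re : ℂ)) + e := by abel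
      rw [e1]
      refine (norm_add_le _ _).trans ?_
      have := norm_sub_le (Z α - Z (α.re : ℂ)) (Z γ - Z (γ.re : ℂ))
      have : N * |α.im| ≤ N * μ := by gcongr
      have : N * |γ.im| ≤ N * μ := by gcongr
      linarith
    have D := Dk_quad np nq
    have D2 : 2 * Real.exp (6 * N + 6) * (‖Z α - Z γ + e‖ + ‖Z (α.re : ℂ) - Z (γ.re : ℂ)‖) *
        ‖(Z α - Z γ + e) - (Z (α.re : ℂ) - Z (γ.re : ℂ))‖ ≤ E * ((2 * N + 6) * μ) := by
      have hs : ‖Z α - Z γ + e‖ + ‖Z (α.re : ℂ) - Z (γ.re : ℂ)‖ ≤ 12 * N + 12 := by linarith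
      rw [hE]
      exact mul_le_mul (mul_le_mul_of_nonneg_left hs (by positivity)) npq (norm_nonneg _) (by positivity)
    have n1 := norm_sub_norm_le (Dk (Z (α.re : ℂ) - Z (γ.re : ℂ))) (Dk (Z α - Z γ + e))
    rw [norm_sub_rev] at n1
    have b1 : c₀ * (ρ / 2) ^ 2 ≤ c₀ * |α.re - γ.re| ^ 2 := by gcongr
    have b2 := min_le_right (c₀ / 2) (c₀ * ρ ^ 2 / 8 / 36)
    have b3 : min (c₀ / 2) (c₀ * ρ ^ 2 / 8 / 36) * ‖α - γ‖ ^ 2 ≤ c₀ * ρ ^ 2 / 8 / 36 * 6 ^ 2 := by gcongr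
    linarith
end

theorem Dk_cx (f : ℝ → ℝ × ℝ) (a b : ℝ) : Dk (cx (f a) - cx (f b)) = (Qden f a (a - b) : ℂ) := by
  rw [Dk, Qden, sub_sub_cancel]
  simp [cx]

theorem exists_Base {f : ℝ → ℝ × ℝ} (h : ∀ x, AnalyticAt ℝ f x) (hper : PerCurve f) (hac : ArcChord f) :
    ∃ (Z : ℂ → ℂ × ℂ) (R η c M ε : ℝ), Base Z R η c M ε ∧ ∀ x : ℝ, Z x = cx (f x) := by
  obtain ⟨Z, r, hr, hd, hp, hx⟩ := exists_ext h hper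
  have hdo : DifferentiableOn ℂ Z {ζ : ℂ | |ζ.im| < r} := fun ζ hζ => (hd ζ hζ).differentiableWithinAt
  have hdo2 := hdo.deriv (strip_open r)
  have hdo3 := hdo2.deriv (strip_open r)
  have hd2 : ∀ ζ : ℂ, |ζ.im| < r → DifferentiableAt ℂ (deriv Z) ζ := fun ζ hζ =>
    hdo2.differentiableAt ((strip_open r).mem_nhds hζ)
  have hd3 : ∀ ζ : ℂ, |ζ.im| < r → DifferentiableAt ℂ (deriv (deriv Z)) ζ := fun ζ hζ =>
    hdo3.differentiableAt ((strip_open r).mem_nhds hζ)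
  have hp2 : ∀ ζ : ℂ, |ζ.im| < r → deriv Z (ζ + ((2 * π : ℝ) : ℂ)) = deriv Z ζ := by
    intro ζ hζ
    rw [← deriv_comp_add_const]
    have : (fun x => Z (x + ((2 * π : ℝ) : ℂ))) =ᶠ[nhds ζ] fun x => Z x + (((2 * π : ℝ) : ℂ), 0) := by
      filter_upwards [(strip_open r).mem_nhds hζ] with x hx using hp x hx
    rw [this.deriv_eq, deriv_add_const]
  have hp3 : ∀ ζ : ℂ, |ζ.im| < r → deriv (deriv Z) (ζ + ((2 * π : ℝ) : ℂ)) = deriv (deriv Z) ζ := by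
    intro ζ hζ
    rw [← deriv_comp_add_const]
    have : (fun x => deriv Z (x + ((2 * π : ℝ) : ℂ))) =ᶠ[nhds ζ] deriv Z := by
      filter_upwards [(strip_open r).mem_nhds hζ] with x hx using hp2 x hx
    rw [this.deriv_eq]
  have hlt : ∀ ζ : ℂ, |ζ.im| ≤ r / 2 → |ζ.im| < r := fun ζ hζ => by linarith
  obtain ⟨N0, hN0⟩ := per_bdd (R := r / 2) (g := fun ζ => Z ζ - (ζ, (0 : ℂ)))
    (fun ζ hζ => by
      have := (hd ζ (hlt ζ hζ)).continuousAt
      exact this.sub (by fun_prop))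
    (fun ζ hζ => by
      rw [hp ζ (hlt ζ hζ)]
      ext <;> simp)
  obtain ⟨N1, hN1⟩ := per_bdd (R := r / 2) (g := deriv Z)
    (fun ζ hζ => (hd2 ζ (hlt ζ hζ)).continuousAt) (fun ζ hζ => hp2 ζ (hlt ζ hζ))
  obtain ⟨N2, hN2⟩ := per_bdd (R := r / 2) (g := deriv (deriv Z))
    (fun ζ hζ => (hd3 ζ (hlt ζ hζ)).continuousAt) (fun ζ hζ => hp3 ζ (hlt ζ hζ))
  have m0 : (0 : ℝ) ≤ N0 := (norm_nonneg _).trans (hN0 0 (by simp; linarith))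
  have m1 : (0 : ℝ) ≤ N1 := (norm_nonneg _).trans (hN1 0 (by simp; linarith))
  have m2 : (0 : ℝ) ≤ N2 := (norm_nonneg _).trans (hN2 0 (by simp; linarith))
  set N := 1 + r + N0 + N1 + N2 with hN
  have H : Reg Z (r / 2) N := ⟨by positivity, by linarith, fun ζ hζ => hd ζ (hlt ζ hζ), fun ζ hζ => hd2 ζ (hlt ζ hζ),
    fun ζ hζ => (hN1 ζ hζ).trans (by linarith), fun ζ hζ => (hN2 ζ hζ).trans (by linarith)⟩
  obtain ⟨C, hC, hac⟩ := hac
  have hrr : ∀ a b : ℝ, |a - b| ≤ π → (1 / (2 * C)) * |a - b| ^ 2 ≤ ‖Dk (Z a - Z b)‖ := by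
    intro a b hab
    rw [hx, hx, Dk_cx, Complex.norm_real]
    refine le_trans ?_ (le_abs_self _)
    have h1 := hac a (a - b)
    have h2 : |a - b| ^ 2 ≤ distTZ (a - b) ^ 2 := by
      have := distTZ_ge hab
      gcongr
    rw [one_div_mul_eq_div, div_le_iff₀ (by positivity)]
    linarith
  obtain ⟨R, hR, hRr, η, hη, c, hc, hcac⟩ := H.cac (by positivity) (by positivity) hrr
  refine ⟨Z, R, η, c, N, min 1 (min (η * R / 8) (η * √(R / 4))), ?_, hx⟩
  have hle : ∀ ζ : ℂ, |ζ.im| < R → |ζ.im| ≤ r / 2 := fun ζ hζ => by linarith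
  have hs : 0 < √(R / 4) := Real.sqrt_pos.2 (by positivity)
  refine ⟨hR, hη, hc, by linarith, lt_min one_pos (lt_min (by positivity) (by positivity)), ?_, ?_, ?_, ?_, ?_, ?_, ?_, ?_, ?_, hcac⟩
  · have : min 1 (min (η * R / 8) (η * √(R / 4))) ≤ η * R / 8 := (min_le_right _ _).trans (min_le_left _ _)
    linarith
  · exact (min_le_right _ _).trans (min_le_right _ _)
  · exact min_le_left _ _
  · exact fun ζ hζ => H.d1 ζ (hle ζ hζ)
  · exact fun ζ hζ => hp ζ (hlt ζ (hle ζ hζ))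
  · intro x
    rw [hx]; simp [cx]
  · intro ζ hζ
    have h1 := (Complex.abs_im_le_norm _).trans ((norm_fst_le _).trans (hN0 ζ (hle ζ hζ)))
    have e : (Z ζ).1.im = (Z ζ - (ζ, (0 : ℂ))).1.im + ζ.im := by simp
    rw [e]
    refine (abs_add_le _ _).trans ?_
    linarith
  · intro ζ hζ
    have h1 := (Complex.abs_re_le_norm _).trans ((norm_snd_le _).trans (hN0 ζ (hle ζ hζ)))
    have e : (Z ζ).2.re = (Z ζ - (ζ, (0 : ℂ))).2.re := by simp
    rw [e]
    linarith
  · exact fun ζ hζ => H.b1 ζ (hle ζ hζ)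

end

section
open Filter

section
variable {Z : ℂ → ℂ × ℂ} {R η c M ε κ ρ : ℝ} {z : ℂ → ℂ × ℂ}

theorem Good.cx_eq (G : Good Z R ε ρ z) (x : ℝ) : z x = cx (reL (z x)) := by
  apply Prod.ext <;> apply Complex.ext <;> simp [cx, (G.real x).1, (G.real x).2]

theorem Good.arcChord (B : Base Z R η c M ε) (G : Good Z R ε ρ z) :
    ArcChord (fun x : ℝ => reL (z x)) := by
  have hc := B.cpos
  have hR := B.Rpos
  refine ⟨1 / (2 * c), by positivity, fun α β => ?_⟩
  have hp := Real.pi_pos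
  set k := round (β / (2 * π)) with hk
  have hle : |β - 2 * π * (k : ℝ)| ≤ π := by
    have h := abs_sub_round (β / (2 * π))
    have e : β - 2 * π * (k : ℝ) = 2 * π * (β / (2 * π) - (round (β / (2 * π)) : ℝ)) := by
      field_simp; rfl
    rw [e, abs_mul, abs_of_pos (by positivity)]
    nlinarith
  have hb : z (((α - β + 2 * π * k : ℝ)) : ℂ) = z ((α - β : ℝ) : ℂ) + (((2 * π * k : ℝ) : ℂ), 0) := by
    have := per_int G.per k ((α - β : ℝ) : ℂ) (G.abs0 B _)
    rw [← this]; push_cast; rfl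
  have h1 := G.inner B (α := (α : ℂ)) (γ := ((α - β + 2 * π * k : ℝ) : ℂ))
    (by rw [Complex.ofReal_im, abs_zero]; positivity) (by rw [Complex.ofReal_im, abs_zero]; positivity)
    (by rw [Complex.ofReal_re, Complex.ofReal_re]
        have e : α - (α - β + 2 * π * k) = β - 2 * π * k := by ring
        rw [e]; exact hle)
  have e : (α : ℂ) - ((α - β + 2 * π * k : ℝ) : ℂ) = ((β - 2 * π * k : ℝ) : ℂ) := by push_cast; ring
  rw [e, Complex.norm_real, Real.norm_eq_abs, hb] at h1
  have e2 : Dk (z α - (z ((α - β : ℝ) : ℂ) + (((2 * π * k : ℝ) : ℂ), 0))) = Dk (z α - z ((α - β : ℝ) : ℂ)) := by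
    have h := Dk_add_int (z α - (z ((α - β : ℝ) : ℂ) + (((2 * π * k : ℝ) : ℂ), 0))) k
    rw [← h]; congr 1; abel
  rw [e2, G.cx_eq α, G.cx_eq (α - β)] at h1
  have h3 := Dk_cx (fun x : ℝ => reL (z x)) α (α - β)
  rw [sub_sub_cancel] at h3
  rw [h3, Complex.norm_real, Real.norm_eq_abs] at h1
  have hq : 0 ≤ Qden (fun x : ℝ => reL (z x)) α β := by
    rw [Qden]
    have := Real.one_le_cosh ((reL (z α)).2 - (reL (z ((α - β : ℝ) : ℂ))).2)
    have := Real.cos_le_one ((reL (z α)).1 - (reL (z ((α - β : ℝ) : ℂ))).1)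
    linarith
  rw [abs_of_nonneg hq] at h1
  rw [distTZ, one_div_mul_eq_div, le_div_iff₀ (by positivity)]
  linarith

theorem hasDerivAt_reL_fst {f : ℂ → ℂ × ℂ} {x : ℝ} (h : DifferentiableAt ℂ f x) :
    HasDerivAt (fun y : ℝ => (reL (f y)).1) (reL (deriv f x)).1 x :=
  (ContinuousLinearMap.fst ℝ ℝ ℝ).hasFDerivAt.comp_hasDerivAt x (hasDerivAt_reL h)

theorem hasDerivAt_reL_snd {f : ℂ → ℂ × ℂ} {x : ℝ} (h : DifferentiableAt ℂ f x) :
    HasDerivAt (fun y : ℝ => (reL (f y)).2) (reL (deriv f x)).2 x :=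
  (ContinuousLinearMap.snd ℝ ℝ ℝ).hasFDerivAt.comp_hasDerivAt x (hasDerivAt_reL h)

theorem Good.v1_eq (B : Base Z R η c M ε) (G : Good Z R ε ρ z) (a : ℝ) :
    (reL (FF R z a)).1 = v1 (fun x : ℝ => reL (z x)) a := by
  have hR := B.Rpos
  obtain ⟨h1, h2⟩ := G.rect B a (σ := -(R / 2)) (by rw [abs_neg, abs_of_pos (by positivity)])
  rw [G.FF_low B (by simp [hR]), ← h2]
  change ((ContinuousLinearMap.fst ℝ ℝ ℝ).comp reL) _ = _
  rw [← ContinuousLinearMap.intervalIntegral_comp_comm _ h1]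
  have hP : Function.Periodic (fun x : ℝ => ((ContinuousLinearMap.fst ℝ ℝ ℝ).comp reL) (ig z a x)) (2 * π) := by
    intro x
    have := G.ig_per_right (a : ℂ) (G.abs0 B x)
    simp only
    rw [← this]; push_cast; rfl
  have h3 := hP.intervalIntegral_add_eq (a - π) (-π)
  have e1 : a - π + 2 * π = a + π := by ring
  have e2 : -π + 2 * π = π := by ring
  rw [e1, e2] at h3
  rw [h3, v1]
  congr 1
  ext1 x
  change (reL (ig z a x)).1 = _
  have hd : ∀ y : ℝ, deriv (fun b : ℝ => (reL (z b)).1) y = (reL (deriv z y)).1 := fun y =>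
    (hasDerivAt_reL_fst (G.diff _ (G.abs0 B y))).deriv
  rw [(G.ig_real B a x).2, hd, hd]
  simp only [Prod.smul_fst, Prod.fst_sub, smul_eq_mul, reL_apply]
  ring

theorem Good.analytic (B : Base Z R η c M ε) (G : Good Z R ε ρ z) (a : ℝ) :
    AnalyticAt ℝ (fun x : ℝ => reL (z x)) a := by
  have hd : DifferentiableOn ℂ z {ζ : ℂ | |ζ.im| < ρ} := fun ζ hζ => (G.diff ζ hζ).differentiableWithinAt
  have h1 : AnalyticAt ℂ z (a : ℂ) := hd.analyticAt ((strip_open ρ).mem_nhds (G.abs0 B a))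
  have h2 : AnalyticAt ℝ z (Complex.ofRealCLM a) := h1.restrictScalars
  exact reL.analyticAt _ |>.comp (h2.comp (Complex.ofRealCLM.analyticAt a))
end

end

section
open Filter

section
variable {Z : ℂ → ℂ × ℂ} {R η c M ε κ : ℝ}

theorem Om_real {t : ℝ} (hR : 0 < R) (h : κ * |t| < R / 4) (x : ℝ) : (t, (x : ℂ)) ∈ Om R κ :=
  Om_mk h (by simp; linarith)

theorem zlim_zero (B : Base Z R η c M ε) (K : Kap R c M ε κ) {ζ : ℂ} (h : |ζ.im| < R) :
    zlim Z R 0 ζ = Z ζ := by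
  rw [zlim_fix B K (Om_mk (t := 0) (by simpa using B.Rpos) (by simpa using h))]
  simp

theorem zlim_deriv_eq (B : Base Z R η c M ε) (K : Kap R c M ε κ) {t : ℝ} {ζ : ℂ} (h : (t, ζ) ∈ Om R κ) :
    deriv (zlim Z R t) ζ = deriv Z ζ + ∫ s in (0 : ℝ)..t, deriv (FF R (zlim Z R s)) ζ := by
  have h1 := (zlim_adm B K).Phi_deriv B K h
  have h2 : zlim Z R t =ᶠ[nhds ζ] PhiM Z R (zlim Z R) t := by
    filter_upwards [(strip_open (R - κ * |t|)).mem_nhds (Om_im h)] with x hx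
    exact zlim_fix B K (Om_mk h.2 hx)
  rw [h2.deriv_eq, h1.deriv]

theorem zlim_gcont (B : Base Z R η c M ε) (K : Kap R c M ε κ) :
    ContinuousOn (fun p : ℝ × ℂ => deriv (FF R (zlim Z R p.1)) p.2) (Om R κ) :=
  contOn_deriv (G := fun s ζ => FF R (zlim Z R s) ζ) (Om_open R κ) ((zlim_adm B K).FF_cont B)
    (fun _ hp => (zlim_adm B K).FF_diff B hp)

theorem zlim_time (B : Base Z R η c M ε) (K : Kap R c M ε κ) {t : ℝ} {ζ : ℂ} (h : (t, ζ) ∈ Om R κ) :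
    HasDerivAt (fun s => zlim Z R s ζ) (FF R (zlim Z R t) ζ) t := by
  have hF := (zlim_adm B K).FF_cont B
  have hev : ∀ᶠ s in nhds t, (s, ζ) ∈ Om R κ :=
    (Continuous.prodMk_left ζ).continuousAt.eventually ((Om_open R κ).mem_nhds h)
  have hca : ∀ s, (s, ζ) ∈ Om R κ → ContinuousAt (fun s => FF R (zlim Z R s) ζ) s := fun s hs =>
    ContinuousAt.comp (g := fun p : ℝ × ℂ => FF R (zlim Z R p.1) p.2) (f := fun s : ℝ => (s, ζ))
      (hF.continuousAt ((Om_open R κ).mem_nhds hs)) (Continuous.prodMk_left ζ).continuousAt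
  have ho : IsOpen {s : ℝ | (s, ζ) ∈ Om R κ} := (Om_open R κ).preimage (Continuous.prodMk_left ζ)
  have h1 : HasDerivAt (fun u => ∫ s in (0 : ℝ)..u, FF R (zlim Z R s) ζ) (FF R (zlim Z R t) ζ) t :=
    intervalIntegral.integral_hasDerivAt_right
      (Om_slice (F := fun s ζ => FF R (zlim Z R s) ζ) K.pos hF h).intervalIntegrable
      ((ContinuousOn.stronglyMeasurableAtFilter ho (fun s hs => (hca s hs).continuousWithinAt)) t h)
      (hca t h)
  refine (h1.const_add (Z ζ)).congr_of_eventuallyEq ?_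
  filter_upwards [hev] with s hs
  exact zlim_fix B K hs

/-- the slope of the first coordinate along the flow -/
def slp (Z : ℂ → ℂ × ℂ) (R t α : ℝ) : ℝ := (reL (deriv (zlim Z R t) α)).1
def slpv (Z : ℂ → ℂ × ℂ) (R t α : ℝ) : ℝ := (reL (deriv (FF R (zlim Z R t)) α)).1

theorem cont_emb {F : ℝ × ℂ → ℂ × ℂ} {t α : ℝ} (h : ContinuousAt F (t, (α : ℂ))) :
    ContinuousAt (fun p : ℝ × ℝ => F (p.1, (p.2 : ℂ))) (t, α) :=
  ContinuousAt.comp (g := F) (f := fun p : ℝ × ℝ => (p.1, (p.2 : ℂ))) (x := (t, α)) h (by fun_prop)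

theorem slp_cont (B : Base Z R η c M ε) (K : Kap R c M ε κ) {t : ℝ} (h : κ * |t| < R / 4) (α : ℝ) :
    ContinuousAt (fun p : ℝ × ℝ => slp Z R p.1 p.2) (t, α) := by
  have h1 : ContinuousAt (fun p : ℝ × ℂ => deriv (zlim Z R p.1) p.2) (t, (α : ℂ)) :=
    (zlim_adm B K).deriv_cont.continuousAt ((Om_open R κ).mem_nhds (Om_real B.Rpos h α))
  have h2 := cont_emb (F := fun p : ℝ × ℂ => deriv (zlim Z R p.1) p.2) h1
  exact ContinuousAt.comp (g := fun v : ℂ × ℂ => (reL v).1) (continuous_fst.comp reL.continuous).continuousAt h2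

theorem rr_cont (B : Base Z R η c M ε) (K : Kap R c M ε κ) {t : ℝ} (h : κ * |t| < R / 4) (α : ℝ) :
    ContinuousAt (fun p : ℝ × ℝ => (reL (deriv (zlim Z R p.1) p.2)).2) (t, α) := by
  have h1 : ContinuousAt (fun p : ℝ × ℂ => deriv (zlim Z R p.1) p.2) (t, (α : ℂ)) :=
    (zlim_adm B K).deriv_cont.continuousAt ((Om_open R κ).mem_nhds (Om_real B.Rpos h α))
  have h2 := cont_emb (F := fun p : ℝ × ℂ => deriv (zlim Z R p.1) p.2) h1
  exact ContinuousAt.comp (g := fun v : ℂ × ℂ => (reL v).2) (continuous_snd.comp reL.continuous).continuousAt h2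

theorem slpv_cont (B : Base Z R η c M ε) (K : Kap R c M ε κ) {t : ℝ} (h : κ * |t| < R / 4) (α : ℝ) :
    ContinuousAt (fun p : ℝ × ℝ => slpv Z R p.1 p.2) (t, α) := by
  have h1 : ContinuousAt (fun p : ℝ × ℂ => deriv (FF R (zlim Z R p.1)) p.2) (t, (α : ℂ)) :=
    (zlim_gcont B K).continuousAt ((Om_open R κ).mem_nhds (Om_real B.Rpos h α))
  have h2 := cont_emb (F := fun p : ℝ × ℂ => deriv (FF R (zlim Z R p.1)) p.2) h1
  exact ContinuousAt.comp (g := fun v : ℂ × ℂ => (reL v).1) (continuous_fst.comp reL.continuous).continuousAt h2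

theorem slp_eq (B : Base Z R η c M ε) (K : Kap R c M ε κ) {t : ℝ} (h : κ * |t| < R / 4) (α : ℝ) :
    slp Z R t α = slp Z R 0 α + ∫ s in (0 : ℝ)..t, slpv Z R s α := by
  have hm := Om_real B.Rpos h α
  have hm0 := Om_mono K.pos hm (s := 0) (by simp)
  have hi := (Om_slice (F := fun s ζ => deriv (FF R (zlim Z R s)) ζ) K.pos (zlim_gcont B K) hm).intervalIntegrable
    (μ := volume)
  have h2 := ContinuousLinearMap.intervalIntegral_comp_comm ((ContinuousLinearMap.fst ℝ ℝ ℝ).comp reL) hi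
  rw [slp, slp, zlim_deriv_eq B K hm, zlim_deriv_eq B K hm0, intervalIntegral.integral_same, add_zero, map_add, Prod.fst_add]
  congr 1
  exact h2.symm

theorem slpv_cont_slice (B : Base Z R η c M ε) (K : Kap R c M ε κ) {t : ℝ} (h : κ * |t| < R / 4) (α : ℝ) :
    ContinuousOn (fun s => slpv Z R s α) (uIcc 0 t) := by
  have h1 := Om_slice (F := fun s ζ => deriv (FF R (zlim Z R s)) ζ) K.pos (zlim_gcont B K) (Om_real B.Rpos h α)
  exact (continuous_fst.comp reL.continuous).comp_continuousOn h1

theorem slp_per (B : Base Z R η c M ε) (K : Kap R c M ε κ) {t : ℝ} (h : κ * |t| < R / 4) :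
    Function.Periodic (slp Z R t) (2 * π) := by
  intro α
  have G := (zlim_adm B K).good t h
  have := G.per' (G.abs0 B α)
  rw [slp, slp, ← this]; push_cast; rfl

theorem signs (B : Base Z R η c M ε) (K : Kap R c M ε κ)
    (hRT : ∀ α : ℝ, (¬ ∃ k : ℤ, α = 2 * π * k) → 0 < slp Z R 0 α)
    (hv : slp Z R 0 0 = 0) (hg : slpv Z R 0 0 < 0) :
    ∃ τ > 0, κ * τ < R / 4 ∧ (∀ t, 0 < t → t ≤ τ → ∀ α, 0 < slp Z R (-t) α) ∧
      (∀ t, 0 < t → t ≤ τ → slp Z R t 0 < 0) := by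
  have hR := B.Rpos
  have hκ := K.pos
  have hp := Real.pi_pos
  have h0 : κ * |(0 : ℝ)| < R / 4 := by simpa using hR
  obtain ⟨δ, hδ, hδg⟩ := Metric.eventually_nhds_iff.1
    ((slpv_cont B K h0 0).tendsto.eventually (gt_mem_nhds hg))
  have hδg' : ∀ s α : ℝ, |s| < δ → |α| < δ → slpv Z R s α < 0 := by
    intro s α h1 h2
    refine hδg (y := (s, α)) ?_
    rw [Prod.dist_eq]
    simpa [Real.dist_eq] using ⟨h1, h2⟩
  have hS : IsCompact (Icc (-π) π ∩ {α : ℝ | δ ≤ |α|}) :=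
    isCompact_Icc.inter_right (isClosed_le continuous_const continuous_abs)
  have hq0 : ∀ α ∈ Icc (-π) π ∩ {α : ℝ | δ ≤ |α|}, 0 < slp Z R 0 α := by
    rintro α ⟨hα, hα2⟩
    apply hRT
    rintro ⟨k, rfl⟩
    have hα3 : δ ≤ |2 * π * (k : ℝ)| := hα2
    have hk : k ≠ 0 := by
      rintro rfl
      simp at hα3; linarith
    have h1 : (1 : ℝ) ≤ |(k : ℝ)| := by exact_mod_cast Int.one_le_abs hk
    have h2 := abs_le.2 hα
    rw [abs_mul, abs_of_pos (by positivity)] at h2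
    nlinarith
  have hev := hS.eventually_forall_of_forall_eventually (x₀ := (0 : ℝ)) (P := fun t α => 0 < slp Z R t α)
    (fun α hα => (slp_cont B K h0 α).tendsto.eventually (lt_mem_nhds (hq0 α hα)))
  obtain ⟨δ₂, hδ₂, hev⟩ := Metric.eventually_nhds_iff.1 hev
  refine ⟨min (R / (8 * κ)) (min (δ / 2) (δ₂ / 2)), by positivity, ?_, ?_, ?_⟩
  · have : κ * min (R / (8 * κ)) (min (δ / 2) (δ₂ / 2)) ≤ κ * (R / (8 * κ)) :=
      mul_le_mul_of_nonneg_left (min_le_left _ _) hκ.le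
    have e : κ * (R / (8 * κ)) = R / 8 := by field_simp
    linarith
  all_goals
    intro t ht htτ
    have t1 : t ≤ R / (8 * κ) := htτ.trans (min_le_left _ _)
    have t2 : t ≤ δ / 2 := htτ.trans ((min_le_right _ _).trans (min_le_left _ _))
    have t3 : t ≤ δ₂ / 2 := htτ.trans ((min_le_right _ _).trans (min_le_right _ _))
    have t4 : κ * t < R / 4 := by
      have : κ * t ≤ κ * (R / (8 * κ)) := mul_le_mul_of_nonneg_left t1 hκ.le
      have e : κ * (R / (8 * κ)) = R / 8 := by field_simp
      linarith
  · have t5 : κ * |(-t)| < R / 4 := by rwa [abs_neg, abs_of_pos ht]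
    have hmain : ∀ α ∈ Icc (-π) π, 0 < slp Z R (-t) α := by
      intro α hα
      rcases le_or_gt δ |α| with h | h
      · exact hev (y := -t) (by rw [Real.dist_eq, sub_zero, abs_neg, abs_of_pos ht]; linarith) α ⟨hα, h⟩
      · have hq : 0 ≤ slp Z R 0 α := by
          by_cases hk : ∃ k : ℤ, α = 2 * π * k
          · obtain ⟨k, hk⟩ := hk
            have h2 := abs_le.2 hα
            have hk0 : k = 0 := by
              by_contra hne
              have h1 : (1 : ℝ) ≤ |(k : ℝ)| := by exact_mod_cast Int.one_le_abs hne
              rw [hk, abs_mul, abs_of_pos (by positivity)] at h2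
              nlinarith
            rw [hk, hk0]; simp [hv]
          · exact (hRT α hk).le
        rw [slp_eq B K t5, intervalIntegral.integral_symm, ← intervalIntegral.integral_neg]
        have hc := slpv_cont_slice B K t5 α
        rw [uIcc_comm] at hc
        have : 0 < ∫ s in (-t)..0, -slpv Z R s α := by
          apply intervalIntegral.intervalIntegral_pos_of_pos_on
          · exact hc.intervalIntegrable.neg
          · intro s hs
            have := hδg' s α (by rw [abs_lt]; constructor <;> linarith [hs.1, hs.2]) h
            linarith
          · linarith
        linarith
    intro α
    obtain ⟨k, hk⟩ := exists_int_close α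
    have h1 := hmain _ (abs_le.1 hk)
    have h2 := (slp_per B K t5).sub_int_mul_eq (x := α) k
    rw [← h2]
    rwa [mul_comm (k : ℝ)]
  · have t5 : κ * |t| < R / 4 := by rwa [abs_of_pos ht]
    rw [slp_eq B K t5, hv, zero_add]
    have hc := slpv_cont_slice B K t5 0
    have : 0 < ∫ s in (0 : ℝ)..t, -slpv Z R s 0 := by
      apply intervalIntegral.intervalIntegral_pos_of_pos_on
      · exact hc.intervalIntegrable.neg
      · intro s hs
        have := hδg' s 0 (by rw [abs_lt]; constructor <;> linarith [hs.1, hs.2]) (by simpa using hδ)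
        linarith
      · linarith
    rw [intervalIntegral.integral_neg] at this
    linarith
end

end

/-- Starting from an analytic odd curve with a vertical tangent at the origin and
`∂_α v₁(0) < 0`, the Muskat solution exists on `[-T,T]` for all small `T > 0`,
is real analytic, satisfies the arc-chord condition, is in the stable regime for
negative times and in the unstable regime (`∂_α z₁(0,t) < 0`) for positive times. -/
theorem muskat_turning (z₀ : ℝ → ℝ × ℝ)
    (han : ∀ α : ℝ, AnalyticAt ℝ z₀ α) (hper : PerCurve z₀) (hac : ArcChord z₀)
    (hodd : ∀ α : ℝ, z₀ (-α) = - z₀ α)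
    (hRT : ∀ α : ℝ, (¬ ∃ k : ℤ, α = 2 * π * k) → 0 < deriv (fun a => (z₀ a).1) α)
    (hvert : deriv (fun a => (z₀ a).1) 0 = 0)
    (hz2 : 0 < deriv (fun a => (z₀ a).2) 0)
    (hneg : ∃ d : ℝ, d < 0 ∧ HasDerivAt (v1 z₀) d 0) :
    ∃ T₀ > 0, ∀ T : ℝ, 0 < T → T ≤ T₀ →
      ∃ z : ℝ → ℝ → ℝ × ℝ,
        IsMuskatSol z (Icc (-T) T) ∧ z 0 = z₀ ∧
        (∀ t ∈ Icc (-T) T, (∀ α : ℝ, AnalyticAt ℝ (z t) α) ∧ ArcChord (z t)) ∧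
        (∀ t ∈ Ioc (0 : ℝ) T, ∀ α : ℝ, 0 < deriv (fun a => (z (-t) a).1) α) ∧
        (∀ t ∈ Ioc (0 : ℝ) T, deriv (fun a => (z t a).1) 0 < 0) ∧
        (∀ t ∈ Icc (-T) T, 0 < deriv (fun a => (z t a).2) 0) := by
  obtain ⟨Z, R, η, c, M, ε, B, hZ⟩ := exists_Base han hper hac
  obtain ⟨κ, K⟩ := exists_Kap B
  have A := zlim_adm B K
  have hR := B.Rpos
  have hκ := K.pos
  have h0 : κ * |(0 : ℝ)| < R / 4 := by simpa using hR
  have hz0 : (fun x : ℝ => reL (zlim Z R 0 x)) = z₀ := by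
    ext1 x
    rw [zlim_zero B K (by simpa using hR), hZ]
    simp [cx]
  have G0 := A.good 0 h0
  have hd1 : ∀ t, κ * |t| < R / 4 → ∀ α : ℝ, deriv (fun a : ℝ => (reL (zlim Z R t a)).1) α = slp Z R t α :=
    fun t ht α => (hasDerivAt_reL_fst ((A.good t ht).diff _ ((A.good t ht).abs0 B α))).deriv
  have hd2 : ∀ t, κ * |t| < R / 4 → ∀ α : ℝ, deriv (fun a : ℝ => (reL (zlim Z R t a)).2) α =
      (reL (deriv (zlim Z R t) α)).2 :=
    fun t ht α => (hasDerivAt_reL_snd ((A.good t ht).diff _ ((A.good t ht).abs0 B α))).deriv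
  have hq0 : ∀ α : ℝ, deriv (fun a => (z₀ a).1) α = slp Z R 0 α := by
    intro α
    rw [← hd1 0 h0, ← hz0]
  have hr0 : 0 < (reL (deriv (zlim Z R 0) ((0 : ℝ) : ℂ))).2 := by
    rw [← hd2 0 h0]
    rw [← hz0] at hz2
    exact hz2
  have hg : slpv Z R 0 0 < 0 := by
    obtain ⟨d, hd, hdv⟩ := hneg
    have h1 := hasDerivAt_reL_fst (f := FF R (zlim Z R 0)) (x := 0) (G0.FF_diff B (G0.abs0 B 0))
    have e : (fun y : ℝ => (reL (FF R (zlim Z R 0) y)).1) = v1 z₀ := by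
      ext1 y
      rw [G0.v1_eq B, hz0]
    rw [e] at h1
    have : slpv Z R 0 0 = d := h1.unique hdv
    rw [this]; exact hd
  obtain ⟨τ, hτ, hτκ, hs1, hs2⟩ := signs B K (fun α hα => by rw [← hq0]; exact hRT α hα)
    (by rw [← hq0]; exact hvert) hg
  obtain ⟨δ, hδ, hδr⟩ := Metric.eventually_nhds_iff.1
    ((rr_cont B K h0 0).tendsto.eventually (lt_mem_nhds hr0))
  refine ⟨min τ (δ / 2), lt_min hτ (by positivity), fun T hT hTle => ?_⟩
  have T1 : T ≤ τ := hTle.trans (min_le_left _ _)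
  have T2 : T ≤ δ / 2 := hTle.trans (min_le_right _ _)
  have hT : ∀ t ∈ Icc (-T) T, κ * |t| < R / 4 := by
    intro t ht
    have := mul_le_mul_of_nonneg_left ((abs_le.2 ht).trans T1) hκ.le
    linarith
  refine ⟨fun t x => reL (zlim Z R t x), ?_, hz0, ?_, ?_, ?_, ?_⟩
  · intro t ht α
    have h1 := zlim_time B K (Om_real hR (hT t ht) α)
    rw [← ((A.good t (hT t ht)).FF_real B α).2]
    exact (reL.hasFDerivAt.comp_hasDerivAt t h1).hasDerivWithinAt
  · intro t ht
    exact ⟨(A.good t (hT t ht)).analytic B, (A.good t (hT t ht)).arcChord B⟩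
  · intro t ht α
    rw [hd1 (-t) (hT _ ⟨by linarith [ht.2], by linarith [ht.1, ht.2]⟩)]
    exact hs1 t ht.1 (ht.2.trans T1) α
  · intro t ht
    rw [hd1 t (hT _ ⟨by linarith [ht.1, ht.2], ht.2⟩)]
    exact hs2 t ht.1 (ht.2.trans T1)
  · intro t ht
    rw [hd2 t (hT t ht)]
    refine hδr (y := (t, 0)) ?_
    rw [Prod.dist_eq, Real.dist_eq, sub_zero, dist_self, max_lt_iff]
    exact ⟨by linarith [abs_le.2 ht], hδ⟩
end
end

section
/- Let z = (z₁, z₂) be a C² curve with z₁(α) − α and z₂(α) 2π-periodic, satisfying the arc-chord condition. Then for every α: PV ∫_{−π}^{π} [sinh(z₂(α) − z₂(β)) / (cosh(z₂(α) − z₂(β)) − cos(z₁(α) − z₁(β)))] ∂_β z₂(β) dβ = − PV ∫_{−π}^{π} [sin(z₁(α) − z₁(β)) / (cosh(z₂(α) − z₂(β)) − cos(z₁(α) − z₁(β)))] ∂_β z₁(β) dβ, where PV denotes the principal value lim_{ε→0⁺} of the integral restricted to {β : dist(α − β, 2πℤ) > ε}. -/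
open Real MeasureTheory Set Filter Topology

noncomputable section

/-- The principal-value integration region: `β ∈ (-π, π]` with `α - β` at
distance more than `ε` from `2πℤ`. -/
def pvRegion (α ε : ℝ) : Set ℝ := {β : ℝ | β ∈ Ioc (-π) π ∧ ε < distTZ (α - β)}


theorem aux_dslope_diff {u : ℝ → ℝ} (hu : ContDiff ℝ 2 u) :
    DifferentiableAt ℝ (dslope u 0) 0 := by
  have hd : Differentiable ℝ u := hu.differentiable (by norm_num)
  have hd' : Differentiable ℝ (deriv u) := by
    have : ContDiff ℝ 1 (deriv u) := by
      have h2 : ContDiff ℝ (1 + 1) u := by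
        have : (1 + 1 : WithTop ℕ∞) = 2 := by norm_num
        rw [this]; exact hu
      exact (contDiff_succ_iff_deriv.1 h2).2.2
    exact this.differentiable (by norm_num)
  have key : HasDerivAt (dslope u 0) (deriv (deriv u) 0 / 2) 0 := by
    rw [hasDerivAt_iff_tendsto_slope]
    have h1 : Tendsto (fun t : ℝ => (u t - u 0 - t * deriv u 0) / t ^ 2) (𝓝[≠] 0)
        (𝓝 (deriv (deriv u) 0 / 2)) := by
      apply HasDerivAt.lhopital_zero_nhdsNE (f' := fun t => deriv u t - deriv u 0)
        (g' := fun t => 2 * t)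
      · refine Eventually.of_forall fun t => ?_
        have := ((hd t).hasDerivAt.sub_const (u 0)).sub ((hasDerivAt_id t).mul_const (deriv u 0))
        rw [one_mul] at this
        exact this
      · refine Eventually.of_forall fun t => ?_
        simpa using hasDerivAt_pow 2 t
      · filter_upwards [self_mem_nhdsWithin] with t ht
        simpa using ht
      · apply tendsto_nhdsWithin_of_tendsto_nhds
        have : Continuous (fun t => u t - u 0 - t * deriv u 0) := by
          have := hd.continuous
          fun_prop
        simpa using this.tendsto 0
      · apply tendsto_nhdsWithin_of_tendsto_nhds
        have : Continuous (fun t : ℝ => t ^ 2) := by fun_prop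
        simpa using this.tendsto 0
      · have := (hasDerivAt_iff_tendsto_slope.1 (hd' 0).hasDerivAt).div_const 2
        refine this.congr' ?_
        filter_upwards [self_mem_nhdsWithin] with t ht
        have ht : t ≠ 0 := by simpa using ht
        simp only [slope_def_field]
        field_simp
        ring
    refine h1.congr' ?_
    filter_upwards [self_mem_nhdsWithin] with t ht
    have ht : t ≠ 0 := by simpa using ht
    rw [slope_def_field, dslope_same, dslope_of_ne _ ht, slope_def_field]
    field_simp
    ring
  exact key.differentiableAt

theorem aux_dslope_cont {u : ℝ → ℝ} (hu : ContDiff ℝ 2 u) : Continuous (dslope u 0) := by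
  have hd : Differentiable ℝ u := hu.differentiable (by norm_num)
  rw [← continuousOn_univ, continuousOn_dslope univ_mem]
  exact ⟨hd.continuous.continuousOn, hd 0⟩

theorem aux_dist_eq (β : ℝ) :
    distTZ β = 2 * π * min (Int.fract (β / (2 * π))) (1 - Int.fract (β / (2 * π))) := by
  have hp := Real.two_pi_pos
  rw [← abs_sub_round_eq_min, distTZ]
  rw [← abs_of_pos hp, ← abs_mul, abs_of_pos hp]
  congr 1
  field_simp

theorem aux_dist_per (β : ℝ) : distTZ (β + 2 * π) = distTZ β := by
  have hp := Real.two_pi_pos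
  rw [aux_dist_eq, aux_dist_eq, add_div, div_self hp.ne', Int.fract_add_one]

theorem aux_dist_of_mem {β : ℝ} (h0 : 0 ≤ β) (h1 : β < 2 * π) :
    distTZ β = min β (2 * π - β) := by
  have hp := Real.two_pi_pos
  have : Int.fract (β / (2 * π)) = β / (2 * π) :=
    Int.fract_eq_self.2 ⟨by positivity, (div_lt_one hp).2 h1⟩
  rw [aux_dist_eq, this, mul_min_of_nonneg _ _ hp.le]
  congr 1 <;> field_simp

theorem aux_dist_neg {s : ℝ} (h0 : 0 < s) (h1 : s ≤ 2 * π) :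
    distTZ (-s) = min s (2 * π - s) := by
  rw [← aux_dist_per, aux_dist_of_mem (by linarith) (by linarith), min_comm]
  congr 1 <;> ring

theorem aux_region {f : ℝ → ℝ} (hf : Function.Periodic f (2 * π)) (α : ℝ) {ε : ℝ}
    (h0 : 0 < ε) (h1 : ε < π) :
    ∫ β in pvRegion α ε, f β = ∫ β in (α + ε)..(α + 2 * π - ε), f β := by
  have hp := Real.two_pi_pos
  have hmeas : MeasurableSet {β : ℝ | ε < distTZ (α - β)} := by
    apply measurableSet_lt measurable_const
    have : (fun β => distTZ (α - β)) = fun β =>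
      2 * π * min (Int.fract ((α - β) / (2 * π))) (1 - Int.fract ((α - β) / (2 * π))) := by
      funext β; exact aux_dist_eq _
    rw [this]
    have hm : Measurable fun β : ℝ => Int.fract ((α - β) / (2 * π)) :=
      measurable_fract.comp (by fun_prop)
    exact (hm.min (measurable_const.sub hm)).const_mul _
  have hper : Function.Periodic ({β : ℝ | ε < distTZ (α - β)}.indicator f) (2 * π) := by
    intro x
    have : distTZ (α - (x + 2 * π)) = distTZ (α - x) := by
      rw [← aux_dist_per]; congr 1; ring
    simp only [indicator, mem_ofPred_eq, this, hf x]
  have e1 : pvRegion α ε = Ioc (-π) π ∩ {β : ℝ | ε < distTZ (α - β)} := rfl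
  rw [e1, ← setIntegral_indicator hmeas, ← intervalIntegral.integral_of_le (by linarith)]
  have e2 := hper.intervalIntegral_add_eq (-π) α
  rw [show -π + 2 * π = π by ring] at e2
  rw [e2, intervalIntegral.integral_of_le (by linarith), setIntegral_indicator hmeas,
    intervalIntegral.integral_of_le (by linarith), integral_Ioc_eq_integral_Ioo]
  have e3 : Ioc α (α + 2 * π) ∩ {β : ℝ | ε < distTZ (α - β)} = Ioo (α + ε) (α + 2 * π - ε) := by
    ext β
    simp only [mem_inter_iff, mem_Ioc, mem_ofPred_eq, mem_Ioo]
    constructor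
    · rintro ⟨⟨ha, hb⟩, hc⟩
      rw [show α - β = -(β - α) by ring, aux_dist_neg (by linarith) (by linarith), lt_min_iff] at hc
      constructor <;> linarith [hc.1, hc.2]
    · rintro ⟨ha, hb⟩
      refine ⟨⟨by linarith, by linarith⟩, ?_⟩
      rw [show α - β = -(β - α) by ring, aux_dist_neg (by linarith) (by linarith), lt_min_iff]
      constructor <;> linarith
  rw [e3]

theorem aux_pv {f h : ℝ → ℝ} (hf : Function.Periodic f (2 * π)) (α : ℝ)
    (hh : DifferentiableAt ℝ h 0) (hc : ContinuousOn h (Icc (-π) π))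
    (hfh : ∀ t ∈ Icc (-π) π, t ≠ 0 → f (α + t) = h t / t)
    (hcf : ContinuousOn f (Ioo α (α + 2 * π))) :
    ∃ L : ℝ, Tendsto (fun ε : ℝ => ∫ β in pvRegion α ε, f β) (𝓝[>] 0) (𝓝 L) := by
  have hp := Real.pi_pos
  set k : ℝ → ℝ := fun t => h t - h (-t) with hk
  have hk0 : k 0 = 0 := by simp [hk]
  have hkd : DifferentiableAt ℝ k 0 := by
    apply hh.sub
    apply DifferentiableAt.comp (g := h) (f := fun t : ℝ => -t) 0
    · simpa using hh
    · fun_prop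
  have hkc : ContinuousOn k (Icc (-π) π) := by
    apply hc.sub
    apply hc.comp (by fun_prop)
    intro t ht
    exact ⟨by linarith [ht.2], by linarith [ht.1]⟩
  have hG : ContinuousOn (dslope k 0) (Icc (-π) π) :=
    (continuousOn_dslope (Icc_mem_nhds (by linarith) hp)).2 ⟨hkc, hkd⟩
  have hG' : ContinuousOn (dslope k 0) (uIcc 0 π) := by
    rw [uIcc_of_le hp.le]
    exact hG.mono (Icc_subset_Icc (by linarith) le_rfl)
  have hI : IntegrableOn (dslope k 0) (uIcc 0 π) := hG'.integrableOn_compact isCompact_uIcc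
  have hprim := intervalIntegral.continuousOn_primitive_interval_left hI
  refine ⟨∫ t in (0:ℝ)..π, dslope k 0 t, ?_⟩
  have ht : Tendsto (fun ε => ∫ t in ε..π, dslope k 0 t) (𝓝[>] 0)
      (𝓝 (∫ t in (0:ℝ)..π, dslope k 0 t)) := by
    have := hprim 0 left_mem_uIcc
    refine this.tendsto.mono_left ?_
    rw [uIcc_of_le hp.le, nhdsWithin_Icc_eq_nhdsGE hp]
    exact nhdsWithin_mono _ Ioi_subset_Ici_self
  refine ht.congr' ?_
  filter_upwards [Ioo_mem_nhdsGT hp] with ε hε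
  obtain ⟨h0, h1⟩ := hε
  rw [aux_region hf α h0 h1]
  have i1 : IntervalIntegrable f volume (α + ε) (α + π) := by
    apply ContinuousOn.intervalIntegrable
    rw [uIcc_of_le (by linarith)]
    exact hcf.mono fun x hx => ⟨by linarith [hx.1], by linarith [hx.2]⟩
  have i2 : IntervalIntegrable f volume (α + π) (α + 2 * π - ε) := by
    apply ContinuousOn.intervalIntegrable
    rw [uIcc_of_le (by linarith)]
    exact hcf.mono fun x hx => ⟨by linarith [hx.1], by linarith [hx.2]⟩
  rw [← intervalIntegral.integral_add_adjacent_intervals i1 i2]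
  have e1 : ∫ x in (α + ε)..(α + π), f x = ∫ t in ε..π, f (α + t) :=
    (intervalIntegral.integral_comp_add_left f α).symm
  have e2 : ∫ x in (α + π)..(α + 2 * π - ε), f x = ∫ t in ε..π, f (α + 2 * π - t) := by
    rw [intervalIntegral.integral_comp_sub_left f (α + 2 * π)]
    congr 1; ring
  have j1 : IntervalIntegrable (fun t => f (α + t)) volume ε π := by
    apply ContinuousOn.intervalIntegrable
    rw [uIcc_of_le h1.le]
    exact hcf.comp (by fun_prop) fun x hx => ⟨by linarith [hx.1], by linarith [hx.2]⟩
  have j2 : IntervalIntegrable (fun t => f (α + 2 * π - t)) volume ε π := by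
    apply ContinuousOn.intervalIntegrable
    rw [uIcc_of_le h1.le]
    exact hcf.comp (by fun_prop) fun x hx => ⟨by linarith [hx.2], by linarith [hx.1]⟩
  rw [e1, e2, ← intervalIntegral.integral_add j1 j2]
  apply intervalIntegral.integral_congr
  intro t ht
  rw [uIcc_of_le h1.le] at ht
  have htpos : 0 < t := by linarith [ht.1]
  have a1 := hfh t ⟨by linarith, ht.2⟩ htpos.ne'
  have a2 := hfh (-t) ⟨by linarith [ht.2], by linarith⟩ (by linarith)
  have a3 : f (α + 2 * π - t) = f (α + -t) := by
    rw [← hf (α + -t)]; congr 1; ring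
  simp only []
  rw [a3, a1, a2, dslope_of_ne _ htpos.ne', slope_def_field, hk0, hk, sub_zero, sub_zero, div_neg]
  ring

theorem aux_dist_abs {t : ℝ} (h : t ∈ Icc (-π) π) : distTZ t = |t| := by
  have hp := Real.pi_pos
  obtain ⟨h0, h1⟩ := h
  rcases le_or_gt 0 t with ht | ht
  · rw [aux_dist_of_mem ht (by linarith), abs_of_nonneg ht, min_eq_left (by linarith)]
  · have := aux_dist_neg (s := -t) (by linarith) (by linarith)
    rw [neg_neg] at this
    rw [this, abs_of_neg ht, min_eq_left (by linarith)]

/-- The principal-value identity converting the normal-component Birkhoff–Rott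
integral into a tangential one: both principal values exist and
`PV ∫ sinh(Δz₂)/(cosh Δz₂ - cos Δz₁) ∂_β z₂ dβ = - PV ∫ sin(Δz₁)/(cosh Δz₂ - cos Δz₁) ∂_β z₁ dβ`. -/
theorem pv_tangential_identity (z : ℝ → ℝ × ℝ)
    (hsm : ContDiff ℝ 2 z) (hper : PerCurve z) (hac : ArcChord z) (α : ℝ) :
    ∃ L : ℝ,
      Tendsto (fun ε : ℝ => ∫ β in pvRegion α ε,
          Real.sinh ((z α).2 - (z β).2)
            / (Real.cosh ((z α).2 - (z β).2) - Real.cos ((z α).1 - (z β).1))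
            * deriv (fun a => (z a).2) β)
        (𝓝[>] (0 : ℝ)) (𝓝 L) ∧
      Tendsto (fun ε : ℝ => ∫ β in pvRegion α ε,
          Real.sin ((z α).1 - (z β).1)
            / (Real.cosh ((z α).2 - (z β).2) - Real.cos ((z α).1 - (z β).1))
            * deriv (fun a => (z a).1) β)
        (𝓝[>] (0 : ℝ)) (𝓝 (-L)) := by
  obtain ⟨C, hC, hac⟩ := hac
  have hp := Real.pi_pos
  have hx : ContDiff ℝ 2 (fun a => (z a).1) := hsm.fst
  have hy : ContDiff ℝ 2 (fun a => (z a).2) := hsm.snd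
  have hxp : ∀ a, (z (a + 2 * π)).1 = (z a).1 + 2 * π := fun a => by rw [hper a]; rfl
  have hyp : ∀ a, (z (a + 2 * π)).2 = (z a).2 := fun a => by rw [hper a]; simp
  have hQd : ∀ β, Qden z α (α - β) =
      Real.cosh ((z α).2 - (z β).2) - Real.cos ((z α).1 - (z β).1) := fun β => by
    simp only [Qden, sub_sub_cancel]
  generalize hxdef : (fun a => (z a).1) = x at *
  generalize hydef : (fun a => (z a).2) = y at *
  have ex : ∀ a, (z a).1 = x a := fun a => by rw [← hxdef]
  have ey : ∀ a, (z a).2 = y a := fun a => by rw [← hydef]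
  simp only [ex, ey] at *
  clear hxdef hydef ex ey hsm
  have hxd : Differentiable ℝ x := hx.differentiable (by norm_num)
  have hyd : Differentiable ℝ y := hy.differentiable (by norm_num)
  have hx1 : ContDiff ℝ 1 (deriv x) := by
    have h2 : ContDiff ℝ (1 + 1) x := by
      rw [show (1 + 1 : WithTop ℕ∞) = 2 by norm_num]; exact hx
    exact (contDiff_succ_iff_deriv.1 h2).2.2
  have hy1 : ContDiff ℝ 1 (deriv y) := by
    have h2 : ContDiff ℝ (1 + 1) y := by
      rw [show (1 + 1 : WithTop ℕ∞) = 2 by norm_num]; exact hy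
    exact (contDiff_succ_iff_deriv.1 h2).2.2
  have hxdp : ∀ a, deriv x (a + 2 * π) = deriv x a := fun a => by
    rw [← deriv_comp_add_const]
    simp only [hxp, deriv_add_const]
  have hydp : ∀ a, deriv y (a + 2 * π) = deriv y a := fun a => by
    rw [← deriv_comp_add_const]
    simp only [hyp]
  set Q : ℝ → ℝ := fun β => Real.cosh (y α - y β) - Real.cos (x α - x β) with hQ
  have hQpos : ∀ β ∈ Ioo α (α + 2 * π), 0 < Q β := by
    intro β hβ
    have h1 := hac α (α - β)
    rw [hQd, show α - β = -(β - α) by ring,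
      aux_dist_neg (by linarith [hβ.1]) (by linarith [hβ.2])] at h1
    have h2 : 0 < min (β - α) (2 * π - (β - α)) :=
      lt_min (by linarith [hβ.1]) (by linarith [hβ.2])
    have h3 : 0 < C * (2 * Q β) := lt_of_lt_of_le (by positivity) h1
    have := pos_of_mul_pos_right h3 hC.le
    linarith
  have hQper : ∀ β, Q (β + 2 * π) = Q β := by
    intro β
    simp only [hQ, hyp, hxp]
    rw [← sub_sub, Real.cos_sub_two_pi]
  have hQc : Continuous Q := by
    have := hxd.continuous
    have := hyd.continuous
    fun_prop
  -- the two integrands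
  set f₂ : ℝ → ℝ := fun β => Real.sinh (y α - y β) / Q β * deriv y β with hf₂
  set f₁ : ℝ → ℝ := fun β => Real.sin (x α - x β) / Q β * deriv x β with hf₁
  have hf₂per : Function.Periodic f₂ (2 * π) := by
    intro β
    simp only [hf₂, hQper, hyp, hydp]
  have hf₁per : Function.Periodic f₁ (2 * π) := by
    intro β
    simp only [hf₁, hQper, hxp, hxdp]
    rw [← sub_sub, Real.sin_sub_two_pi]
  have hf₂c : ContinuousOn f₂ (Ioo α (α + 2 * π)) := by
    apply ContinuousOn.mul _ hy1.continuous.continuousOn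
    apply ContinuousOn.div _ hQc.continuousOn (fun β hβ => (hQpos β hβ).ne')
    have := hyd.continuous
    fun_prop
  have hf₁c : ContinuousOn f₁ (Ioo α (α + 2 * π)) := by
    apply ContinuousOn.mul _ hx1.continuous.continuousOn
    apply ContinuousOn.div _ hQc.continuousOn (fun β hβ => (hQpos β hβ).ne')
    have := hxd.continuous
    fun_prop
  -- desingularization
  set u : ℝ → ℝ := fun t => Real.sinh (y α - y (α + t)) with hu
  set p : ℝ → ℝ := fun t => Real.sinh ((y α - y (α + t)) / 2) with hpdef
  set q : ℝ → ℝ := fun t => Real.sin ((x α - x (α + t)) / 2) with hqdef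
  have hus : ContDiff ℝ 2 u := by fun_prop
  have hps : ContDiff ℝ 2 p := by fun_prop
  have hqs : ContDiff ℝ 2 q := by fun_prop
  set D : ℝ → ℝ := fun t => 2 * dslope p 0 t ^ 2 + 2 * dslope q 0 t ^ 2 with hD
  have hDc : Continuous D := by
    have := aux_dslope_cont hps
    have := aux_dslope_cont hqs
    fun_prop
  have hDd : DifferentiableAt ℝ D 0 := by
    have := aux_dslope_diff hps
    have := aux_dslope_diff hqs
    fun_prop
  have hpe : ∀ t, t * dslope p 0 t = p t := fun t => by
    have := sub_smul_dslope p 0 t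
    simpa [hpdef] using this
  have hqe : ∀ t, t * dslope q 0 t = q t := fun t => by
    have := sub_smul_dslope q 0 t
    simpa [hqdef] using this
  have hue : ∀ t, t * dslope u 0 t = u t := fun t => by
    have := sub_smul_dslope u 0 t
    simpa [hu] using this
  have hQD : ∀ t, Q (α + t) = t ^ 2 * D t := by
    intro t
    have e1 : Q (α + t) = 2 * p t ^ 2 + 2 * q t ^ 2 := by
      simp only [hQ, hpdef, hqdef]
      have c1 := Real.cosh_two_mul ((y α - y (α + t)) / 2)
      have c2 := Real.cos_two_mul ((x α - x (α + t)) / 2)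
      have c3 := Real.sin_sq_add_cos_sq ((x α - x (α + t)) / 2)
      have c4 := Real.cosh_sq ((y α - y (α + t)) / 2)
      rw [mul_div_cancel₀ _ (two_ne_zero' ℝ)] at c1 c2
      linarith
    rw [e1, ← hpe, ← hqe]
    simp only [hD]
    ring
  have hDlow' : ∀ t ∈ Icc (-π) π, t ≠ 0 → 1 / (2 * C) ≤ D t := by
    intro t ht ht0
    have h1 := hac α (α - (α + t))
    rw [hQd, show α - (α + t) = -t by ring,
      aux_dist_abs ⟨by linarith [ht.2], by linarith [ht.1]⟩, sq_abs] at h1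
    have h2 : t ^ 2 * 1 ≤ t ^ 2 * (D t * (2 * C)) := by
      have : Real.cosh (y α - y (α + t)) - Real.cos (x α - x (α + t)) = t ^ 2 * D t := hQD t
      rw [this] at h1
      linarith
    have h3 : (0:ℝ) < t ^ 2 := by positivity
    rw [div_le_iff₀ (by positivity)]
    exact le_of_mul_le_mul_left h2 h3
  have hDlow : ∀ t ∈ Icc (-π) π, 0 < D t := by
    intro t ht
    have hpos : 0 < 1 / (2 * C) := by positivity
    by_cases ht0 : t = 0
    · subst ht0
      refine hpos.trans_le ?_
      have : Tendsto D (𝓝[≠] 0) (𝓝 (D 0)) := (hDc.tendsto 0).mono_left nhdsWithin_le_nhds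
      refine ge_of_tendsto this ?_
      filter_upwards [self_mem_nhdsWithin,
        nhdsWithin_le_nhds (Icc_mem_nhds (show -π < 0 by linarith) hp)] with s hs hs'
      exact hDlow' s hs' hs
    · exact hpos.trans_le (hDlow' t ht ht0)
  have h0mem : (0:ℝ) ∈ Icc (-π) π := ⟨by linarith, hp.le⟩
  obtain ⟨L, hL⟩ : ∃ L : ℝ, Tendsto (fun ε : ℝ => ∫ β in pvRegion α ε, f₂ β) (𝓝[>] 0) (𝓝 L) := by
    apply aux_pv (h := fun t => dslope u 0 t * deriv y (α + t) / D t) hf₂per α _ _ _ hf₂c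
    · have h1 := aux_dslope_diff hus
      have h2 : DifferentiableAt ℝ (fun t => deriv y (α + t)) 0 := by
        have : ContDiff ℝ 1 (fun t => deriv y (α + t)) := by fun_prop
        exact this.differentiable (by norm_num) 0
      exact (h1.mul h2).div hDd (hDlow 0 h0mem).ne'
    · apply ContinuousOn.div _ hDc.continuousOn (fun t ht => (hDlow t ht).ne')
      have h1 := aux_dslope_cont hus
      have h2 := hy1.continuous
      fun_prop
    · intro t ht ht0
      have hDt := (hDlow t ht).ne'
      have : Real.sinh (y α - y (α + t)) = t * dslope u 0 t := (hue t).symm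
      simp only [hf₂]
      rw [hQD, this]
      field_simp
  have hS : Tendsto (fun ε : ℝ => ∫ β in (α + ε)..(α + 2 * π - ε), (f₁ β + f₂ β)) (𝓝[>] 0)
      (𝓝 0) := by
    have hlog : Tendsto (fun ε => Real.log (D ε) - Real.log (D (-ε))) (𝓝[>] 0) (𝓝 0) := by
      have h1 : ContinuousAt (fun ε => Real.log (D ε) - Real.log (D (-ε))) 0 := by
        have hD0 := (hDlow 0 h0mem).ne'
        apply ContinuousAt.sub
        · exact hDc.continuousAt.log hD0
        · apply ContinuousAt.log
          · fun_prop
          · simpa using hD0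
      have h2 := h1.tendsto
      simp only [neg_zero, sub_self] at h2
      exact h2.mono_left nhdsWithin_le_nhds
    refine hlog.congr' ?_
    filter_upwards [Ioo_mem_nhdsGT hp] with ε hε
    obtain ⟨h0, h1⟩ := hε
    have hsub : uIcc (α + ε) (α + 2 * π - ε) ⊆ Ioo α (α + 2 * π) := by
      rw [uIcc_of_le (by linarith)]
      exact fun b hb => ⟨by linarith [hb.1], by linarith [hb.2]⟩
    have hder : ∀ β ∈ uIcc (α + ε) (α + 2 * π - ε),
        HasDerivAt (fun b => -Real.log (Q b)) (f₁ β + f₂ β) β := by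
      intro β hβ
      have hq0 := (hQpos β (hsub hβ)).ne'
      have hQ' : HasDerivAt Q (Real.sinh (y α - y β) * (-deriv y β)
          - (-Real.sin (x α - x β) * (-deriv x β))) β := by
        exact (((hyd β).hasDerivAt.const_sub (y α)).cosh).sub
          (((hxd β).hasDerivAt.const_sub (x α)).cos)
      have := (hQ'.log hq0).neg
      have e : f₁ β + f₂ β = -((Real.sinh (y α - y β) * (-deriv y β)
          - (-Real.sin (x α - x β) * (-deriv x β))) / Q β) := by
        simp only [hf₁, hf₂]
        field_simp
        ring
      rw [e]
      exact this
    rw [intervalIntegral.integral_eq_sub_of_hasDerivAt hder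
      ((hf₁c.add hf₂c).mono hsub).intervalIntegrable]
    have e1 : Q (α + 2 * π - ε) = ε ^ 2 * D (-ε) := by
      rw [show α + 2 * π - ε = (α + -ε) + 2 * π by ring, hQper, hQD]; ring
    have d1 := (hDlow ε ⟨by linarith, h1.le⟩).ne'
    have d2 := (hDlow (-ε) ⟨by linarith, by linarith⟩).ne'
    have d3 : ε ^ 2 ≠ 0 := by positivity
    rw [e1, hQD, Real.log_mul d3 d1, Real.log_mul d3 d2]
    ring
  refine ⟨L, hL, ?_⟩
  have hfin := hS.sub hL
  rw [zero_sub] at hfin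
  refine hfin.congr' ?_
  filter_upwards [Ioo_mem_nhdsGT hp] with ε hε
  obtain ⟨h0, h1⟩ := hε
  have hsub : uIcc (α + ε) (α + 2 * π - ε) ⊆ Ioo α (α + 2 * π) := by
    rw [uIcc_of_le (by linarith)]
    exact fun b hb => ⟨by linarith [hb.1], by linarith [hb.2]⟩
  rw [aux_region hf₂per α h0 h1, intervalIntegral.integral_add
    (hf₁c.mono hsub).intervalIntegrable (hf₂c.mono hsub).intervalIntegrable, add_sub_cancel_right]
  exact (aux_region hf₁per α h0 h1).symm
end
end
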